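/- arXiv:1210.7708 — 2 statements merged into one kernel-verified Lean document; each statement's English description precedes it below -/
import Mathlib

section
/- Let n ≥ 3, k ∈ {1,2}, and σ > σ_n = 2^{n-1}·n!. Then for every x ∈ [-1,1], m_k(x,σ) ≤ m_k(1,σ); that is, Karlin's conjecture sup_{x∈[-1,1]} m_k(x,σ) = m_k(1,σ) holds for the first and second derivatives in the spline range σ > σ_n. -/
open Polynomial Set

/-- `k`-th derivative of the Chebyshev polynomial `T_m`, evaluated at `x`. -/
noncomputable def chebDeriv (m : ℤ) (k : ℕ) (x : ℝ) : ℝ :=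
  (derivative^[k] (Polynomial.Chebyshev.T ℝ m)).eval x

/-- `σ_n = 2^(n-1) n! = T_n^{(n)}(1)`. -/
noncomputable def sigmaN (n : ℕ) : ℝ := 2 ^ (n - 1) * (n.factorial : ℝ)

/-- `f` is `n` times differentiable on the set `s`. -/
def NTimesDiffOn (n : ℕ) (f : ℝ → ℝ) (s : Set ℝ) : Prop :=
  ∀ i < n, DifferentiableOn ℝ (iteratedDerivWithin i f s) s

/-- The class `W^n_∞(σ)` on `[-1,1]`. -/
def memW (n : ℕ) (σ : ℝ) (f : ℝ → ℝ) : Prop :=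
  NTimesDiffOn n f (Icc (-1:ℝ) 1) ∧
  (∀ x ∈ Icc (-1:ℝ) 1, |f x| ≤ 1) ∧
  (∀ x ∈ Icc (-1:ℝ) 1, |iteratedDerivWithin n f (Icc (-1:ℝ) 1) x| ≤ σ)

/-- `m_k(x,σ) = sup { |f^{(k)}(x)| : f ∈ W^n_∞(σ) }`. -/
noncomputable def mval (n k : ℕ) (x σ : ℝ) : ℝ :=
  sSup {y | ∃ f : ℝ → ℝ, memW n σ f ∧
    y = |iteratedDerivWithin k f (Icc (-1:ℝ) 1) x|}

/-- `m_k^*(x,σ) = sup { |f^{(k)}(x)| : f ∈ W^n_∞(σ), f^{(k+1)}(x) = 0 }`. -/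
noncomputable def mstar (n k : ℕ) (x σ : ℝ) : ℝ :=
  sSup {y | ∃ f : ℝ → ℝ, memW n σ f ∧
    iteratedDerivWithin (k+1) f (Icc (-1:ℝ) 1) x = 0 ∧
    y = |iteratedDerivWithin k f (Icc (-1:ℝ) 1) x|}

/-- `μ_k(x₀)`: best constant in the pointwise Markov inequality. -/
noncomputable def muk (n k : ℕ) (x : ℝ) : ℝ :=
  sSup {y | ∃ p : Polynomial ℝ, p.natDegree ≤ n ∧
    (∀ t ∈ Icc (-1:ℝ) 1, |p.eval t| ≤ 1) ∧
    y = |(derivative^[k] p).eval x|}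

/-- `μ_k^*(x₀)`: best constant in the pointwise Schur-type inequality. -/
noncomputable def mukStar (n k : ℕ) (x : ℝ) : ℝ :=
  sSup {y | ∃ p : Polynomial ℝ, p.natDegree ≤ n ∧
    (∀ t ∈ Icc (-1:ℝ) 1, |p.eval t| ≤ 1) ∧
    (derivative^[k+1] p).eval x = 0 ∧
    y = |(derivative^[k] p).eval x|}


/-- A tower of functions, each the derivative of the previous one on `[p,q]`. -/
def Tow (n : ℕ) (p q : ℝ) (F : ℕ → ℝ → ℝ) : Prop :=
  ∀ i < n, ∀ x ∈ Icc p q, HasDerivWithinAt (F i) (F (i + 1) x) (Icc p q) x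

lemma Tow.mono {n m : ℕ} {p q : ℝ} {F : ℕ → ℝ → ℝ} (h : Tow n p q F) (hm : m ≤ n) :
    Tow m p q F := fun i hi => h i (by omega)

lemma Tow.shift {n m : ℕ} {p q : ℝ} {F : ℕ → ℝ → ℝ} (h : Tow (n + m) p q F) :
    Tow n p q (fun i => F (i + m)) := by
  intro i hi x hx
  have := h (i + m) (by omega) x hx
  rwa [show i + m + 1 = i + 1 + m by ring] at this

lemma Tow.affine {n : ℕ} {p q p' q' : ℝ} {F : ℕ → ℝ → ℝ} (h : Tow n p q F) (c d : ℝ)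
    (hm : ∀ x ∈ Icc p' q', c * x + d ∈ Icc p q) :
    Tow n p' q' (fun i x => c ^ i * F i (c * x + d)) := by
  intro i hi x hx
  have h1 := h i hi _ (hm x hx)
  have h2 : HasDerivWithinAt (fun x : ℝ => c * x + d) c (Icc p' q') x := by
    simpa using (((hasDerivAt_id x).const_mul c).add_const d).hasDerivWithinAt
  have h3 := (h1.comp x h2 hm).const_mul (c ^ i)
  refine h3.congr_deriv ?_
  ring

lemma Tow.lin {n : ℕ} {p q : ℝ} {F G : ℕ → ℝ → ℝ} (hF : Tow n p q F) (hG : Tow n p q G)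
    (a b : ℝ) : Tow n p q (fun i x => a * F i x + b * G i x) := by
  intro i hi x hx
  exact ((hF i hi x hx).const_mul a).add ((hG i hi x hx).const_mul b)

lemma tow_poly (P : ℝ[X]) (n : ℕ) (p q : ℝ) :
    Tow n p q (fun i x => (derivative^[i] P).eval x) := by
  intro i hi x hx
  have := (derivative^[i] P).hasDerivAt x
  rw [← Function.iterate_succ_apply' (f := derivative)] at this
  exact this.hasDerivWithinAt

lemma tow_of_memW {n : ℕ} {σ : ℝ} {f : ℝ → ℝ} (h : memW n σ f) :
    Tow n (-1) 1 (fun i => iteratedDerivWithin i f (Icc (-1:ℝ) 1)) := by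
  intro i hi x hx
  have := (h.1 i hi x hx).hasDerivWithinAt
  simpa [iteratedDerivWithin_succ] using this

lemma Tow.iter_eq {n : ℕ} {F : ℕ → ℝ → ℝ} (h : Tow n (-1) 1 F) :
    ∀ i ≤ n, ∀ x ∈ Icc (-1:ℝ) 1, iteratedDerivWithin i (F 0) (Icc (-1:ℝ) 1) x = F i x := by
  intro i
  induction i with
  | zero => intro _ x hx; simp
  | succ i ih =>
    intro hi x hx
    rw [iteratedDerivWithin_succ, derivWithin_congr (ih (by omega)) (ih (by omega) x hx)]
    exact (h i (by omega) x hx).derivWithin (uniqueDiffOn_Icc (by norm_num) x hx)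

lemma Tow.memW {n : ℕ} {σ : ℝ} {F : ℕ → ℝ → ℝ} (h : Tow n (-1) 1 F)
    (h0 : ∀ x ∈ Icc (-1:ℝ) 1, |F 0 x| ≤ 1) (hn : ∀ x ∈ Icc (-1:ℝ) 1, |F n x| ≤ σ) :
    memW n σ (F 0) := by
  refine ⟨?_, h0, ?_⟩
  · intro i hi x hx
    exact ((h i hi x hx).differentiableWithinAt).congr (h.iter_eq i hi.le)
      (h.iter_eq i hi.le x hx)
  · intro x hx
    rw [h.iter_eq n le_rfl x hx]
    exact hn x hx

lemma Tow.cont {n : ℕ} {p q : ℝ} {F : ℕ → ℝ → ℝ} (h : Tow n p q F) {i : ℕ} (hi : i < n) :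
    ContinuousOn (F i) (Icc p q) := fun x hx => (h i hi x hx).continuousWithinAt

lemma Tow.mvt {n : ℕ} {p q : ℝ} {F : ℕ → ℝ → ℝ} (h : Tow n p q F) {i : ℕ} (hi : i < n)
    {x y : ℝ} (hx : p ≤ x) (hxy : x < y) (hy : y ≤ q) :
    ∃ z ∈ Ioo x y, F (i + 1) z * (y - x) = F i y - F i x := by
  have h1 := exists_hasDerivAt_eq_slope (F i) (F (i + 1)) hxy
    ((h.cont hi).mono (Icc_subset_Icc hx hy)) (fun z hz =>
      (h i hi z ⟨by linarith [hz.1], by linarith [hz.2]⟩).hasDerivAt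
        (Icc_mem_nhds (by linarith [hz.1]) (by linarith [hz.2])))
  obtain ⟨z, hz, hz2⟩ := h1
  refine ⟨z, hz, ?_⟩
  rw [hz2]
  have hxy2 := sub_ne_zero.2 hxy.ne'
  field_simp [hxy2]

/-- `g` alternates in sign at `N` points of `[p,q]`, positive at the rightmost. -/
def Alt (p q : ℝ) (g : ℝ → ℝ) (N : ℕ) : Prop :=
  ∃ y : ℕ → ℝ, (∀ j < N, y j ∈ Icc p q) ∧ (∀ j, j + 1 < N → y (j + 1) < y j) ∧
    ∀ j < N, 0 < (-1) ^ j * g (y j)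

lemma Alt.step {n : ℕ} {p q : ℝ} {F : ℕ → ℝ → ℝ} (h : Tow n p q F) {i : ℕ} (hi : i < n)
    {N : ℕ} (hA : Alt p q (F i) (N + 1)) : Alt p q (F (i + 1)) N := by
  obtain ⟨y, hy1, hy2, hy3⟩ := hA
  have key : ∀ j, ∃ z, j < N → (z ∈ Ioo (y (j + 1)) (y j) ∧ 
      F (i + 1) z * (y j - y (j + 1)) = F i (y j) - F i (y (j + 1))) := by
    intro j
    by_cases hj : j < N
    · obtain ⟨z, hz⟩ := h.mvt hi (hy1 (j + 1) (by omega)).1 (hy2 j (by omega))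
        (hy1 j (by omega)).2
      exact ⟨z, fun _ => hz⟩
    · exact ⟨0, fun h => absurd h hj⟩
  choose z hz using key
  refine ⟨z, ?_, ?_, ?_⟩
  · intro j hj
    have := (hz j hj).1
    exact ⟨(hy1 (j + 1) (by omega)).1.trans this.1.le, this.2.le.trans (hy1 j (by omega)).2⟩
  · intro j hj
    exact (hz (j + 1) (by omega)).1.2.trans (hz j (by omega)).1.1
  · intro j hj
    have h1 := hy3 j (by omega)
    have h2 := hy3 (j + 1) (by omega)
    have h3 := hy2 j (by omega)
    have h4 := (hz j hj).2
    rw [pow_succ] at h2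
    have h5 : 0 < ((-1) ^ j * F (i + 1) (z j)) * (y j - y (j + 1)) := by
      rw [mul_assoc, h4]; nlinarith
    exact pos_of_mul_pos_left h5 (by linarith)

lemma Alt.iter {n : ℕ} {p q : ℝ} {F : ℕ → ℝ → ℝ} (h : Tow n p q F) {i : ℕ} {N : ℕ} (m : ℕ)
    (hi : i + m ≤ n) (hA : Alt p q (F i) (N + m)) : Alt p q (F (i + m)) N := by
  induction m generalizing i with
  | zero => simpa using hA
  | succ m ih =>
    have := ih (i := i + 1) (by omega) (Alt.step h (by omega) (by simpa [add_assoc] using hA))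
    rwa [show i + 1 + m = i + (m + 1) by ring] at this

lemma Alt.prepend {p q : ℝ} {g : ℝ → ℝ} {N : ℕ} (hA : Alt p q g N) (hpq : p ≤ q)
    (hg : g q < 0) : Alt p q (fun x => -g x) (N + 1) := by
  obtain ⟨y, hy1, hy2, hy3⟩ := hA
  refine ⟨fun j => if j = 0 then q else y (j - 1), ?_, ?_, ?_⟩
  · intro j hj
    rcases j with _ | j
    · simp [hpq]
    · simpa using hy1 j (by omega)
  · intro j hj
    rcases j with _ | j
    · have h0 := hy3 0 (by omega)
      have h1 := hy1 0 (by omega)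
      simp at h0 ⊢
      refine lt_of_le_of_ne h1.2 ?_
      intro h; rw [h] at h0; linarith
    · simpa using hy2 j (by omega)
  · intro j hj
    rcases j with _ | j
    · simpa using hg
    · have := hy3 j (by omega)
      simpa [pow_succ] using this

lemma Alt.prependZero {n : ℕ} {p q : ℝ} {F : ℕ → ℝ → ℝ} (h : Tow n p q F) {i : ℕ} (hi : i < n)
    {N : ℕ} (hA : Alt p q (F i) (N + 1)) (hpq : p ≤ q) (h0 : F i q = 0) :
    Alt p q (fun x => - F (i + 1) x) (N + 1) := by
  obtain ⟨y, hy1, hy2, hy3⟩ := hA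
  have key : ∀ j, ∃ z, j < N → (z ∈ Ioo (y (j + 1)) (y j) ∧ 
      F (i + 1) z * (y j - y (j + 1)) = F i (y j) - F i (y (j + 1))) := by
    intro j
    by_cases hj : j < N
    · obtain ⟨z, hz⟩ := h.mvt hi (hy1 (j + 1) (by omega)).1 (hy2 j (by omega))
        (hy1 j (by omega)).2
      exact ⟨z, fun _ => hz⟩
    · exact ⟨0, fun h => absurd h hj⟩
  choose z hz using key
  have hy00 := hy3 0 (by omega)
  have hyq : y 0 < q := by
    refine lt_of_le_of_ne (hy1 0 (by omega)).2 ?_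
    intro h; rw [h] at hy00; simp [h0] at hy00
  obtain ⟨w, hw, hw2⟩ := h.mvt hi (hy1 0 (by omega)).1 hyq le_rfl
  refine ⟨fun j => if j = 0 then w else z (j - 1), ?_, ?_, ?_⟩
  · intro j hj
    rcases j with _ | j
    · simpa using ⟨(hy1 0 (by omega)).1.trans hw.1.le, hw.2.le⟩
    · have := (hz j (by omega)).1
      simp only [Nat.add_eq_zero_iff, one_ne_zero, and_false, if_false, Nat.add_sub_cancel]
      exact ⟨(hy1 (j + 1) (by omega)).1.trans this.1.le, this.2.le.trans (hy1 j (by omega)).2⟩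
  · intro j hj
    rcases j with _ | j
    · simpa using (hz 0 (by omega)).1.2.trans hw.1
    · simpa using (hz (j + 1) (by omega)).1.2.trans (hz j (by omega)).1.1
  · intro j hj
    rcases j with _ | j
    · simp at hy00 ⊢
      nlinarith [hw.1, hw.2]
    · have h1 := hy3 j (by omega)
      have h2 := hy3 (j + 1) (by omega)
      have h3 := hy2 j (by omega)
      have h4 := (hz j (by omega)).2
      rw [pow_succ] at h2
      have h5 : 0 < ((-1) ^ j * F (i + 1) (z j)) * (y j - y (j + 1)) := by
        rw [mul_assoc, h4]; nlinarith
      have := pos_of_mul_pos_left h5 (by linarith)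
      simpa [pow_succ] using this


lemma Tow.neg {n : ℕ} {p q : ℝ} {F : ℕ → ℝ → ℝ} (hF : Tow n p q F) :
    Tow n p q (fun i x => - F i x) := by
  intro i hi x hx
  exact (hF i hi x hx).neg

lemma chebDeriv_top (n : ℕ) (hn : 1 ≤ n) (x : ℝ) : chebDeriv n n x = sigmaN n := by
  unfold chebDeriv sigmaN
  have hd : (Polynomial.Chebyshev.T ℝ (n:ℤ)).natDegree = n := by
    simp [Polynomial.Chebyshev.natDegree_T]
  have h1 : (derivative^[n] (Polynomial.Chebyshev.T ℝ (n:ℤ))).natDegree ≤ 0 := by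
    have := natDegree_iterate_derivative (Polynomial.Chebyshev.T ℝ (n:ℤ)) n
    omega
  rw [eq_C_of_natDegree_le_zero h1, eval_C, coeff_iterate_derivative]
  have h2 : (Polynomial.Chebyshev.T ℝ (n:ℤ)).coeff n = 2 ^ (n - 1) := by
    have := Polynomial.Chebyshev.leadingCoeff_T ℝ (n:ℤ)
    rw [leadingCoeff, hd] at this
    simpa using this
  rw [zero_add, h2, Nat.descFactorial_self]
  simp [mul_comm]

lemma sigmaN_pos (n : ℕ) : 0 < sigmaN n := by unfold sigmaN; positivity

lemma abs_le_of_scaled {u v : ℝ} (h : ∀ c ∈ Ioo (0:ℝ) 1, c * u ≤ v) : u ≤ v := by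
  by_contra hlt
  push Not at hlt
  have h1 := h (1/2) (by norm_num)
  have hu : 0 < u := by linarith
  by_cases hv : v ≤ 0
  · nlinarith
  · push Not at hv
    have h2 := h ((u + v) / (2 * u)) ⟨by positivity, by rw [div_lt_one (by positivity)]; linarith⟩
    have : (u + v) / (2 * u) * u = (u + v) / 2 := by field_simp
    linarith

lemma neg_one_pow_mul_le {j : ℕ} {u : ℝ} (h : |u| ≤ 1) : (-1) ^ j * u ≤ 1 := by
  have := abs_le.1 h
  rcases neg_one_pow_eq_or ℝ j with h | h <;> rw [h] <;> linarith

lemma markov_aux {n : ℕ} (hn : 1 ≤ n) {F : ℕ → ℝ → ℝ} (hF : Tow n (-1) 1 F)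
    (h0 : ∀ x ∈ Icc (-1:ℝ) 1, |F 0 x| ≤ 1) (hs : ∀ x ∈ Icc (-1:ℝ) 1, |F n x| ≤ sigmaN n)
    {j : ℕ} (hj : j ≤ n) : F j 1 ≤ chebDeriv n j 1 := by
  apply abs_le_of_scaled
  rintro c ⟨hc0, hc1⟩
  by_contra hlt
  push Not at hlt
  have hH : Tow n (-1) 1 (fun i x => 1 * chebDeriv n i x + (-c) * F i x) :=
    (tow_poly (Polynomial.Chebyshev.T ℝ (n:ℤ)) n (-1) 1).lin hF 1 (-c)
  set H : ℕ → ℝ → ℝ := fun i x => 1 * chebDeriv n i x + (-c) * F i x with hHdef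
  have hA : Alt (-1) 1 (H 0) (n + 1) := by
    refine ⟨Polynomial.Chebyshev.node n, fun j _ => Polynomial.Chebyshev.node_mem_Icc,
      fun j hj => Polynomial.Chebyshev.node_lt (by omega) (by omega), fun j hj => ?_⟩
    have h1 := neg_one_pow_mul_le (j := j) (h0 (Polynomial.Chebyshev.node n j) Polynomial.Chebyshev.node_mem_Icc)
    have h2 : chebDeriv n 0 (Polynomial.Chebyshev.node n j) = (-1) ^ j := by
      have := Polynomial.Chebyshev.eval_T_real_node (n := n) (i := j) (by simp; omega)
      simpa [chebDeriv] using this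
    simp only [hHdef]
    rw [h2]
    have h3 : ((-1:ℝ) ^ j) * (-1) ^ j = 1 := by rw [← mul_pow]; simp
    have h4 : (-1) ^ j * (1 * (-1) ^ j + -c * F 0 (Polynomial.Chebyshev.node n j))
      = 1 - c * ((-1) ^ j * F 0 (Polynomial.Chebyshev.node n j)) := by linear_combination h3
    rw [h4]
    nlinarith
  have hA1 := Alt.iter hH (i := 0) (N := n + 1 - j) j (by omega)
    (by rwa [show n + 1 - j + j = n + 1 by omega])
  rw [zero_add] at hA1
  have hA2 := hA1.prepend (by norm_num) (by simp only [hHdef]; linarith)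
  have hA3 := Alt.iter hH.neg (i := j) (N := 2) (n - j) (by omega)
    (by rwa [show 2 + (n - j) = n + 1 - j + 1 by omega])
  rw [show j + (n - j) = n by omega] at hA3
  obtain ⟨y, hy1, hy2, hy3⟩ := hA3
  have h5 := hy3 0 (by omega)
  have h6 := abs_le.1 (hs _ (hy1 0 (by omega)))
  simp only [hHdef] at h5
  rw [chebDeriv_top n hn] at h5
  nlinarith [sigmaN_pos n]

lemma markov_end {n : ℕ} (hn : 1 ≤ n) {F : ℕ → ℝ → ℝ} (hF : Tow n (-1) 1 F)
    (h0 : ∀ x ∈ Icc (-1:ℝ) 1, |F 0 x| ≤ 1) (hs : ∀ x ∈ Icc (-1:ℝ) 1, |F n x| ≤ sigmaN n)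
    {j : ℕ} (hj : j ≤ n) : |F j 1| ≤ chebDeriv n j 1 := by
  have h1 := markov_aux hn hF h0 hs hj
  have h2 := markov_aux hn hF.neg (by simpa using h0) (by simpa using hs) hj
  exact abs_le.2 ⟨by linarith, h1⟩

lemma star_aux {n k : ℕ} (hk : k + 2 ≤ n) {F G : ℕ → ℝ → ℝ} (hF : Tow n (-1) 1 F)
    (hG : Tow n (-1) 1 G) {s : ℝ} (hs : 0 < s) (hGn : ∀ x ∈ Icc (-1:ℝ) 1, G n x ≤ -s)
    {τ : ℕ → ℝ} (hτ1 : ∀ j < n, τ j ∈ Icc (-1:ℝ) 1) (hτ2 : ∀ j, j + 1 < n → τ (j + 1) < τ j)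
    (hτ3 : ∀ j < n, 1 ≤ (-1) ^ j * G 0 (τ j)) (hG1 : G (k + 1) 1 = 0)
    (h0 : ∀ x ∈ Icc (-1:ℝ) 1, |F 0 x| ≤ 1) (hFs : ∀ x ∈ Icc (-1:ℝ) 1, |F n x| ≤ s)
    (hF1 : F (k + 1) 1 = 0) : F k 1 ≤ G k 1 := by
  apply abs_le_of_scaled
  rintro c ⟨hc0, hc1⟩
  by_contra hlt
  push Not at hlt
  have hH : Tow n (-1) 1 (fun i x => 1 * G i x + (-c) * F i x) := hG.lin hF 1 (-c)
  set H : ℕ → ℝ → ℝ := fun i x => 1 * G i x + (-c) * F i x with hHdef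
  have hA : Alt (-1) 1 (H 0) n := by
    refine ⟨τ, hτ1, hτ2, fun j hj => ?_⟩
    have h1 := neg_one_pow_mul_le (j := j) (h0 (τ j) (hτ1 j hj))
    have h2 := hτ3 j hj
    simp only [hHdef]
    have h4 : (-1) ^ j * (1 * G 0 (τ j) + -c * F 0 (τ j))
      = (-1) ^ j * G 0 (τ j) - c * ((-1) ^ j * F 0 (τ j)) := by ring
    rw [h4]
    nlinarith
  have hA1 := Alt.iter hH (i := 0) (N := n - k) k (by omega)
    (by rwa [show n - k + k = n by omega])
  rw [zero_add] at hA1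
  have hA2 := hA1.prepend (by norm_num) (by simp only [hHdef]; linarith)
  have hA3 := Alt.step hH.neg (by omega) hA2
  have hA4 := Alt.prependZero hH.neg (i := k + 1) (N := n - k - 1) (by omega)
    (by rwa [show n - k - 1 + 1 = n - k by omega]) (by norm_num)
    (by simp only [hHdef]; rw [hG1, hF1]; simp)
  have hA5 := Alt.iter hH.neg.neg (i := k + 1 + 1) (N := 2) (n - k - 2) (by omega)
    (by rwa [show 2 + (n - k - 2) = n - k - 1 + 1 by omega])
  rw [show k + 1 + 1 + (n - k - 2) = n by omega] at hA5
  obtain ⟨y, hy1, hy2, hy3⟩ := hA5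
  have h5 := hy3 0 (by omega)
  have h6 := abs_le.1 (hFs _ (hy1 0 (by omega)))
  have h7 := hGn _ (hy1 0 (by omega))
  simp only [hHdef] at h5
  nlinarith

lemma star_end {n k : ℕ} (hk : k + 2 ≤ n) {F G : ℕ → ℝ → ℝ} (hF : Tow n (-1) 1 F)
    (hG : Tow n (-1) 1 G) {s : ℝ} (hs : 0 < s) (hGn : ∀ x ∈ Icc (-1:ℝ) 1, G n x ≤ -s)
    {τ : ℕ → ℝ} (hτ1 : ∀ j < n, τ j ∈ Icc (-1:ℝ) 1) (hτ2 : ∀ j, j + 1 < n → τ (j + 1) < τ j)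
    (hτ3 : ∀ j < n, 1 ≤ (-1) ^ j * G 0 (τ j)) (hG1 : G (k + 1) 1 = 0)
    (h0 : ∀ x ∈ Icc (-1:ℝ) 1, |F 0 x| ≤ 1) (hFs : ∀ x ∈ Icc (-1:ℝ) 1, |F n x| ≤ s)
    (hF1 : F (k + 1) 1 = 0) : |F k 1| ≤ G k 1 := by
  have h1 := star_aux hk hF hG hs hGn hτ1 hτ2 hτ3 hG1 h0 hFs hF1
  have h2 := star_aux hk hF.neg hG hs hGn hτ1 hτ2 hτ3 hG1 (by simpa using h0)
    (by simpa using hFs) (by simpa using hF1)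
  exact abs_le.2 ⟨by linarith, h1⟩

/-- `P` witnesses the star inequality with constants `s` (for the top derivative) and value `v`. -/
def StarP (n k : ℕ) (s v : ℝ) : Prop :=
  ∀ F : ℕ → ℝ → ℝ, Tow n (-1) 1 F → (∀ x ∈ Icc (-1:ℝ) 1, |F 0 x| ≤ 1) →
    (∀ x ∈ Icc (-1:ℝ) 1, |F n x| ≤ s) → F (k + 1) 1 = 0 → |F k 1| ≤ v

lemma iter_der_X_sub_one_mul (Q : ℝ[X]) (j : ℕ) :
    derivative^[j] ((X - 1) * Q) = (X - 1) * derivative^[j] Q + (j : ℝ[X]) * derivative^[j - 1] Q := by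
  induction j with
  | zero => simp
  | succ j ih =>
    rw [Function.iterate_succ_apply', ih]
    rcases j with _ | j
    · simp [derivative_mul]; ring
    · have h1 : derivative (derivative^[j] Q) = derivative^[j + 1] Q :=
        (Function.iterate_succ_apply' derivative j Q).symm
      simp only [derivative_add, derivative_mul, Nat.add_sub_cancel, derivative_sub, derivative_X,
        derivative_one, derivative_natCast, h1]
      rw [Function.iterate_succ_apply' derivative (j + 1) Q]
      push_cast
      ring

lemma der_X_sub_one_cheb (n j : ℕ) (hj : 1 ≤ j) (x : ℝ) :
    (derivative^[j] ((X - 1) * derivative (Polynomial.Chebyshev.T ℝ (n:ℤ)))).eval x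
      = (x - 1) * chebDeriv n (j + 1) x + j * chebDeriv n j x := by
  rw [iter_der_X_sub_one_mul]
  have h1 : derivative^[j] (derivative (Polynomial.Chebyshev.T ℝ (n:ℤ)))
    = derivative^[j + 1] (Polynomial.Chebyshev.T ℝ (n:ℤ)) := by
      rw [Function.iterate_succ_apply]
  have h2 : derivative^[j - 1] (derivative (Polynomial.Chebyshev.T ℝ (n:ℤ)))
    = derivative^[j] (Polynomial.Chebyshev.T ℝ (n:ℤ)) := by
      rw [← Function.iterate_succ_apply, show (j-1).succ = j by omega]
  rw [h1, h2]
  simp [chebDeriv]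

lemma chebDeriv_big (m n : ℕ) (h : m < n) (x : ℝ) : chebDeriv m n x = 0 := by
  unfold chebDeriv
  rw [iterate_derivative_eq_zero]
  · simp
  · simp [Polynomial.Chebyshev.natDegree_T]; omega

lemma cheb_der_node (n j : ℕ) (hj : j < n) :
    (Polynomial.Chebyshev.node n j - 1) * chebDeriv n 1 (Polynomial.Chebyshev.node n j) = 0 := by
  rcases Nat.eq_zero_or_pos j with h | h
  · subst h; simp [Polynomial.Chebyshev.node_eq_one]
  · have hs : 0 < Real.sin (j * Real.pi / n) := by
      apply Real.sin_pos_of_pos_of_lt_pi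
      · have : (0:ℝ) < n := by exact_mod_cast (by omega : 0 < n)
        have : (0:ℝ) < j := by exact_mod_cast h
        positivity
      · rw [div_lt_iff₀ (by exact_mod_cast (by omega : 0 < n))]
        rw [mul_comm]
        exact mul_lt_mul_of_pos_left (by exact_mod_cast hj) Real.pi_pos
    have h1 := Polynomial.Chebyshev.U_real_cos (j * Real.pi / n) ((n:ℤ) - 1)
    have h2 : Real.sin (((((n:ℤ) - 1 : ℤ) : ℝ) + 1) * (j * Real.pi / n)) = 0 := by
      have : (n:ℝ) ≠ 0 := by exact_mod_cast (by omega : n ≠ 0)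
      have : ((((n:ℤ) - 1 : ℤ) : ℝ) + 1) * (j * Real.pi / n) = j * Real.pi := by
        push_cast; field_simp; ring
      rw [this]; exact Real.sin_nat_mul_pi j
    rw [h2] at h1
    have h3 : (Polynomial.Chebyshev.U ℝ ((n:ℤ) - 1)).eval (Real.cos (j * Real.pi / n)) = 0 := by
      rcases mul_eq_zero.1 h1 with h | h
      · exact h
      · exact absurd h hs.ne'
    unfold chebDeriv Polynomial.Chebyshev.node
    simp [Polynomial.Chebyshev.T_derivative_eq_U, h3]

lemma starP_simple {n k : ℕ} (hk : k + 2 ≤ n) (hk1 : 1 ≤ k) {s : ℝ} (hs : 0 < s)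
    (hsn : s ≤ ((n:ℝ) - k - 1) / (k + 1) * sigmaN n) :
    StarP n k s (chebDeriv n k 1 / (k + 1)) := by
  intro F hF h0 hFs hF1
  set P : ℝ[X] := Polynomial.Chebyshev.T ℝ (n:ℤ) -
    Polynomial.C (1 / ((k:ℝ) + 1)) * ((X - 1) * derivative (Polynomial.Chebyshev.T ℝ (n:ℤ))) with hP
  have hkp : (0:ℝ) < (k:ℝ) + 1 := by positivity
  have hPd : ∀ j, 1 ≤ j → ∀ x, (derivative^[j] P).eval x = chebDeriv n j x -
      1 / ((k:ℝ) + 1) * ((x - 1) * chebDeriv n (j + 1) x + j * chebDeriv n j x) := by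
    intro j hj x
    rw [hP, iterate_derivative_sub, iterate_derivative_C_mul, eval_sub, eval_mul, eval_C,
      der_X_sub_one_cheb n j hj]
    rfl
  have hPk : (derivative^[k] P).eval 1 = chebDeriv n k 1 / (k + 1) := by
    rw [hPd k hk1]; field_simp; ring
  rw [← hPk]
  refine star_end hk hF (tow_poly P n (-1) 1) hs ?_ (τ := Polynomial.Chebyshev.node n)
    (fun j _ => Polynomial.Chebyshev.node_mem_Icc)
    (fun j hj => Polynomial.Chebyshev.node_lt (by omega) (by omega)) ?_ ?_ h0 hFs hF1
  · intro x hx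
    change (derivative^[n] P).eval x ≤ -s
    rw [hPd n (by omega), chebDeriv_top n (by omega), chebDeriv_big n (n+1) (by omega)]
    have : sigmaN n - 1 / ((k:ℝ) + 1) * ((x - 1) * 0 + n * sigmaN n)
      = - (((n:ℝ) - k - 1) / (k + 1) * sigmaN n) := by field_simp; ring
    linarith
  · intro j hj
    change 1 ≤ (-1) ^ j * (derivative^[0] P).eval _
    have h2 : (Polynomial.Chebyshev.T ℝ (n:ℤ)).eval (Polynomial.Chebyshev.node n j) = (-1) ^ j := by
      have := Polynomial.Chebyshev.eval_T_real_node (n := n) (i := j) (by simp; omega)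
      simpa using this
    have h3 := cheb_der_node n j hj
    have h4 : (derivative (Polynomial.Chebyshev.T ℝ (n:ℤ))).eval (Polynomial.Chebyshev.node n j)
      = chebDeriv n 1 (Polynomial.Chebyshev.node n j) := rfl
    simp only [Function.iterate_zero, id, hP, eval_sub, eval_mul, eval_C, eval_X, eval_one, h2, h4, h3]
    have h3 : ((-1:ℝ) ^ j) * (-1) ^ j = 1 := by rw [← mul_pow]; simp
    rw [mul_zero, sub_zero, h3]
  · change (derivative^[k + 1] P).eval 1 = 0
    rw [hPd (k + 1) (by omega)]; push_cast; field_simp; ring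


lemma taylor_right_aux {p q x0 B : ℝ} (hx0 : x0 ∈ Icc p q) (m : ℕ) :
    ∀ F : ℕ → ℝ → ℝ, Tow m p q F → (∀ x ∈ Icc p q, F m x ≤ B) → ∀ x ∈ Icc x0 q,
    F 0 x - ∑ i ∈ Finset.range m, F i x0 * ((x - x0) ^ i / (i.factorial : ℝ))
      ≤ B * ((x - x0) ^ m / (m.factorial : ℝ)) := by
  induction m with
  | zero => intro F hF hB x hx; simpa using hB x ⟨hx0.1.trans hx.1, hx.2⟩
  | succ m ih =>
    intro F hF hB x hx
    have ih' := ih (fun i => F (i + 1)) hF.shift hB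
    have hder : ∀ (c : ℝ) (i : ℕ) (y : ℝ),
        HasDerivAt (fun y => c * ((y - x0) ^ (i + 1) / ((i + 1).factorial : ℝ)))
          (c * ((y - x0) ^ i / (i.factorial : ℝ))) y := by
      intro c i y
      have h1 := ((((hasDerivAt_id y).sub_const x0).pow (i + 1)).div_const
        (((i + 1).factorial : ℕ) : ℝ)).const_mul c
      refine h1.congr_deriv ?_
      have : (i.factorial : ℝ) ≠ 0 := by positivity
      rw [Nat.factorial_succ]
      push_cast
      simp only [id, Nat.add_sub_cancel, mul_one]
      field_simp
    set g : ℝ → ℝ := fun y => B * ((y - x0) ^ (m + 1) / ((m + 1).factorial : ℝ)) +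
      (∑ i ∈ Finset.range m, F (i + 1) x0 * ((y - x0) ^ (i + 1) / ((i + 1).factorial : ℝ))
        + F 0 x0) - F 0 y with hg
    have hgd : ∀ y ∈ Icc x0 q, HasDerivWithinAt g (B * ((y - x0) ^ m / (m.factorial : ℝ)) +
      (∑ i ∈ Finset.range m, F (i + 1) x0 * ((y - x0) ^ i / (i.factorial : ℝ))) - F 1 y)
        (Icc x0 q) y := by
      intro y hy
      have h1 := (hder B m y).hasDerivWithinAt (s := Icc x0 q)
      have h2 : HasDerivWithinAt (fun y => ∑ i ∈ Finset.range m,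
          F (i + 1) x0 * ((y - x0) ^ (i + 1) / ((i + 1).factorial : ℝ)))
          (∑ i ∈ Finset.range m, F (i + 1) x0 * ((y - x0) ^ i / (i.factorial : ℝ))) (Icc x0 q) y :=
        HasDerivWithinAt.fun_sum (fun i _ => (hder (F (i + 1) x0) i y).hasDerivWithinAt)
      have h3 := (hF 0 (by omega) y ⟨hx0.1.trans hy.1, hy.2⟩).mono
        (Icc_subset_Icc_left hx0.1)
      exact (h1.add (h2.add_const _)).sub h3
    have hmono : MonotoneOn g (Icc x0 q) := by
      apply monotoneOn_of_hasDerivWithinAt_nonneg (convex_Icc _ _)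
        (fun y hy => (hgd y hy).continuousWithinAt)
        (fun y hy => (hgd y (interior_subset hy)).mono interior_subset)
      intro y hy
      have := ih' y (interior_subset hy)
      simp only [zero_add] at this
      linarith
    have h4 := hmono ⟨le_rfl, hx.1.trans hx.2⟩ hx hx.1
    rw [Finset.sum_range_succ']
    simp [hg] at h4 ⊢
    linarith

lemma taylor_right {p q x0 B : ℝ} (hx0 : x0 ∈ Icc p q) (m : ℕ) {F : ℕ → ℝ → ℝ}
    (hF : Tow m p q F) (hB : ∀ x ∈ Icc p q, |F m x| ≤ B) {x : ℝ} (hx : x ∈ Icc x0 q) :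
    |F 0 x - ∑ i ∈ Finset.range m, F i x0 * ((x - x0) ^ i / (i.factorial : ℝ))|
      ≤ B * ((x - x0) ^ m / (m.factorial : ℝ)) := by
  have h1 := taylor_right_aux hx0 m F hF (fun x hx => (abs_le.1 (hB x hx)).2) x hx
  have h2 := taylor_right_aux hx0 m _ hF.neg
    (fun x hx => (by have := (abs_le.1 (hB x hx)).1; linarith : -F m x ≤ B)) x hx
  simp only [neg_mul, Finset.sum_neg_distrib] at h2
  exact abs_le.2 ⟨by linarith, h1⟩

lemma taylor_tow {p q x0 B : ℝ} (hx0 : x0 ∈ Icc p q) (m : ℕ) {F : ℕ → ℝ → ℝ}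
    (hF : Tow m p q F) (hB : ∀ x ∈ Icc p q, |F m x| ≤ B) {x : ℝ} (hx : x ∈ Icc p q) :
    |F 0 x - ∑ i ∈ Finset.range m, F i x0 * ((x - x0) ^ i / (i.factorial : ℝ))|
      ≤ B * (|x - x0| ^ m / (m.factorial : ℝ)) := by
  rcases le_total x0 x with h | h
  · rw [abs_of_nonneg (sub_nonneg.2 h)]
    exact taylor_right hx0 m hF hB ⟨h, hx.2⟩
  · have hR := hF.affine (p' := -q) (q' := -p) (-1) 0
      (fun y hy => ⟨by linarith [hy.2], by linarith [hy.1]⟩)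
    have := taylor_right (x0 := -x0) (B := B) ⟨by linarith [hx0.2], by linarith [hx0.1]⟩ m hR
      (fun y hy => by
        rw [abs_mul, abs_pow]
        simpa using hB (-1 * y + 0) ⟨by linarith [hy.2], by linarith [hy.1]⟩)
      (x := -x) ⟨by linarith, by linarith [hx.1]⟩
    rw [abs_of_nonpos (sub_nonpos.2 h)]
    have e1 : ∑ i ∈ Finset.range m, (-1) ^ i * F i (-1 * -x0 + 0) * ((-x - -x0) ^ i / (i.factorial : ℝ))
      = ∑ i ∈ Finset.range m, F i x0 * ((x - x0) ^ i / (i.factorial : ℝ)) := by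
      apply Finset.sum_congr rfl
      intro i _
      rw [show -1 * -x0 + 0 = x0 by ring, show -x - -x0 = (-1) * (x - x0) by ring, mul_pow]
      have h3 : ((-1:ℝ) ^ i) * (-1) ^ i = 1 := by rw [← mul_pow]; simp
      linear_combination F i x0 * ((x - x0) ^ i / (i.factorial : ℝ)) * h3
    rw [e1] at this
    convert this using 3
    · simp
    · ring

/-- Admissible towers with `σ = a^n σ_n`. -/
structure Ad (n : ℕ) (a : ℝ) (F : ℕ → ℝ → ℝ) : Prop where
  tow : Tow n (-1) 1 F
  b0 : ∀ x ∈ Icc (-1:ℝ) 1, |F 0 x| ≤ 1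
  bn : ∀ x ∈ Icc (-1:ℝ) 1, |F n x| ≤ a ^ n * sigmaN n

lemma Ad.reflect {n : ℕ} {a : ℝ} {F : ℕ → ℝ → ℝ} (h : Ad n a F) :
    Ad n a (fun i x => (-1) ^ i * F i (-1 * x + 0)) := by
  have hm : ∀ x ∈ Icc (-1:ℝ) 1, -1 * x + 0 ∈ Icc (-1:ℝ) 1 :=
    fun x hx => ⟨by linarith [hx.2], by linarith [hx.1]⟩
  refine ⟨h.tow.affine (-1) 0 hm, fun x hx => ?_, fun x hx => ?_⟩
  · simpa using h.b0 _ (hm x hx)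
  · rw [abs_mul, abs_pow]; simpa using h.bn _ (hm x hx)

lemma Ad.scaled {n : ℕ} {a : ℝ} {F : ℕ → ℝ → ℝ} (h : Ad n a F) {x0 β : ℝ}
    (hx : x0 ≤ 1) (hβ : 0 < β) (hβ2 : β ≤ (1 + x0) / 2) :
    Tow n (-1) 1 (fun i t => β ^ i * F i (β * t + (x0 - β))) ∧
    (∀ t ∈ Icc (-1:ℝ) 1, |F 0 (β * t + (x0 - β))| ≤ 1) ∧
    (∀ t ∈ Icc (-1:ℝ) 1, |β ^ n * F n (β * t + (x0 - β))| ≤ (β * a) ^ n * sigmaN n) := by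
  have hm : ∀ t ∈ Icc (-1:ℝ) 1, β * t + (x0 - β) ∈ Icc (-1:ℝ) 1 := by
    intro t ht
    constructor <;> nlinarith [ht.1, ht.2]
  refine ⟨h.tow.affine β _ hm, fun t ht => h.b0 _ (hm t ht), fun t ht => ?_⟩
  rw [abs_mul, abs_of_pos (pow_pos hβ n), mul_pow, mul_assoc]
  exact mul_le_mul_of_nonneg_left (h.bn _ (hm t ht)) (pow_pos hβ n).le

lemma Ad.markov {n : ℕ} (hn : 1 ≤ n) {a : ℝ} (ha : 0 ≤ a) {F : ℕ → ℝ → ℝ} (h : Ad n a F)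
    {x0 β : ℝ} (hx : x0 ≤ 1) (hβ : 0 < β) (hβ2 : β ≤ (1 + x0) / 2) (hβa : β * a ≤ 1)
    {j : ℕ} (hj : j ≤ n) : β ^ j * |F j x0| ≤ chebDeriv n j 1 := by
  obtain ⟨h1, h2, h3⟩ := h.scaled hx hβ hβ2
  have := markov_end hn h1 (by simpa using h2) (fun t ht => (h3 t ht).trans (by
    have : (β * a) ^ n ≤ 1 := pow_le_one₀ (by positivity) hβa
    nlinarith [sigmaN_pos n])) hj
  simpa [abs_mul, abs_of_pos hβ] using this

lemma Ad.star {n k : ℕ} {a s v : ℝ} (hS : StarP n k s v) {F : ℕ → ℝ → ℝ} (h : Ad n a F)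
    {x0 β : ℝ} (hx : x0 ≤ 1) (hβ : 0 < β) (hβ2 : β ≤ (1 + x0) / 2)
    (hβa : (β * a) ^ n * sigmaN n ≤ s) (h0 : F (k + 1) x0 = 0) : β ^ k * |F k x0| ≤ v := by
  obtain ⟨h1, h2, h3⟩ := h.scaled hx hβ hβ2
  have := hS _ h1 (by simpa using h2) (fun t ht => (h3 t ht).trans hβa) (by simp [h0])
  simpa [abs_mul, abs_of_pos hβ] using this

lemma memW.ad {n : ℕ} {a : ℝ} {f : ℝ → ℝ} (h : memW n (a ^ n * sigmaN n) f) :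
    Ad n a (fun i => iteratedDerivWithin i f (Icc (-1:ℝ) 1)) :=
  ⟨tow_of_memW h, by simpa using h.2.1, h.2.2⟩

lemma bdd_one {n k : ℕ} {a : ℝ} (hn : 1 ≤ n) (hk : k ≤ n) (ha : 1 ≤ a) :
    BddAbove {y | ∃ f : ℝ → ℝ, memW n (a ^ n * sigmaN n) f ∧
    y = |iteratedDerivWithin k f (Icc (-1:ℝ) 1) 1|} := by
  refine ⟨a ^ k * chebDeriv n k 1, ?_⟩
  rintro y ⟨f, hf, rfl⟩
  have ha0 : 0 < a := by linarith
  have h1 := hf.ad.markov hn ha0.le (x0 := 1) (β := a⁻¹) le_rfl (by positivity)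
    (by norm_num; exact inv_le_one_of_one_le₀ ha) (by field_simp; rfl) hk
  have h2 := mul_le_mul_of_nonneg_left h1 (pow_nonneg ha0.le k)
  rwa [← mul_assoc, ← mul_pow, mul_inv_cancel₀ ha0.ne', one_pow, one_mul] at h2

lemma Ad.le_mval {n k : ℕ} {a : ℝ} (hn : 1 ≤ n) (hk : k ≤ n) (ha : 1 ≤ a) {F : ℕ → ℝ → ℝ}
    (h : Ad n a F) : |F k 1| ≤ mval n k 1 (a ^ n * sigmaN n) := by
  apply le_csSup (bdd_one hn hk ha)
  refine ⟨F 0, h.tow.memW h.b0 h.bn, ?_⟩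
  rw [h.tow.iter_eq k hk 1 (by norm_num)]

lemma Ad.exists_sigma {n : ℕ} (hn : 1 ≤ n) {σ : ℝ} (hσ : sigmaN n < σ) :
    ∃ a : ℝ, 1 < a ∧ a ^ n * sigmaN n = σ := by
  have hs := sigmaN_pos n
  have hq : 1 < σ / sigmaN n := by rwa [one_lt_div hs]
  refine ⟨(σ / sigmaN n) ^ ((n:ℝ)⁻¹), Real.one_lt_rpow hq (by positivity), ?_⟩
  rw [Real.rpow_inv_natCast_pow (by linarith) (by omega)]
  field_simp

lemma mval_nonneg (n k : ℕ) (x σ : ℝ) : 0 ≤ mval n k x σ := by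
  apply Real.sSup_nonneg
  rintro y ⟨f, hf, rfl⟩
  exact abs_nonneg _

lemma main_red {n k : ℕ} (hk : k + 1 ≤ n) {a : ℝ} (ha : 1 ≤ a)
    (H : ∀ F, Ad n a F → ∀ x0 ∈ Ico (0:ℝ) 1, F (k + 1) x0 = 0 →
      |F k x0| ≤ mval n k 1 (a ^ n * sigmaN n)) :
    ∀ x ∈ Icc (-1:ℝ) 1, mval n k x (a ^ n * sigmaN n) ≤ mval n k 1 (a ^ n * sigmaN n) := by
  have H2 : ∀ F, Ad n a F → ∀ x0 ∈ Icc (0:ℝ) 1, (x0 < 1 → F (k + 1) x0 = 0) →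
      |F k x0| ≤ mval n k 1 (a ^ n * sigmaN n) := by
    intro F hF x0 hx0 h0
    rcases lt_or_eq_of_le hx0.2 with h | h
    · exact H F hF x0 ⟨hx0.1, h⟩ (h0 h)
    · rw [h]; exact hF.le_mval (by omega) (by omega) ha
  intro x hx
  apply Real.sSup_le _ (mval_nonneg _ _ _ _)
  rintro y ⟨f, hf, rfl⟩
  have hA := hf.ad
  set F : ℕ → ℝ → ℝ := fun i => iteratedDerivWithin i f (Icc (-1:ℝ) 1) with hFdef
  change |F k x| ≤ _
  obtain ⟨x0, hx0, hmax⟩ := isCompact_Icc.exists_isMaxOn (s := Icc (-1:ℝ) 1)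
    ⟨0, by norm_num⟩ ((hA.tow.cont (i := k) (by omega)).abs)
  refine le_trans (hmax hx) ?_
  change |F k x0| ≤ _
  have hzero : x0 ∈ Ioo (-1:ℝ) 1 → F (k + 1) x0 = 0 := by
    intro hx1
    have hnh := Icc_mem_nhds hx1.1 hx1.2
    have hd := (hA.tow k (by omega) x0 hx0).hasDerivAt hnh
    rcases le_total 0 (F k x0) with hp | hp
    · have : IsLocalMax (F k) x0 := by
        filter_upwards [hnh] with z hz
        have := hmax hz
        simp only [mem_ofPred_eq] at this
        rw [abs_of_nonneg hp] at this
        exact (le_abs_self _).trans this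
      exact this.hasDerivAt_eq_zero hd
    · have : IsLocalMin (F k) x0 := by
        filter_upwards [hnh] with z hz
        have := hmax hz
        simp only [mem_ofPred_eq] at this
        rw [abs_of_nonpos hp] at this
        linarith [neg_abs_le (F k z)]
      exact this.hasDerivAt_eq_zero hd
  rcases le_total 0 x0 with hp | hp
  · exact H2 F hA x0 ⟨hp, hx0.2⟩ (fun h => hzero ⟨by linarith, h⟩)
  · have := H2 _ hA.reflect (-x0) ⟨by linarith, by linarith [hx0.1]⟩ (fun h => by
      simp; exact hzero ⟨by linarith, by linarith⟩)
    simpa [abs_mul] using this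

lemma finish {n k : ℕ} {σ : ℝ} (h : ∀ x ∈ Icc (-1:ℝ) 1, mval n k x σ ≤ mval n k 1 σ) :
    (∀ x ∈ Icc (-1:ℝ) 1, mval n k x σ ≤ mval n k 1 σ) ∧
    sSup {y | ∃ x ∈ Icc (-1:ℝ) 1, y = mval n k x σ} = mval n k 1 σ := by
  refine ⟨h, IsGreatest.csSup_eq ⟨⟨1, by norm_num, rfl⟩, ?_⟩⟩
  rintro y ⟨x, hx, rfl⟩
  exact h x hx


/-- numerator product -/
noncomputable def cA (N : ℕ) (k : ℕ) : ℝ := ∏ l ∈ Finset.range k, ((N:ℝ) ^ 2 - (l:ℝ) ^ 2)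
/-- odd product -/
noncomputable def cD (k : ℕ) : ℝ := ∏ l ∈ Finset.range k, (2 * (l:ℝ) + 1)

lemma cD_pos (k : ℕ) : 0 < cD k := Finset.prod_pos (fun l _ => by positivity)

lemma cA_factor_pos {N l : ℕ} (h : l < N) : 0 < (N:ℝ) ^ 2 - (l:ℝ) ^ 2 := by
  have : (l:ℝ) < N := by exact_mod_cast h
  have : (0:ℝ) ≤ l := by positivity
  nlinarith

lemma cA_pos {N k : ℕ} (h : k ≤ N) : 0 < cA N k :=
  Finset.prod_pos (fun l hl => cA_factor_pos (by have := Finset.mem_range.1 hl; omega))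

lemma cheb_one (N k : ℕ) : chebDeriv N k 1 = cA N k / cD k := by
  unfold chebDeriv cA cD
  rw [Polynomial.Chebyshev.iterate_derivative_T_eval_one_eq_div]
  push_cast
  rfl

lemma cheb_pos {N k : ℕ} (h : k ≤ N) : 0 < chebDeriv N k 1 := by
  rw [cheb_one]; exact div_pos (cA_pos h) (cD_pos k)

lemma cheb_ge (N : ℕ) : ∀ k, 1 ≤ k → k ≤ N → (N:ℝ) ^ 2 ≤ chebDeriv N k 1 := by
  intro k hk
  induction k, hk using Nat.le_induction with
  | base => intro _; rw [cheb_one]; simp [cA, cD]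
  | succ k hk ih =>
    intro h
    have ih := ih (by omega)
    have h1 := Polynomial.Chebyshev.iterate_derivative_T_eval_one_recurrence (R := ℝ) (N:ℤ) k
    change (2 * (k:ℝ) + 1) * chebDeriv N (k + 1) 1 = (((N:ℤ):ℝ) ^ 2 - (k:ℝ) ^ 2) * chebDeriv N k 1 at h1
    push_cast at h1
    have h2 : (k:ℝ) + 1 ≤ N := by exact_mod_cast h
    have h3 : 2 * (k:ℝ) + 1 ≤ (N:ℝ) ^ 2 - (k:ℝ) ^ 2 := by nlinarith
    have h4 : (2 * (k:ℝ) + 1) * chebDeriv N k 1 ≤ (2 * (k:ℝ) + 1) * chebDeriv N (k + 1) 1 := by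
      rw [h1]
      exact mul_le_mul_of_nonneg_right h3 (cheb_pos (by omega)).le
    exact ih.trans (le_of_mul_le_mul_left h4 (by positivity))

lemma cheb_abs_le (N k : ℕ) {x : ℝ} (hx : x ∈ Icc (-1:ℝ) 1) :
    |chebDeriv N k x| ≤ chebDeriv N k 1 := by
  unfold chebDeriv
  refine Submodule.span_induction (p := fun (P : ℝ[X]) _ => |P.eval x| ≤ P.eval (1:ℝ)) ?_ ?_ ?_ ?_
    (Polynomial.Chebyshev.T_iterate_derivative_mem_span_T (R := ℝ) N k)
  · rintro P ⟨m, hm, rfl⟩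
    simp only [Polynomial.Chebyshev.T_eval_one]
    exact Polynomial.Chebyshev.abs_eval_T_real_le_one m (abs_le.2 hx)
  · simp
  · intro P Q _ _ h1 h2
    simp only [eval_add]
    exact (abs_add_le _ _).trans (add_le_add h1 h2)
  · intro c P _ h
    simp only [nsmul_eq_mul, eval_mul, eval_natCast, abs_mul, Nat.abs_cast]
    exact mul_le_mul_of_nonneg_left h (by positivity)

lemma cheb_tow (N n : ℕ) (p q : ℝ) : Tow n p q (fun i => chebDeriv N i) :=
  tow_poly (Polynomial.Chebyshev.T ℝ (N:ℤ)) n p q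

lemma cheb_zero_one (N : ℕ) : chebDeriv N 0 1 = 1 := by simp [chebDeriv]

lemma lower_T {n k : ℕ} (hn : 1 ≤ n) (hk : k ≤ n) {a : ℝ} (ha : 1 ≤ a) :
    chebDeriv n k 1 ≤ mval n k 1 (a ^ n * sigmaN n) := by
  have : Ad n a (fun i => chebDeriv n i) := by
    refine ⟨cheb_tow n n _ _, fun x hx => ?_, fun x hx => ?_⟩
    · have := cheb_abs_le n 0 hx; rwa [cheb_zero_one] at this
    · rw [chebDeriv_top n hn, abs_of_pos (sigmaN_pos n)]
      have : 1 ≤ a ^ n := one_le_pow₀ ha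
      nlinarith [sigmaN_pos n]
  exact (le_abs_self _).trans (this.le_mval hn hk ha)

lemma cA_pow_le (N k : ℕ) : ∀ n, k ≤ n → n ≤ N → cA N n ^ k ≤ cA N k ^ n := by
  intro n hkn
  induction n, hkn using Nat.le_induction with
  | base => intro _; exact le_rfl
  | succ n hn ih =>
    intro hN
    have ih := ih (by omega)
    have h1 : cA N (n + 1) = cA N n * ((N:ℝ) ^ 2 - (n:ℝ) ^ 2) := by
      unfold cA; rw [Finset.prod_range_succ]
    rw [h1, mul_pow, pow_succ (cA N k) n]
    have hp : 0 < (N:ℝ) ^ 2 - (n:ℝ) ^ 2 := cA_factor_pos (by omega)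
    refine mul_le_mul ih ?_ (by positivity) (pow_pos (cA_pos (by omega)) n).le
    unfold cA
    calc ((N:ℝ) ^ 2 - (n:ℝ) ^ 2) ^ k = ∏ l ∈ Finset.range k, ((N:ℝ) ^ 2 - (n:ℝ) ^ 2) := by simp
      _ ≤ _ := by
        apply Finset.prod_le_prod (fun _ _ => hp.le)
        intro l hl
        have : (l:ℝ) ≤ n := by exact_mod_cast (by have := Finset.mem_range.1 hl; omega)
        nlinarith [(Nat.cast_nonneg l : (0:ℝ) ≤ l)]

lemma sigma_cD (n : ℕ) (hn : 1 ≤ n) : sigmaN n * cD n = ((2 * n).factorial : ℝ) / 2 := by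
  have h : ∀ m, 2 ^ m * (m.factorial : ℝ) * cD m = ((2 * m).factorial : ℝ) := by
    intro m
    induction m with
    | zero => simp [cD]
    | succ m ih =>
      have h1 : cD (m + 1) = cD m * (2 * (m:ℝ) + 1) := by unfold cD; rw [Finset.prod_range_succ]
      rw [h1, show 2 * (m + 1) = 2 * m + 1 + 1 by ring, Nat.factorial_succ (2 * m + 1),
        Nat.factorial_succ (2 * m), Nat.factorial_succ m]
      push_cast
      rw [← ih]
      ring
  rw [← h n]
  unfold sigmaN
  obtain ⟨m, rfl⟩ : ∃ m, n = m + 1 := ⟨n - 1, by omega⟩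
  rw [Nat.add_sub_cancel, pow_succ]
  ring

lemma lower_spline {n k : ℕ} (hn : 1 ≤ n) (hk : k ≤ n) {a : ℝ} (ha : 1 ≤ a) {c : ℝ} (hc : 0 ≤ c)
    (hck : (c * cA n k) ^ n ≤ (((2 * n).factorial : ℝ) / 2) ^ k) :
    c * a ^ k * chebDeriv n k 1 ≤ mval n k 1 (a ^ n * sigmaN n) := by
  have hs := sigmaN_pos n
  set σ := a ^ n * sigmaN n with hσ
  have ha0 : 0 < a := by linarith
  have hσ0 : 0 < σ := by positivity
  obtain ⟨N, hnN, hN⟩ : ∃ N, n ≤ N ∧ σ ≤ chebDeriv N n 1 := by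
    obtain ⟨M, hM⟩ := exists_nat_ge σ
    refine ⟨max n M, le_max_left _ _, le_trans ?_ (cheb_ge _ n hn (le_max_left _ _))⟩
    have h1 : (M:ℝ) ≤ (max n M : ℕ) := by exact_mod_cast le_max_right _ _
    have h2 : (1:ℝ) ≤ (max n M : ℕ) := by exact_mod_cast hn.trans (le_max_left _ _)
    nlinarith
  have hTN := cheb_pos (N := N) (k := n) hnN
  set ρ : ℝ := (σ / chebDeriv N n 1) ^ ((n:ℝ)⁻¹) with hρ
  have hρn : ρ ^ n = σ / chebDeriv N n 1 := by
    rw [hρ, Real.rpow_inv_natCast_pow (by positivity) (by omega)]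
  have hρ0 : 0 < ρ := by positivity
  have hρ1 : ρ ≤ 1 := by
    apply Real.rpow_le_one (by positivity) _ (by positivity)
    rw [div_le_one hTN]; exact hN
  have hm : ∀ x ∈ Icc (-1:ℝ) 1, ρ * x + (1 - ρ) ∈ Icc (-1:ℝ) 1 := by
    intro x hx; constructor <;> nlinarith [hx.1, hx.2]
  have hAd : Ad n a (fun i x => ρ ^ i * chebDeriv N i (ρ * x + (1 - ρ))) := by
    refine ⟨(cheb_tow N n (-1) 1).affine ρ (1 - ρ) hm, fun x hx => ?_, fun x hx => ?_⟩
    · have := cheb_abs_le N 0 (hm x hx); rw [cheb_zero_one] at this; simpa using this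
    · rw [abs_mul, abs_of_pos (pow_pos hρ0 n), hρn]
      have := cheb_abs_le N n (hm x hx)
      calc _ ≤ σ / chebDeriv N n 1 * chebDeriv N n 1 :=
            mul_le_mul_of_nonneg_left this (by positivity)
        _ = σ := by field_simp
  have h1 := hAd.le_mval hn hk ha
  refine le_trans ?_ h1
  simp only [show ρ * 1 + (1 - ρ) = 1 by ring]
  have hTk := cheb_pos (N := N) (k := k) (by omega)
  have hTk' := cheb_pos (N := n) (k := k) (by omega)
  rw [abs_of_pos (by positivity)]
  refine le_of_pow_le_pow_left₀ (n := n) (by omega) (by positivity) ?_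
  rw [mul_pow (ρ ^ k), ← pow_mul, mul_comm k n, pow_mul, hρn, cheb_one N n, cheb_one n k, cheb_one N k]
  have hA := cA_pow_le N k n hk hnN
  have p1 := cD_pos n
  have p2 := cD_pos k
  have p3 := cA_pos hnN
  have p4 := cA_pos (hk.trans hnN)
  have p5 := cA_pos hk
  rw [← sigma_cD n hn] at hck
  have e1 : (c * a ^ k * (cA n k / cD k)) ^ n = (a ^ n) ^ k * (c * cA n k) ^ n / cD k ^ n := by
    rw [mul_pow, mul_pow, div_pow, mul_pow, ← pow_mul, ← pow_mul, mul_comm k n]; ring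
  have e2 : (σ / (cA N n / cD n)) ^ k * (cA N k / cD k) ^ n
    = (a ^ n) ^ k * ((sigmaN n * cD n) ^ k * (cA N k ^ n / cA N n ^ k)) / cD k ^ n := by
    rw [hσ]
    simp only [div_pow, mul_pow]
    field_simp
  rw [e1, e2]
  gcongr
  refine hck.trans ?_
  apply le_mul_of_one_le_right (by positivity)
  rw [one_le_div (by positivity)]
  exact hA

lemma cA_1 (n : ℕ) : cA n 1 = (n:ℝ) ^ 2 := by simp [cA]
lemma cA_2 (n : ℕ) : cA n 2 = (n:ℝ) ^ 2 * ((n:ℝ) ^ 2 - 1) := by simp [cA, Finset.prod_range_succ]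
lemma cheb_1 (n : ℕ) : chebDeriv n 1 1 = (n:ℝ) ^ 2 := by rw [cheb_one, cA_1]; simp [cD]
lemma cheb_2 (n : ℕ) : chebDeriv n 2 1 = (n:ℝ) ^ 2 * ((n:ℝ) ^ 2 - 1) / 3 := by
  rw [cheb_one, cA_2]; simp [cD, Finset.prod_range_succ]; norm_num


lemma fact_ge (n : ℕ) (hn : 1 ≤ n) :
    ((541/1000:ℝ) * (n:ℝ) ^ 2) ^ n ≤ ((2 * n).factorial : ℝ) / 2 := by
  have h := Stirling.le_factorial_stirling (2 * n)
  have hn1 : (1:ℝ) ≤ n := by exact_mod_cast hn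
  have h1 : (2:ℝ) ≤ √(2 * Real.pi * ((2 * n : ℕ) : ℝ)) := by
    apply Real.le_sqrt_of_sq_le
    push_cast
    nlinarith [Real.pi_gt_three]
  have he := Real.exp_one_lt_d9
  have he0 := Real.exp_pos 1
  have h2 : ((541/1000:ℝ) * (n:ℝ) ^ 2) ^ n ≤ (((2 * n : ℕ) : ℝ) / Real.exp 1) ^ (2 * n) := by
    rw [pow_mul]
    apply pow_le_pow_left₀ (by positivity)
    rw [div_pow, le_div_iff₀ (by positivity)]
    push_cast
    have : Real.exp 1 ^ 2 ≤ 7.3891 := by nlinarith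
    nlinarith [sq_nonneg (n:ℝ)]
  have h3 : 0 ≤ (((2 * n : ℕ) : ℝ) / Real.exp 1) ^ (2 * n) := by positivity
  nlinarith

lemma case_k1_big {n : ℕ} (hn : 4 ≤ n) {a : ℝ} (ha : 1 ≤ a) {F : ℕ → ℝ → ℝ} (hF : Ad n a F)
    {x0 : ℝ} (hx : x0 ∈ Ico (0:ℝ) 1) (h0 : F (1 + 1) x0 = 0) :
    |F 1 x0| ≤ mval n 1 1 (a ^ n * sigmaN n) := by
  have ha0 : 0 < a := by linarith
  have hn4 : (4:ℝ) ≤ n := by exact_mod_cast hn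
  have hsp := sigmaN_pos n
  have hS := starP_simple (n := n) (k := 1) (by omega) le_rfl hsp (by
    push_cast; nlinarith)
  have hT := cheb_pos (N := n) (k := 1) (by omega)
  have hx1 := hx.2
  have hx00 := hx.1
  by_cases hc : a⁻¹ ≤ (1 + x0) / 2
  · have h1 := hF.star hS hx1.le (by positivity) hc (by rw [inv_mul_cancel₀ ha0.ne']; simp) h0
    have h2 := lower_spline (n := n) (k := 1) (by omega) (by omega) ha (c := 1/2) (by norm_num) (by
      rw [cA_1, pow_one]
      refine le_trans ?_ (fact_ge n (by omega))
      apply pow_le_pow_left₀ (by positivity)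
      nlinarith [sq_nonneg (n:ℝ)])
    refine le_trans ?_ h2
    rw [pow_one, inv_mul_le_iff₀ ha0] at h1
    norm_num at h1 ⊢
    linarith
  · push Not at hc
    have h1 := hF.star hS hx1.le (β := (1 + x0) / 2) (by linarith) le_rfl (by
      have : (1 + x0) / 2 * a ≤ 1 := by
        rw [lt_inv_comm₀ (by linarith) ha0] at hc
        have := mul_lt_mul_of_pos_left hc (show 0 < (1 + x0) / 2 by linarith)
        rw [mul_inv_cancel₀ (by linarith)] at this
        exact this.le
      have : ((1 + x0) / 2 * a) ^ n ≤ 1 := pow_le_one₀ (by nlinarith) this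
      nlinarith) h0
    refine le_trans ?_ (lower_T (n := n) (k := 1) (by omega) (by omega) ha)
    rw [pow_one] at h1
    norm_num at h1
    nlinarith [abs_nonneg (F 1 x0)]

lemma sigmaN_3 : sigmaN 3 = 24 := by norm_num [sigmaN, Nat.factorial]
lemma sigmaN_4 : sigmaN 4 = 192 := by norm_num [sigmaN, Nat.factorial]
lemma sigmaN_5 : sigmaN 5 = 1920 := by norm_num [sigmaN, Nat.factorial]

lemma case_k1_three {a : ℝ} (ha : 1 ≤ a) {F : ℕ → ℝ → ℝ} (hF : Ad 3 a F)
    {x0 : ℝ} (hx : x0 ∈ Ico (0:ℝ) 1) (h0 : F (1 + 1) x0 = 0) :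
    |F 1 x0| ≤ mval 3 1 1 (a ^ 3 * sigmaN 3) := by
  have ha0 : 0 < a := by linarith
  have hx1 := hx.2
  have hx00 := hx.1
  have h2 := lower_spline (n := 3) (k := 1) (by omega) (by omega) ha (c := 5/9) (by norm_num) (by
      rw [cA_1]; norm_num [Nat.factorial])
  refine le_trans ?_ h2
  rw [cheb_1]
  obtain ⟨t, ht⟩ : ∃ t, t = 1 / (2 * a) := ⟨_, rfl⟩
  have hta : t * a = 1 / 2 := by rw [ht]; field_simp
  have ht0 : 0 < t := by rw [ht]; positivity
  have ht1 : t ≤ 1 / 2 := by nlinarith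
  have h3 := taylor_tow (x0 := x0) ⟨by linarith, hx1.le⟩ 3 hF.tow hF.bn (x := x0 - t)
    ⟨by linarith, by linarith⟩
  have hb1 := abs_le.1 (hF.b0 x0 ⟨by linarith, hx1.le⟩)
  have hb2 := abs_le.1 (hF.b0 (x0 - t) ⟨by linarith, by linarith⟩)
  rw [sigmaN_3, show x0 - t - x0 = -t by ring, abs_neg, abs_of_pos ht0] at h3
  norm_num [Finset.sum_range_succ, Nat.factorial, show F 2 x0 = 0 from h0] at h3
  have h4 : a ^ 3 * 24 * (t ^ 3 / 6) = 1 / 2 := by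
    have : a ^ 3 * 24 * (t ^ 3 / 6) = 4 * (t * a) ^ 3 := by ring
    rw [this, hta]; norm_num
  rw [h4] at h3
  have h5 := abs_le.1 h3
  have h6 : t * |F 1 x0| ≤ 5 / 2 := by
    have e : t * |F 1 x0| = |t * F 1 x0| := by rw [abs_mul, abs_of_pos ht0]
    rw [e]
    apply abs_le.2; constructor <;> linarith
  have h7 : |F 1 x0| = 2 * a * (t * |F 1 x0|) := by
    linear_combination (-2 * |F 1 x0|) * hta
  rw [h7]
  norm_num
  nlinarith

lemma case_k2_four {a : ℝ} (ha : 1 ≤ a) {F : ℕ → ℝ → ℝ} (hF : Ad 4 a F)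
    {x0 : ℝ} (hx : x0 ∈ Ico (0:ℝ) 1) (h0 : F (2 + 1) x0 = 0) :
    |F 2 x0| ≤ mval 4 2 1 (a ^ 4 * sigmaN 4) := by
  have ha0 : 0 < a := by linarith
  have hx1 := hx.2
  have hx00 := hx.1
  have h2 := lower_spline (n := 4) (k := 2) (by omega) (by omega) ha (c := 53/100) (by norm_num) (by
      rw [cA_2]; norm_num [Nat.factorial])
  refine le_trans ?_ h2
  rw [cheb_2]
  obtain ⟨t, ht⟩ : ∃ t, t = 3 / (10 * a) := ⟨_, rfl⟩
  have hta : t * a = 3 / 10 := by rw [ht]; field_simp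
  have ht0 : 0 < t := by rw [ht]; positivity
  have ht1 : t ≤ 3 / 10 := by nlinarith
  have h3 := taylor_tow (x0 := x0) ⟨by linarith, hx1.le⟩ 4 hF.tow hF.bn (x := x0 - t)
    ⟨by linarith, by linarith⟩
  have h3' := taylor_tow (x0 := x0) ⟨by linarith, hx1.le⟩ 4 hF.tow hF.bn (x := x0 - 3 * t)
    ⟨by linarith, by linarith⟩
  have hb1 := abs_le.1 (hF.b0 x0 ⟨by linarith, hx1.le⟩)
  have hb2 := abs_le.1 (hF.b0 (x0 - t) ⟨by linarith, by linarith⟩)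
  have hb3 := abs_le.1 (hF.b0 (x0 - 3 * t) ⟨by linarith, by linarith⟩)
  rw [sigmaN_4, show x0 - t - x0 = -t by ring, abs_neg, abs_of_pos ht0] at h3
  rw [sigmaN_4, show x0 - 3 * t - x0 = -(3 * t) by ring, abs_neg, abs_of_pos (show 0 < 3 * t by linarith)] at h3'
  norm_num [Finset.sum_range_succ, Nat.factorial, show F 3 x0 = 0 from h0] at h3 h3'
  have e4 : a ^ 4 * t ^ 4 = 81 / 10000 := by
    rw [← mul_pow, mul_comm, hta]; norm_num
  have h4 : a ^ 4 * 192 * (t ^ 4 / 24) = 648 / 10000 := by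
    linear_combination 8 * e4
  have h4' : a ^ 4 * 192 * ((3 * t) ^ 4 / 24) = 648 / 10000 * 81 := by
    linear_combination 648 * e4
  rw [h4] at h3
  rw [h4'] at h3'
  have h5 := abs_le.1 h3
  have h5' := abs_le.1 h3'
  have h6 : t ^ 2 * |F 2 x0| ≤ (6 + 84 * (648 / 10000)) / 3 := by
    have e : t ^ 2 * |F 2 x0| = |t ^ 2 * F 2 x0| := by rw [abs_mul, abs_of_pos (pow_pos ht0 2)]
    rw [e]
    apply abs_le.2; constructor <;> nlinarith
  have h7 : |F 2 x0| = 100 / 9 * a ^ 2 * (t ^ 2 * |F 2 x0|) := by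
    linear_combination (-100/9 * |F 2 x0|) * ((t * a + 3/10) * hta)
  rw [h7]
  norm_num
  nlinarith [pow_pos ha0 2]


lemma two_point_even {p q x0 B t : ℝ} {m : ℕ} (hm : m = 5 ∨ m = 6) (ht : 0 < t)
    (h1 : p ≤ x0 - 2 * t) (h2 : x0 + 2 * t ≤ q) {F : ℕ → ℝ → ℝ} (hF : Tow m p q F)
    (hb : ∀ x ∈ Icc p q, |F 0 x| ≤ 1) (hB : ∀ x ∈ Icc p q, |F m x| ≤ B) :
    12 * t ^ 2 * |F 2 x0| ≤ 64 + 2 * B * t ^ m * (16 + 2 ^ m) / (m.factorial : ℝ) := by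
  have e0 : |t| = t := abs_of_pos ht
  have hx0 : x0 ∈ Icc p q := ⟨by linarith, by linarith⟩
  have m1 : x0 + t ∈ Icc p q := ⟨by linarith, by linarith⟩
  have m2 : x0 - t ∈ Icc p q := ⟨by linarith, by linarith⟩
  have m3 : x0 + 2 * t ∈ Icc p q := ⟨by linarith, by linarith⟩
  have m4 : x0 - 2 * t ∈ Icc p q := ⟨by linarith, by linarith⟩
  have t1 := abs_le.1 (taylor_tow hx0 m hF hB m1)
  have t2 := abs_le.1 (taylor_tow hx0 m hF hB m2)
  have t3 := abs_le.1 (taylor_tow hx0 m hF hB m3)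
  have t4 := abs_le.1 (taylor_tow hx0 m hF hB m4)
  have b0 := abs_le.1 (hb x0 hx0)
  have b1 := abs_le.1 (hb _ m1)
  have b2 := abs_le.1 (hb _ m2)
  have b3 := abs_le.1 (hb _ m3)
  have b4 := abs_le.1 (hb _ m4)
  have a1 : |x0 + t - x0| = t := by rw [show x0 + t - x0 = t by ring, e0]
  have a2 : |x0 - t - x0| = t := by rw [show x0 - t - x0 = -t by ring, abs_neg, e0]
  have a3 : |x0 + 2 * t - x0| = 2 * t := by
    rw [show x0 + 2 * t - x0 = 2 * t by ring, abs_of_pos (by linarith)]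
  have a4 : |x0 - 2 * t - x0| = 2 * t := by
    rw [show x0 - 2 * t - x0 = -(2 * t) by ring, abs_neg, abs_of_pos (by linarith)]
  rw [a1, show x0 + t - x0 = t by ring] at t1
  rw [a2, show x0 - t - x0 = -t by ring] at t2
  rw [a3, show x0 + 2 * t - x0 = 2 * t by ring] at t3
  rw [a4, show x0 - 2 * t - x0 = -(2 * t) by ring] at t4
  have e : 12 * t ^ 2 * |F 2 x0| = |12 * t ^ 2 * F 2 x0| := by
    rw [abs_mul, abs_of_pos (show 0 < 12 * t ^ 2 by positivity)]
  rw [e]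
  rcases hm with rfl | rfl
  · simp only [Finset.sum_range_succ, Finset.sum_range_zero, Nat.factorial] at t1 t2 t3 t4 ⊢
    push_cast at t1 t2 t3 t4 ⊢
    ring_nf at t1 t2 t3 t4 b1 b2 b3 b4 ⊢
    apply abs_le.2
    constructor <;> linarith
  · simp only [Finset.sum_range_succ, Finset.sum_range_zero, Nat.factorial] at t1 t2 t3 t4 ⊢
    push_cast at t1 t2 t3 t4 ⊢
    ring_nf at t1 t2 t3 t4 b1 b2 b3 b4 ⊢
    apply abs_le.2
    constructor <;> linarith

lemma Ad.six {n : ℕ} (hn : 6 ≤ n) {a : ℝ} (ha : 0 ≤ a) (ha2 : a ≤ 2) {F : ℕ → ℝ → ℝ}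
    (hF : Ad n a F) : ∀ x ∈ Icc (-1:ℝ) 1, |F 6 x| ≤ 64 * chebDeriv n 6 1 := by
  have key : ∀ F, Ad n a F → ∀ x ∈ Icc (0:ℝ) 1, |F 6 x| ≤ 64 * chebDeriv n 6 1 := by
    intro F hF x hx
    have := hF.markov (by omega) ha hx.2 (β := 1/2) (by norm_num) (by linarith [hx.1])
      (by linarith) hn
    norm_num at this
    linarith
  intro x hx
  rcases le_total 0 x with h | h
  · exact key F hF x ⟨h, hx.2⟩
  · have := key _ hF.reflect (-x) ⟨by linarith, by linarith [hx.1]⟩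
    simpa [abs_mul] using this

lemma cheb_six_le {n : ℕ} (hn : 6 ≤ n) : chebDeriv n 6 1 ≤ (n:ℝ) ^ 12 / 10395 := by
  rw [cheb_one]
  have h1 : cD 6 = 10395 := by unfold cD; norm_num [Finset.prod_range_succ]
  rw [h1]
  gcongr
  unfold cA
  calc _ ≤ ∏ l ∈ Finset.range 6, (n:ℝ) ^ 2 := by
        apply Finset.prod_le_prod
        · intro l hl; exact (cA_factor_pos (by have := Finset.mem_range.1 hl; omega)).le
        · intro l hl; nlinarith [sq_nonneg (l:ℝ)]
    _ = _ := by simp; ring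

lemma case_k2_near {n : ℕ} (hn : 6 ≤ n) {a : ℝ} (ha : 1 ≤ a) {F : ℕ → ℝ → ℝ} (hF : Ad n a F)
    {x0 : ℝ} (hx : x0 ∈ Ico (0:ℝ) 1) (h0 : F (2 + 1) x0 = 0) (hc : (1 + x0) / 2 * a ≤ 1) :
    |F 2 x0| ≤ mval n 2 1 (a ^ n * sigmaN n) := by
  have ha0 : 0 < a := by linarith
  have hn6 : (6:ℝ) ≤ n := by exact_mod_cast hn
  have hsp := sigmaN_pos n
  have hx1 := hx.2
  have hx00 := hx.1
  refine le_trans ?_ (lower_T (n := n) (k := 2) (by omega) (by omega) ha)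
  by_cases hx2 : 4 / 3 ≤ (1 + x0) ^ 2
  · have hS := starP_simple (n := n) (k := 2) (by omega) (by omega) hsp (by
      push_cast; nlinarith)
    have h1 := hF.star hS hx1.le (β := (1 + x0) / 2) (by linarith) le_rfl (by
      have : ((1 + x0) / 2 * a) ^ n ≤ 1 := pow_le_one₀ (by positivity) hc
      nlinarith) h0
    norm_num at h1
    nlinarith [abs_nonneg (F 2 x0)]
  · push Not at hx2
    have hx3 : x0 ≤ 16 / 100 := by nlinarith
    have ha2 : a ≤ 2 := by nlinarith
    have hn2 : (36:ℝ) ≤ (n:ℝ) ^ 2 := by nlinarith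
    obtain ⟨t, ht⟩ : ∃ t, t = 5 / (n:ℝ) ^ 2 := ⟨_, rfl⟩
    have htn : t * (n:ℝ) ^ 2 = 5 := by rw [ht]; field_simp
    have ht0 : 0 < t := by rw [ht]; positivity
    have ht1 : t ≤ 5 / 36 := by nlinarith
    have h1 := two_point_even (m := 6) (Or.inr rfl) ht0 (x0 := x0) (p := -1) (q := 1)
      (by linarith) (by linarith) (hF.tow.mono hn) hF.b0 (hF.six hn ha0.le ha2)
    have h2 := cheb_six_le hn
    have h3 : t ^ 6 * (n:ℝ) ^ 12 = 15625 := by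
      have : t ^ 6 * (n:ℝ) ^ 12 = (t * (n:ℝ) ^ 2) ^ 6 := by ring
      rw [this, htn]; norm_num
    have h4 : t ^ 6 * chebDeriv n 6 1 ≤ 15625 / 10395 := by
      calc t ^ 6 * chebDeriv n 6 1 ≤ t ^ 6 * ((n:ℝ) ^ 12 / 10395) :=
            mul_le_mul_of_nonneg_left h2 (by positivity)
        _ = _ := by rw [← h3]; ring
    have h5 : 12 * t ^ 2 * |F 2 x0| ≤ 854 / 10 := by
      refine h1.trans ?_
      norm_num [Nat.factorial]
      nlinarith
    have h6 : |F 2 x0| = (n:ℝ) ^ 4 / 300 * (12 * t ^ 2 * |F 2 x0|) := by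
      have : t ^ 2 * (n:ℝ) ^ 4 = 25 := by
        have : t ^ 2 * (n:ℝ) ^ 4 = (t * (n:ℝ) ^ 2) ^ 2 := by ring
        rw [this, htn]; norm_num
      linear_combination (-|F 2 x0| / 25) * this
    rw [h6, cheb_2]
    have h7 : (n:ℝ) ^ 4 / 300 * (12 * t ^ 2 * |F 2 x0|) ≤ (n:ℝ) ^ 4 / 300 * (854 / 10) :=
      mul_le_mul_of_nonneg_left h5 (by positivity)
    refine h7.trans ?_
    nlinarith

lemma case_k2_five {a : ℝ} (ha : 1 ≤ a) {F : ℕ → ℝ → ℝ} (hF : Ad 5 a F)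
    {x0 : ℝ} (hx : x0 ∈ Ico (0:ℝ) 1) (h0 : F (2 + 1) x0 = 0) :
    |F 2 x0| ≤ mval 5 2 1 (a ^ 5 * sigmaN 5) := by
  have ha0 : 0 < a := by linarith
  have hx1 := hx.2
  have hx00 := hx.1
  have hS := starP_simple (n := 5) (k := 2) (by omega) (by omega) (s := 1280) (by norm_num) (by
      rw [sigmaN_5]; norm_num)
  rw [cheb_2] at hS
  norm_num at hS
  by_cases hc : 92 / 100 ≤ (1 + x0) / 2 * a
  · have hβ : 92 / 100 / a ≤ (1 + x0) / 2 := by rwa [div_le_iff₀ ha0]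
    have h1 := hF.star hS hx1.le (β := 92 / 100 / a) (by positivity) hβ (by
      rw [div_mul_cancel₀ _ ha0.ne', sigmaN_5]; norm_num) h0
    have h2 := lower_spline (n := 5) (k := 2) (by omega) (by omega) ha (c := 394/1000)
      (by norm_num) (by rw [cA_2]; norm_num [Nat.factorial])
    refine le_trans ?_ h2
    rw [cheb_2, div_pow, div_mul_eq_mul_div, div_le_iff₀ (by positivity)] at *
    norm_num at h1 ⊢
    nlinarith [pow_pos ha0 2]
  · push Not at hc
    refine le_trans ?_ (lower_T (n := 5) (k := 2) (by omega) (by omega) ha)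
    rw [cheb_2]
    by_cases hx2 : 4 / 3 ≤ (1 + x0) ^ 2
    · have h1 := hF.star hS hx1.le (β := (1 + x0) / 2) (by linarith) le_rfl (by
        have : ((1 + x0) / 2 * a) ^ 5 ≤ (92/100) ^ 5 := pow_le_pow_left₀ (by positivity) hc.le 5
        rw [sigmaN_5]; nlinarith) h0
      norm_num at h1 ⊢
      nlinarith [abs_nonneg (F 2 x0)]
    · push Not at hx2
      have hx3 : x0 ≤ 16 / 100 := by nlinarith
      have ha2 : a ≤ 2 := by nlinarith
      have ha5 : a ^ 5 ≤ 2 ^ 5 := pow_le_pow_left₀ ha0.le ha2 5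
      have h1 := two_point_even (m := 5) (Or.inl rfl) (t := 1/4) (by norm_num) (x0 := x0) (p := -1)
        (q := 1) (by linarith) (by linarith) hF.tow hF.b0 hF.bn
      rw [sigmaN_5] at h1
      norm_num [Nat.factorial] at h1 ⊢
      linarith

lemma case_k2_far {n : ℕ} (hn : 6 ≤ n) {v : ℝ} (hv : 0 ≤ v)
    (hS : StarP n 2 (sigmaN n) (v * chebDeriv n 2 1))
    (hv2 : (v * cA n 2) ^ n ≤ (((2 * n).factorial : ℝ) / 2) ^ 2)
    {a : ℝ} (ha : 1 ≤ a) {F : ℕ → ℝ → ℝ} (hF : Ad n a F)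
    {x0 : ℝ} (hx : x0 ∈ Ico (0:ℝ) 1) (h0 : F (2 + 1) x0 = 0) :
    |F 2 x0| ≤ mval n 2 1 (a ^ n * sigmaN n) := by
  have ha0 : 0 < a := by linarith
  by_cases hc : (1 + x0) / 2 * a ≤ 1
  · exact case_k2_near hn ha hF hx h0 hc
  · push Not at hc
    have hβ : 1 / a ≤ (1 + x0) / 2 := by rw [div_le_iff₀ ha0]; exact hc.le
    have h1 := hF.star hS hx.2.le (β := 1 / a) (by positivity) hβ (by
      rw [div_mul_cancel₀ _ ha0.ne']; simp) h0
    refine le_trans ?_ (lower_spline (n := n) (k := 2) (by omega) (by omega) ha hv hv2)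
    rw [div_pow, one_pow, div_mul_eq_mul_div, div_le_iff₀ (by positivity), one_mul] at h1
    linarith

lemma case_k2_mid {n : ℕ} (hn : 6 ≤ n) (hn2 : n ≤ 35)
    {a : ℝ} (ha : 1 ≤ a) {F : ℕ → ℝ → ℝ} (hF : Ad n a F)
    {x0 : ℝ} (hx : x0 ∈ Ico (0:ℝ) 1) (h0 : F (2 + 1) x0 = 0) :
    |F 2 x0| ≤ mval n 2 1 (a ^ n * sigmaN n) := by
  have hn6 : (6:ℝ) ≤ n := by exact_mod_cast hn
  have hS := starP_simple (n := n) (k := 2) (by omega) (by omega) (sigmaN_pos n) (by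
    push_cast; nlinarith [sigmaN_pos n])
  refine case_k2_far hn (v := 1/3) (by norm_num) ?_ ?_ ha hF hx h0
  · convert hS using 1
    push_cast; ring
  · rw [cA_2]
    interval_cases n <;> norm_num [Nat.factorial]


lemma three_upper_aux {p q y0 : ℝ} {G : ℕ → ℝ → ℝ} (hG : Tow 3 p q G)
    (h0 : ∀ x ∈ Icc p q, |G 0 x| ≤ 1) (h3 : ∀ x ∈ Icc p q, |G 3 x| ≤ 24) (hpq : 2 ≤ q - p)
    (hy : y0 ≤ q) (hs : q - y0 < 1 / 2) : G 2 y0 ≤ 24 := by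
  obtain ⟨s, hsd⟩ : ∃ s, s = q - y0 := ⟨_, rfl⟩
  have hs0 : 0 ≤ s := by linarith
  have hs1 : s < 1 / 2 := by linarith
  have hy0 : y0 ∈ Icc p q := ⟨by linarith, hy⟩
  set μ := G 2 y0 with hμ
  set Q : ℝ[X] := C (G 0 y0) + C (G 1 y0) * (X - C y0) + C (μ / 2) * (X - C y0) ^ 2
    + C 4 * (X - C y0) ^ 3 with hQ
  have q0 : ∀ x, (derivative^[0] Q).eval x = G 0 y0 + G 1 y0 * (x - y0) + μ / 2 * (x - y0) ^ 2
      + 4 * (x - y0) ^ 3 := by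
    intro x; simp [hQ]
  have q1 : ∀ x, (derivative^[1] Q).eval x = G 1 y0 + μ * (x - y0) + 12 * (x - y0) ^ 2 := by
    intro x; simp [hQ, derivative_pow]; ring
  have q2 : ∀ x, (derivative^[2] Q).eval x = μ + 24 * (x - y0) := by
    intro x; simp [hQ, derivative_pow]; ring
  have hR := hG.lin (tow_poly Q 3 p q) 1 (-1)
  set R : ℕ → ℝ → ℝ := fun i x => 1 * G i x + (-1) * (derivative^[i] Q).eval x with hRd
  have r0 : R 0 y0 = 0 := by simp only [hRd, q0]; ring
  have r1 : R 1 y0 = 0 := by simp only [hRd, q1]; ring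
  have r2 : ∀ x ∈ Icc p y0, 0 ≤ R 2 x := by
    intro x hx
    simp only [hRd, q2]
    rcases eq_or_lt_of_le hx.2 with h | h
    · rw [h]; linarith
    · obtain ⟨z, hz, hz2⟩ := hG.mvt (i := 2) (by omega) hx.1 h hy
      have h4 := abs_le.1 (h3 z ⟨by linarith [hx.1, hz.1], by linarith [hz.2]⟩)
      norm_num at hz2
      nlinarith [h4.1, h4.2]
  have mono1 : ∀ x y, p ≤ x → x < y → y ≤ y0 → R 1 x ≤ R 1 y := by
    intro x y hx hxy hyy
    obtain ⟨z, hz, hz2⟩ := hR.mvt (i := 1) (by omega) hx hxy (hyy.trans hy)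
    have := r2 z ⟨by linarith [hz.1], by linarith [hz.2]⟩
    norm_num at hz2
    nlinarith
  have hl : p ≤ q - 3 / 2 := by linarith
  have rl : 0 ≤ R 0 (q - 3 / 2) := by
    obtain ⟨z, hz, hz2⟩ := hR.mvt (i := 0) (x := q - 3 / 2) (y := y0) (by omega) hl (by linarith) hy
    have := mono1 z y0 (by linarith [hz.1]) hz.2 le_rfl
    rw [r0] at hz2
    rw [r1] at this
    norm_num at hz2
    nlinarith
  have rm : 3 * R 0 (q - 1 / 2) ≤ R 0 (q - 3 / 2) := by
    obtain ⟨z, hz, hz2⟩ := hR.mvt (i := 0) (x := q - 3 / 2) (y := q - 1 / 2) (by omega) hl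
      (by linarith) (by linarith)
    obtain ⟨w, hw, hw2⟩ := hR.mvt (i := 0) (x := q - 1 / 2) (y := y0) (by omega) (by linarith)
      (by linarith) hy
    have h5 := mono1 z w (by linarith [hz.1]) (by linarith [hz.2, hw.1]) hw.2.le
    rw [r0] at hw2
    norm_num at hz2 hw2
    have e2 : y0 - (q - 1 / 2) = 1 / 2 - s := by rw [hsd]; ring
    rw [e2] at hw2
    have h6 : R 1 z * (1 / 2 - s) ≤ R 1 w * (1 / 2 - s) :=
      mul_le_mul_of_nonneg_right h5 (by linarith)
    rw [hw2, hz2] at h6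
    nlinarith
  have ht := taylor_tow hy0 3 hG h3 (x := q) ⟨by linarith, le_rfl⟩
  rw [← hsd, abs_of_nonneg hs0] at ht
  norm_num [Finset.sum_range_succ, Nat.factorial] at ht
  have ht2 := (abs_le.1 ht).1
  have b1 := (abs_le.1 (h0 q ⟨by linarith, le_rfl⟩)).2
  have b2 := (abs_le.1 (h0 (q - 1 / 2) ⟨by linarith, by linarith⟩)).1
  have b3 := (abs_le.1 (h0 (q - 3 / 2) ⟨by linarith, by linarith⟩)).2
  simp only [hRd, q0] at rm
  have e1 : q - 1 / 2 - y0 = s - 1 / 2 := by rw [hsd]; ring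
  have e2 : q - 3 / 2 - y0 = s - 3 / 2 := by rw [hsd]; ring
  rw [e1, e2] at rm
  have hfin : μ ≤ 24 - 24 * s + 64 / 3 * s ^ 3 := by
    rw [← hμ] at ht2
    ring_nf at ht2 rm b1 b2 b3 ⊢
    linarith
  nlinarith [mul_nonneg hs0 (show 0 ≤ 9 / 8 - s ^ 2 by nlinarith)]

lemma three_upper {p q y0 : ℝ} {G : ℕ → ℝ → ℝ} (hG : Tow 3 p q G)
    (h0 : ∀ x ∈ Icc p q, |G 0 x| ≤ 1) (h3 : ∀ x ∈ Icc p q, |G 3 x| ≤ 24) (hpq : 2 ≤ q - p)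
    (hy : y0 ≤ q) (hy2 : p + 1 ≤ y0) : |G 2 y0| ≤ 24 := by
  by_cases hs : q - y0 < 1 / 2
  · have h1 := three_upper_aux hG h0 h3 hpq hy hs
    have h2 := three_upper_aux hG.neg (by simpa using h0) (by simpa using h3) hpq hy hs
    exact abs_le.2 ⟨by linarith, h1⟩
  · push Not at hs
    have m0 : y0 ∈ Icc p q := ⟨by linarith, hy⟩
    have m1 : y0 + 1 / 2 ∈ Icc p q := ⟨by linarith, by linarith⟩
    have m2 : y0 - 1 / 2 ∈ Icc p q := ⟨by linarith, by linarith⟩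
    have t1 := taylor_tow m0 3 hG h3 m1
    have t2 := taylor_tow m0 3 hG h3 m2
    rw [show y0 + 1 / 2 - y0 = 1 / 2 by ring, abs_of_pos (by norm_num : (0:ℝ) < 1 / 2)] at t1
    rw [show y0 - 1 / 2 - y0 = -(1 / 2) by ring, abs_neg, abs_of_pos (by norm_num : (0:ℝ) < 1 / 2)] at t2
    simp only [Finset.sum_range_succ, Finset.sum_range_zero, Nat.factorial] at t1 t2
    norm_num at t1 t2
    have t1 := abs_le.1 t1
    have t2 := abs_le.1 t2
    have b0 := abs_le.1 (h0 _ m0)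
    have b1 := abs_le.1 (h0 _ m1)
    have b2 := abs_le.1 (h0 _ m2)
    norm_num at b1 b2
    apply abs_le.2
    constructor <;> linarith [t1.1, t1.2, t2.1, t2.2]

lemma glue_deriv {f g : ℝ → ℝ} {c d : ℝ} (hf : HasDerivAt f d c) (hg : HasDerivAt g d c)
    (hfg : f c = g c) : HasDerivAt (fun x => if c ≤ x then f x else g x) d c := by
  have h1 : HasDerivWithinAt (fun x => if c ≤ x then f x else g x) d (Ici c) c := by
    refine hf.hasDerivWithinAt.congr (fun x hx => ?_) (by simp)
    simp only [mem_Ici] at hx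
    simp [hx]
  have h2 : HasDerivWithinAt (fun x => if c ≤ x then f x else g x) d (Iic c) c := by
    refine hg.hasDerivWithinAt.congr (fun x hx => ?_) (by simp [hfg])
    rcases eq_or_lt_of_le (show x ≤ c from hx) with h | h
    · simp [h, hfg]
    · simp [not_le.2 h]
  have := h1.union h2
  rwa [Ici_union_Iic, hasDerivWithinAt_univ] at this

lemma glue_deriv_all {f f1 g g1 : ℝ → ℝ} {c : ℝ} (hf : ∀ x, HasDerivAt f (f1 x) x)
    (hg : ∀ x, HasDerivAt g (g1 x) x) (h0 : f c = g c) (h1 : f1 c = g1 c) (x : ℝ) :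
    HasDerivAt (fun x => if c ≤ x then f x else g x) (if c ≤ x then f1 x else g1 x) x := by
  rcases lt_trichotomy x c with h | h | h
  · rw [if_neg (not_le.2 h)]
    refine (hg x).congr_of_eventuallyEq ?_
    filter_upwards [Iio_mem_nhds h] with z hz
    rw [if_neg (not_le.2 hz)]
  · subst h
    rw [if_pos le_rfl]
    exact glue_deriv (hf x) (by rw [h1]; exact hg x) h0
  · rw [if_pos h.le]
    refine (hf x).congr_of_eventuallyEq ?_
    filter_upwards [Ioi_mem_nhds h] with z hz
    rw [if_pos (le_of_lt hz)]

lemma euler_exists (N : ℕ) : ∃ G0 G1 G2 : ℝ → ℝ, (∀ x, HasDerivAt G0 (G1 x) x) ∧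
    (∀ x, HasDerivAt G1 (G2 x) x) ∧ (∀ x y, x ≤ y → |G2 y - G2 x| ≤ 24 * (y - x)) ∧
    (∀ x ∈ Icc (-(N:ℝ) - 1 / 2) 1, |G0 x| ≤ 1) ∧
    (∀ x, -1 / 2 ≤ x → G0 x = 4 * x ^ 3 - 3 * x ∧ G1 x = 12 * x ^ 2 - 3 ∧ G2 x = 24 * x) := by
  have d0 : ∀ x : ℝ, HasDerivAt (fun x : ℝ => 4 * x ^ 3 - 3 * x) (12 * x ^ 2 - 3) x := by
    intro x
    have := ((hasDerivAt_pow 3 x).const_mul 4).sub ((hasDerivAt_id x).const_mul 3)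
    refine this.congr_deriv ?_
    norm_num; ring
  have d1 : ∀ x : ℝ, HasDerivAt (fun x : ℝ => 12 * x ^ 2 - 3) (24 * x) x := by
    intro x
    have := ((hasDerivAt_pow 2 x).const_mul 12).sub_const 3
    refine this.congr_deriv ?_
    norm_num; ring
  have bT : ∀ x ∈ Icc (-1/2:ℝ) 1, |4 * x ^ 3 - 3 * x| ≤ 1 := by
    intro x hx
    apply abs_le.2
    constructor
    · nlinarith [mul_nonneg (show 0 ≤ x + 1 by linarith [hx.1]) (sq_nonneg (2 * x - 1))]
    · nlinarith [mul_nonneg (show 0 ≤ 1 - x by linarith [hx.2]) (sq_nonneg (2 * x + 1))]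
  induction N with
  | zero =>
    refine ⟨_, _, _, d0, d1, ?_, ?_, fun x _ => ⟨rfl, rfl, rfl⟩⟩
    · intro x y hxy
      rw [show 24 * y - 24 * x = 24 * (y - x) by ring, abs_of_nonneg (by linarith)]
    · intro x hx
      apply bT x
      norm_num at hx ⊢
      exact hx
  | succ N ih =>
    obtain ⟨G0, G1, G2, h1, h2, h3, h4, h5⟩ := ih
    have hh := h5 (1/2) (by norm_num)
    have s0 : ∀ x, HasDerivAt (fun x => -G0 (x + 1)) (-G1 (x + 1)) x := fun x =>
      ((h1 (x + 1)).comp_add_const x 1).neg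
    have s1 : ∀ x, HasDerivAt (fun x => -G1 (x + 1)) (-G2 (x + 1)) x := fun x =>
      ((h2 (x + 1)).comp_add_const x 1).neg
    refine ⟨fun x => if -1/2 ≤ x then 4 * x ^ 3 - 3 * x else -G0 (x + 1),
      fun x => if -1/2 ≤ x then 12 * x ^ 2 - 3 else -G1 (x + 1),
      fun x => if -1/2 ≤ x then 24 * x else -G2 (x + 1), ?_, ?_, ?_, ?_, ?_⟩
    · exact glue_deriv_all d0 s0 (by norm_num at hh ⊢; rw [hh.1]; norm_num)
        (by norm_num at hh ⊢; rw [hh.2.1])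
    · exact glue_deriv_all d1 s1 (by norm_num at hh ⊢; rw [hh.2.1])
        (by norm_num at hh ⊢; rw [hh.2.2])
    · intro x y hxy
      by_cases hx : -1/2 ≤ x
      · simp only [if_pos hx, if_pos (hx.trans hxy)]
        rw [show 24 * y - 24 * x = 24 * (y - x) by ring, abs_of_nonneg (by linarith)]
      · by_cases hy : -1/2 ≤ y
        · simp only [if_neg hx, if_pos hy]
          push Not at hx
          have h6 := abs_le.1 (h3 (x + 1) (1/2) (by linarith))
          rw [hh.2.2] at h6
          apply abs_le.2
          constructor <;> linarith [h6.1, h6.2]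
        · simp only [if_neg hx, if_neg hy]
          have h6 := abs_le.1 (h3 (x + 1) (y + 1) (by linarith))
          apply abs_le.2
          constructor <;> linarith [h6.1, h6.2]
    · intro x hx
      by_cases hx2 : -1/2 ≤ x
      · simp only [if_pos hx2]; exact bT x ⟨hx2, hx.2⟩
      · simp only [if_neg hx2, abs_neg]
        push Not at hx2
        apply h4
        have := hx.1
        push_cast at this
        constructor <;> linarith
    · intro x hx
      simp [hx]

lemma three_lower {a : ℝ} (ha : 1 ≤ a) : 24 * a ^ 2 ≤ mval 3 2 1 (a ^ 3 * sigmaN 3) := by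
  have ha0 : 0 < a := by linarith
  have key : ∀ ε ∈ Ioc (0:ℝ) (1/2), a ^ 2 * (24 - 12 * ε) ≤ mval 3 2 1 (a ^ 3 * sigmaN 3) := by
    rintro ε ⟨hε0, hε1⟩
    obtain ⟨N, hN⟩ := exists_nat_ge (2 * a)
    obtain ⟨G0, G1, G2, h1, h2, h3, h4, h5⟩ := euler_exists N
    have hc : Continuous G0 := continuous_iff_continuousAt.2 (fun x => (h1 x).continuousAt)
    set Φ : ℝ → ℝ := fun x => ∫ t in (0:ℝ)..x, G0 t with hΦ
    have hΦd : ∀ x, HasDerivAt Φ (G0 x) x := fun x => hc.integral_hasStrictDerivAt 0 x |>.hasDerivAt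
    have st : ∀ (f f' : ℝ → ℝ), (∀ x, HasDerivAt f (f' x) x) → ∀ x,
        HasDerivAt (fun x => (f x - f (x - ε)) / ε) ((f' x - f' (x - ε)) / ε) x := by
      intro f f' hf x
      exact ((hf x).sub ((hf (x - ε)).comp_sub_const x ε)).div_const ε
    set H : ℕ → ℝ → ℝ := fun i => match i with
      | 0 => fun x => (Φ x - Φ (x - ε)) / ε
      | 1 => fun x => (G0 x - G0 (x - ε)) / ε
      | 2 => fun x => (G1 x - G1 (x - ε)) / ε
      | _ => fun x => (G2 x - G2 (x - ε)) / ε with hH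
    have hT : Tow 3 (-N) 1 H := by
      intro i hi x hx
      interval_cases i
      · exact (st Φ G0 hΦd x).hasDerivWithinAt
      · exact (st G0 G1 h1 x).hasDerivWithinAt
      · exact (st G1 G2 h2 x).hasDerivWithinAt
    have hm : ∀ x ∈ Icc (-1:ℝ) 1, a * x + (1 - a) ∈ Icc (-(N:ℝ)) 1 := by
      intro x hx
      constructor <;> nlinarith [hx.1, hx.2]
    have hA : Ad 3 a (fun i x => a ^ i * H i (a * x + (1 - a))) := by
      refine ⟨hT.affine a (1 - a) hm, fun x hx => ?_, fun x hx => ?_⟩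
      · have hx' := hm x hx
        obtain ⟨y, hy⟩ : ∃ y, y = a * x + (1 - a) := ⟨_, rfl⟩
        rw [← hy] at hx' ⊢
        obtain ⟨z, hz, hz2⟩ := exists_hasDerivAt_eq_slope Φ G0 (a := y - ε) (b := y) (by linarith)
          (fun x _ => (hΦd x).continuousAt.continuousWithinAt) (fun x _ => hΦd x)
        have e : H 0 y = G0 z := by
          rw [hz2]; simp [hH]
        rw [pow_zero, one_mul, e]
        exact h4 z ⟨by linarith [hz.1, hx'.1], by linarith [hz.2, hx'.2]⟩
      · rw [abs_mul, abs_of_pos (pow_pos ha0 3), sigmaN_3]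
        apply mul_le_mul_of_nonneg_left _ (pow_pos ha0 3).le
        obtain ⟨y, hy⟩ : ∃ y, y = a * x + (1 - a) := ⟨_, rfl⟩
        rw [← hy]
        simp only [hH]
        rw [abs_div, abs_of_pos hε0, div_le_iff₀ hε0]
        have := h3 (y - ε) y (by linarith)
        linarith
    have h6 := hA.le_mval (k := 2) (by omega) (by omega) ha
    refine le_trans ?_ h6
    refine le_trans ?_ (le_abs_self _)
    apply mul_le_mul_of_nonneg_left _ (by positivity)
    rw [show a * 1 + (1 - a) = 1 by ring]
    simp only [hH]
    rw [(h5 1 (by norm_num)).2.1, (h5 (1 - ε) (by linarith)).2.1, le_div_iff₀ hε0]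
    nlinarith
  by_contra hlt
  push Not at hlt
  set M := mval 3 2 1 (a ^ 3 * sigmaN 3)
  obtain ⟨ε, hε⟩ : ∃ ε, ε = min (1/2) ((24 * a ^ 2 - M) / (24 * a ^ 2)) := ⟨_, rfl⟩
  have hε0 : 0 < ε := by
    rw [hε]; apply lt_min (by norm_num)
    apply div_pos (by linarith) (by positivity)
  have h1 := key ε ⟨hε0, by rw [hε]; exact min_le_left _ _⟩
  have h2 : ε ≤ (24 * a ^ 2 - M) / (24 * a ^ 2) := by rw [hε]; exact min_le_right _ _
  rw [le_div_iff₀ (by positivity)] at h2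
  nlinarith

lemma case_k2_three {a : ℝ} (ha : 1 ≤ a) {F : ℕ → ℝ → ℝ} (hF : Ad 3 a F)
    {x0 : ℝ} (hx : x0 ∈ Ico (0:ℝ) 1) :
    |F 2 x0| ≤ mval 3 2 1 (a ^ 3 * sigmaN 3) := by
  have ha0 : 0 < a := by linarith
  have hm : ∀ y ∈ Icc (-a) a, a⁻¹ * y + 0 ∈ Icc (-1:ℝ) 1 := by
    intro y hy
    rw [add_zero, inv_mul_eq_div]
    exact ⟨by rw [le_div_iff₀ ha0]; linarith [hy.1], by rw [div_le_iff₀ ha0]; linarith [hy.2]⟩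
  have h1 := three_upper (hF.tow.affine (p' := -a) (q' := a) a⁻¹ 0 hm) (y0 := a * x0)
    (by intro y hy; simpa using hF.b0 _ (hm y hy))
    (by
      intro y hy
      have := hF.bn _ (hm y hy)
      rw [sigmaN_3] at this
      rw [abs_mul, abs_of_pos (pow_pos (inv_pos.2 ha0) 3)]
      calc _ ≤ a⁻¹ ^ 3 * (a ^ 3 * 24) := mul_le_mul_of_nonneg_left this (by positivity)
        _ = 24 := by field_simp)
    (by linarith) (by nlinarith [hx.2]) (by nlinarith [hx.1])
  refine le_trans ?_ (three_lower ha)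
  rw [show a⁻¹ * (a * x0) + 0 = x0 by field_simp; ring, abs_mul,
    abs_of_pos (pow_pos (inv_pos.2 ha0) 2), inv_pow, inv_mul_le_iff₀ (by positivity)] at h1
  linarith


lemma cheb_tan (n : ℕ) {θ : ℝ} (h0 : 0 < θ) (h1 : θ < Real.pi) :
    (Real.cos θ - 1) * chebDeriv n 1 (Real.cos θ)
      = -((n:ℝ) * Real.tan (θ / 2) * Real.sin (n * θ)) := by
  have hU := Polynomial.Chebyshev.U_real_cos θ ((n:ℤ) - 1)
  have e0 : ((((n:ℤ) - 1 : ℤ) : ℝ) + 1) * θ = n * θ := by push_cast; ring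
  rw [e0] at hU
  have hd : chebDeriv n 1 (Real.cos θ)
      = n * (Polynomial.Chebyshev.U ℝ ((n:ℤ) - 1)).eval (Real.cos θ) := by
    unfold chebDeriv
    simp [Polynomial.Chebyshev.T_derivative_eq_U]
  rw [hd, ← hU]
  set u := (Polynomial.Chebyshev.U ℝ ((n:ℤ) - 1)).eval (Real.cos θ)
  have hc : 0 < Real.cos (θ / 2) := Real.cos_pos_of_mem_Ioo ⟨by linarith, by linarith⟩
  have e1 : Real.sin θ = 2 * Real.sin (θ / 2) * Real.cos (θ / 2) := by
    rw [← Real.sin_two_mul]; ring_nf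
  have e2 : Real.cos θ = 1 - 2 * Real.sin (θ / 2) ^ 2 := by
    have := Real.cos_sq_add_sin_sq (θ / 2)
    have h3 : Real.cos θ = 2 * Real.cos (θ / 2) ^ 2 - 1 := by
      rw [← Real.cos_two_mul]; ring_nf
    linarith
  have e3 : Real.cos θ - 1 = - 2 * Real.sin (θ / 2) ^ 2 := by linarith
  rw [e3, e1, Real.tan_eq_sin_div_cos]
  field_simp

/-- angles of the comparison points (times `n`) -/
noncomputable def angShift (j : ℕ) : ℝ := if j = 0 then 0 else if j = 1 then 13 / 20 else 1

lemma angShift_nonneg (j : ℕ) : 0 ≤ angShift j := by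
  unfold angShift; split_ifs <;> norm_num

lemma angShift_le (j : ℕ) : angShift j ≤ 1 := by
  unfold angShift; split_ifs <;> norm_num

lemma angShift_lt (j : ℕ) : j * Real.pi + angShift j < (j + 1 : ℕ) * Real.pi + angShift (j + 1) := by
  have := Real.pi_gt_three
  have := angShift_le j
  have := angShift_nonneg (j + 1)
  push_cast
  linarith

set_option maxHeartbeats 1000000 in
lemma starP_big {n : ℕ} (hn : 36 ≤ n) :
    StarP n 2 (sigmaN n) (29 / 100 * chebDeriv n 2 1) := by
  intro F hF h0 hFs hF1
  obtain ⟨m, hm1, hm2⟩ : ∃ m : ℕ, 2 * n ≤ 3 * m ∧ 3 * m ≤ 2 * n + 2 := ⟨(2 * n + 2) / 3, by omega, by omega⟩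
  have hN : (36:ℝ) ≤ n := by exact_mod_cast hn
  have hM1 : 2 * (n:ℝ) ≤ 3 * m := by exact_mod_cast hm1
  have hM2 : 3 * (m:ℝ) ≤ 2 * n + 2 := by exact_mod_cast hm2
  have a3 : ∀ N : ℕ, chebDeriv N 3 1 = (N:ℝ) ^ 2 * ((N:ℝ) ^ 2 - 1) * ((N:ℝ) ^ 2 - 4) / 15 := by
    intro N
    rw [cheb_one]
    simp [cA, cD, Finset.prod_range_succ]
    norm_num
  have hs := sigmaN_pos n
  have msq1 : 4 / 9 * (n:ℝ) ^ 2 ≤ (m:ℝ) ^ 2 := by nlinarith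
  have msq2 : (m:ℝ) ^ 2 ≤ 4696 / 10000 * (n:ℝ) ^ 2 := by
    have h1 : (m:ℝ) ≤ 6852 / 10000 * n := by linarith
    have h2 : (m:ℝ) ^ 2 ≤ (6852 / 10000 * (n:ℝ)) ^ 2 := pow_le_pow_left₀ (by positivity) h1 2
    nlinarith
  have nsq : (1296:ℝ) ≤ (n:ℝ) ^ 2 := by nlinarith
  have T3 : 0 < chebDeriv n 3 1 := by
    rw [a3]
    have : 0 < (n:ℝ) ^ 2 - 1 := by linarith
    have : 0 < (n:ℝ) ^ 2 - 4 := by linarith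
    positivity
  have T2 : 0 < chebDeriv n 2 1 := by
    rw [cheb_2]
    have : 0 < (n:ℝ) ^ 2 - 1 := by linarith
    positivity
  have w3 : 8 / 100 * chebDeriv n 3 1 ≤ chebDeriv m 3 1 := by
    rw [a3, a3]
    generalize (n:ℝ) ^ 2 = u at *
    generalize (m:ℝ) ^ 2 = v at *
    have h1 : (44 / 100 * u) * (44 / 100 * (u - 1)) ≤ v * (v - 1) :=
      mul_le_mul (by linarith) (by linarith) (by linarith) (by linarith)
    have h2 : ((44 / 100 * u) * (44 / 100 * (u - 1))) * (44 / 100 * (u - 4)) ≤ v * (v - 1) * (v - 4) :=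
      mul_le_mul h1 (by linarith) (by linarith)
        (mul_nonneg (by linarith) (by linarith))
    have h3 : 0 ≤ u * (u - 1) * (u - 4) :=
      mul_nonneg (mul_nonneg (by linarith) (by linarith)) (by linarith)
    linarith
  have w2 : chebDeriv m 2 1 ≤ 2206 / 10000 * chebDeriv n 2 1 := by
    rw [cheb_2, cheb_2]
    generalize (n:ℝ) ^ 2 = u at *
    generalize (m:ℝ) ^ 2 = v at *
    have h1 : v * (v - 1) ≤ (4696 / 10000 * u) * (4696 / 10000 * (u - 1)) :=
      mul_le_mul (by linarith) (by linarith) (by linarith) (by linarith)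
    have h3 : 0 ≤ u * (u - 1) := mul_nonneg (by linarith) (by linarith)
    linarith
  set w := chebDeriv m 3 1 / chebDeriv n 3 1 with hw
  have hw1 : 8 / 100 ≤ w := by rw [hw, le_div_iff₀ T3]; exact w3
  have hw2 : w * chebDeriv n 3 1 = chebDeriv m 3 1 := by rw [hw]; field_simp
  set γ : ℝ := (7 / 10 + 3 / 10 * w) / 3 with hγ
  have hγ1 : 241 / 1000 ≤ γ := by rw [hγ]; linarith
  set P : ℝ[X] := Polynomial.C (7 / 10) * Polynomial.Chebyshev.T ℝ (n:ℤ) -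
    Polynomial.C γ * ((X - 1) * derivative (Polynomial.Chebyshev.T ℝ (n:ℤ))) +
    Polynomial.C (3 / 10) * Polynomial.Chebyshev.T ℝ (m:ℤ) with hP
  have hPd : ∀ j, 1 ≤ j → ∀ x, (derivative^[j] P).eval x = 7 / 10 * chebDeriv n j x -
      γ * ((x - 1) * chebDeriv n (j + 1) x + j * chebDeriv n j x) + 3 / 10 * chebDeriv m j x := by
    intro j hj x
    rw [hP, iterate_map_add, iterate_derivative_sub, iterate_derivative_C_mul,
      iterate_derivative_C_mul, iterate_derivative_C_mul, eval_add, eval_sub, eval_mul, eval_mul,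
      eval_mul, eval_C, eval_C, eval_C, der_X_sub_one_cheb n j hj]
    rfl
  have hPk : (derivative^[2] P).eval 1 ≤ 29 / 100 * chebDeriv n 2 1 := by
    rw [hPd 2 (by omega)]
    push_cast
    nlinarith
  refine le_trans ?_ hPk
  have hpi3 := Real.pi_gt_d4
  have hpi4 := Real.pi_lt_d4
  have hn0 : (0:ℝ) < n := by linarith
  have hang : ∀ j < n, (j * Real.pi + angShift j) / n < Real.pi := by
    intro j hj
    rw [div_lt_iff₀ hn0]
    have h1 : (j:ℝ) + 1 ≤ n := by exact_mod_cast hj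
    have := angShift_le j
    nlinarith
  have hang0 : ∀ j : ℕ, 0 ≤ (j * Real.pi + angShift j) / n := by
    intro j
    have := angShift_nonneg j
    positivity
  refine star_end (by omega) hF (tow_poly P n (-1) 1) hs ?_
    (τ := fun j => Real.cos ((j * Real.pi + angShift j) / n))
    (fun j _ => Real.cos_mem_Icc _)
    (fun j hj => Real.cos_lt_cos_of_nonneg_of_le_pi (hang0 j) (hang (j + 1) hj).le
      (div_lt_div_of_pos_right (angShift_lt j) hn0)) ?_ ?_ h0 hFs hF1
  · intro x hx
    change (derivative^[n] P).eval x ≤ -_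
    rw [hPd n (by omega), chebDeriv_top n (by omega), chebDeriv_big n (n+1) (by omega),
      chebDeriv_big m n (by omega)]
    have h5 : 2 ≤ γ * n := by nlinarith
    nlinarith
  · intro j hj
    change 1 ≤ (-1) ^ j * (derivative^[0] P).eval _
    rcases Nat.eq_zero_or_pos j with hj0 | hj0
    · subst hj0
      simp [hP, angShift]
      norm_num
    · set θ := (j * Real.pi + angShift j) / n with hθ
      have hj1 : (1:ℝ) ≤ j := by exact_mod_cast hj0
      have hd0 := angShift_nonneg j
      have hd1 := angShift_le j
      have hθ0 : 0 < θ := by rw [hθ]; positivity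
      have hθ1 : θ < Real.pi := hang j hj
      have hnθ : (n:ℝ) * θ = angShift j + j * Real.pi := by rw [hθ]; field_simp; ring
      have h1 : (Polynomial.Chebyshev.T ℝ (n:ℤ)).eval (Real.cos θ) = (-1) ^ j * Real.cos (angShift j) := by
        rw [Polynomial.Chebyshev.T_real_cos]
        push_cast
        rw [hnθ, Real.cos_add_nat_mul_pi]
      have h2 : (Polynomial.Chebyshev.T ℝ (m:ℤ)).eval (Real.cos θ) = Real.cos (m * θ) := by
        rw [Polynomial.Chebyshev.T_real_cos]
        push_cast
        rfl
      have h3 := cheb_tan n hθ0 hθ1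
      rw [hnθ, Real.sin_add_nat_mul_pi] at h3
      have h4 : (derivative (Polynomial.Chebyshev.T ℝ (n:ℤ))).eval (Real.cos θ)
        = chebDeriv n 1 (Real.cos θ) := rfl
      simp only [Function.iterate_zero, id, hP, eval_add, eval_sub, eval_mul, eval_C, eval_X,
        eval_one, h1, h2, h4, h3]
      have hsq : ((-1:ℝ) ^ j) * (-1) ^ j = 1 := by rw [← mul_pow]; simp
      have e5 : (-1:ℝ) ^ j * (7 / 10 * ((-1) ^ j * Real.cos (angShift j)) -
          γ * -((n:ℝ) * Real.tan (θ / 2) * ((-1) ^ j * Real.sin (angShift j))) +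
          3 / 10 * Real.cos (m * θ)) = 7 / 10 * Real.cos (angShift j) +
          γ * (n * Real.tan (θ / 2)) * Real.sin (angShift j) +
          3 / 10 * ((-1) ^ j * Real.cos (m * θ)) := by
        linear_combination (7 / 10 * Real.cos (angShift j) +
          γ * (n * Real.tan (θ / 2)) * Real.sin (angShift j)) * hsq
      rw [e5]
      have htan : θ / 2 ≤ Real.tan (θ / 2) := (Real.lt_tan (by linarith) (by linarith)).le
      have hnt : (j * Real.pi + angShift j) / 2 ≤ n * Real.tan (θ / 2) := by
        have : (n:ℝ) * (θ / 2) ≤ n * Real.tan (θ / 2) := mul_le_mul_of_nonneg_left htan hn0.le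
        linarith
      have hgt : 241 / 1000 * ((j * Real.pi + angShift j) / 2) ≤ γ * (n * Real.tan (θ / 2)) :=
        mul_le_mul hγ1 hnt (by positivity) (by linarith)
      have mθ1 : 2 / 3 * (j * Real.pi + angShift j) ≤ m * θ := by
        have : (m:ℝ) * θ = (m / n) * (j * Real.pi + angShift j) := by rw [hθ]; field_simp
        rw [this]
        refine mul_le_mul_of_nonneg_right ?_ (by positivity)
        rw [le_div_iff₀ hn0]; linarith
      have mθ2 : m * θ ≤ 6852 / 10000 * (j * Real.pi + angShift j) := by
        have : (m:ℝ) * θ = (m / n) * (j * Real.pi + angShift j) := by rw [hθ]; field_simp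
        rw [this]
        refine mul_le_mul_of_nonneg_right ?_ (by positivity)
        rw [div_le_iff₀ hn0]; linarith
      rcases Nat.lt_or_ge j 2 with hj2 | hj2
      · have hj' : j = 1 := by omega
        subst hj'
        have hA : angShift 1 = 13 / 20 := by simp [angShift]
        rw [hA] at hgt mθ1 mθ2 ⊢
        push_cast at hgt mθ1 mθ2 ⊢
        have c1 := Real.one_sub_sq_div_two_le_cos (x := 13 / 20)
        have s1 := Real.sin_gt_sub_cube (x := 13 / 20) (by norm_num)
        have c2 := Real.one_sub_sq_div_two_le_cos (x := Real.pi - m * θ)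
        rw [Real.cos_pi_sub] at c2
        have c3 : (Real.pi - m * θ) ^ 2 ≤ (62 / 100) ^ 2 := by
          apply sq_le_sq'
          · linarith
          · linarith
        have g2 : 45 / 100 ≤ γ * (n * Real.tan (θ / 2)) := by linarith
        have pr := mul_le_mul g2 s1.le (by norm_num) (by linarith)
        norm_num at pr c1 c2 ⊢
        linarith
      · have hA : angShift j = 1 := by unfold angShift; rw [if_neg (by omega), if_neg (by omega)]
        rw [hA] at hgt mθ1 mθ2 ⊢
        have c1 := Real.one_sub_sq_div_two_le_cos (x := 1)
        have s1 := Real.sin_gt_sub_cube (x := 1) (by norm_num)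
        rcases Nat.lt_or_ge j 3 with hj3 | hj3
        · have hj' : j = 2 := by omega
          subst hj'
          push_cast at hgt mθ1 mθ2 ⊢
          have c2 : 0 ≤ Real.cos (m * θ) := by
            rw [← Real.cos_sub_two_pi]
            exact Real.cos_nonneg_of_mem_Icc ⟨by linarith, by linarith⟩
          have g2 : 87 / 100 ≤ γ * (n * Real.tan (θ / 2)) := by linarith
          have pr := mul_le_mul g2 s1.le (by norm_num) (by linarith)
          norm_num at pr c1 c2 ⊢
          linarith
        · have hj3' : (3:ℝ) ≤ j := by exact_mod_cast hj3
          have c2 : -1 ≤ (-1:ℝ) ^ j * Real.cos (m * θ) := by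
            have : |(-1:ℝ) ^ j * Real.cos (m * θ)| ≤ 1 := by
              rw [abs_mul, abs_pow]; simpa using Real.abs_cos_le_one _
            exact (abs_le.1 this).1
          have g2 : 12 / 10 ≤ γ * (n * Real.tan (θ / 2)) := by nlinarith
          have pr := mul_le_mul g2 s1.le (by norm_num) (by linarith)
          norm_num at pr c1 c2 ⊢
          linarith
  · change (derivative^[2 + 1] P).eval 1 = 0
    rw [hPd (2 + 1) (by omega)]
    norm_num
    rw [← hw2, hγ]
    ring

lemma case_k2_large {n : ℕ} (hn : 36 ≤ n) {a : ℝ} (ha : 1 ≤ a) {F : ℕ → ℝ → ℝ} (hF : Ad n a F)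
    {x0 : ℝ} (hx : x0 ∈ Ico (0:ℝ) 1) (h0 : F (2 + 1) x0 = 0) :
    |F 2 x0| ≤ mval n 2 1 (a ^ n * sigmaN n) := by
  refine case_k2_far (by omega) (v := 29 / 100) (by norm_num) (starP_big hn) ?_ ha hF hx h0
  have h1 := fact_ge n (by omega)
  have hN : (36:ℝ) ≤ n := by exact_mod_cast hn
  rw [cA_2]
  calc (29 / 100 * ((n:ℝ) ^ 2 * ((n:ℝ) ^ 2 - 1))) ^ n ≤ ((541 / 1000 * (n:ℝ) ^ 2) ^ 2) ^ n := by
        apply pow_le_pow_left₀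
        · have : 0 ≤ (n:ℝ) ^ 2 - 1 := by nlinarith
          positivity
        · have : 0 ≤ (n:ℝ) ^ 2 := by positivity
          nlinarith
    _ = ((541 / 1000 * (n:ℝ) ^ 2) ^ n) ^ 2 := by rw [← pow_mul, ← pow_mul, mul_comm 2 n]
    _ ≤ _ := pow_le_pow_left₀ (by positivity) h1 2


/-- Karlin's conjecture in the spline range `σ > σ_n` for `k = 1, 2`. -/
theorem karlin_conjecture_spline_range_k_one_two (n k : ℕ) (σ : ℝ) (hn : 3 ≤ n)
    (hk : k = 1 ∨ k = 2) (hσ : sigmaN n < σ) :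
    (∀ x ∈ Icc (-1:ℝ) 1, mval n k x σ ≤ mval n k 1 σ) ∧
    sSup {y | ∃ x ∈ Icc (-1:ℝ) 1, y = mval n k x σ} = mval n k 1 σ := by
  obtain ⟨a, ha1, rfl⟩ := Ad.exists_sigma (by omega : 1 ≤ n) hσ
  have ha : 1 ≤ a := ha1.le
  apply finish
  rcases hk with rfl | rfl
  · refine main_red (by omega) ha ?_
    intro F hF x0 hx h0
    rcases Nat.lt_or_ge n 4 with h | h
    · obtain rfl : n = 3 := by omega
      exact case_k1_three ha hF hx h0
    · exact case_k1_big h ha hF hx h0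
  · refine main_red (by omega) ha ?_
    intro F hF x0 hx h0
    rcases Nat.lt_or_ge n 6 with h | h
    · obtain rfl | rfl | rfl : n = 3 ∨ n = 4 ∨ n = 5 := by omega
      · exact case_k2_three ha hF hx
      · exact case_k2_four ha hF hx h0
      · exact case_k2_five ha hF hx h0
    · rcases Nat.lt_or_ge n 36 with h2 | h2
      · exact case_k2_mid h (by omega) ha hF hx h0
      · exact case_k2_large h2 ha hF hx h0
end

section
/- Let σ > σ_n = 2^{n-1}·n!, and suppose the pair (n,k) satisfies one of: n ∈ {5,6} and 1 ≤ k ≤ n-2; or n ∈ {7,8,9} and 1 ≤ k ≤ n-3; or n ∈ {10,11} and 1 ≤ k ≤ 6. Then for every x ∈ [-1,1], m_k(x,σ) ≤ m_k(1,σ); that is, Karlin's conjecture sup_{x∈[-1,1]} m_k(x,σ) = m_k(1,σ) holds for these parameters. -/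
open Polynomial Set

namespace KarlinAux

/-- the basic interval -/
abbrev I : Set ℝ := Icc (-1:ℝ) 1

/-- `F 0, F 1, …, F n` is a chain of successive derivatives on `[-1,1]`. -/
def DSeq (n : ℕ) (F : ℕ → ℝ → ℝ) : Prop :=
  ∀ i < n, ∀ t ∈ I, HasDerivWithinAt (F i) (F (i+1) t) I t

lemma uniq : UniqueDiffOn ℝ I := uniqueDiffOn_Icc (by norm_num)

lemma dseq_iter {n : ℕ} {F : ℕ → ℝ → ℝ} (h : DSeq n F) :
    ∀ i ≤ n, ∀ t ∈ I, iteratedDerivWithin i (F 0) I t = F i t := by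
  intro i
  induction i with
  | zero => intro _ t _; simp
  | succ i ih =>
    intro hi t ht
    rw [iteratedDerivWithin_succ]
    have h1 : derivWithin (iteratedDerivWithin i (F 0) I) I t = derivWithin (F i) I t :=
      derivWithin_congr (fun s hs => ih (by omega) s hs) (ih (by omega) t ht)
    rw [h1]
    exact (h i (by omega) t ht).derivWithin (uniq t ht)

lemma dseq_of_ntimes {n : ℕ} {f : ℝ → ℝ} (h : NTimesDiffOn n f I) :
    DSeq n (fun i => iteratedDerivWithin i f I) := by
  intro i hi t ht
  have := (h i hi t ht).hasDerivWithinAt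
  simpa [iteratedDerivWithin_succ] using this

lemma memW_of_dseq {n : ℕ} {σ : ℝ} {F : ℕ → ℝ → ℝ} (h : DSeq n F)
    (h0 : ∀ x ∈ I, |F 0 x| ≤ 1) (hn : ∀ x ∈ I, |F n x| ≤ σ) : memW n σ (F 0) := by
  refine ⟨?_, h0, ?_⟩
  · intro i hi
    have : DifferentiableOn ℝ (F i) I := fun t ht => (h i hi t ht).differentiableWithinAt
    exact this.congr (fun t ht => dseq_iter h i hi.le t ht)
  · intro x hx
    rw [dseq_iter h n le_rfl x hx]
    exact hn x hx

lemma mvt {g g' : ℝ → ℝ} (hg : ∀ t ∈ I, HasDerivWithinAt g (g' t) I t) {a b : ℝ}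
    (ha : a ∈ I) (hb : b ∈ I) (hab : a < b) :
    ∃ ξ ∈ Ioo a b, g b - g a = g' ξ * (b - a) := by
  have hsub : Icc a b ⊆ I := Icc_subset_Icc ha.1 hb.2
  obtain ⟨ξ, hξ, h⟩ := exists_hasDerivAt_eq_slope g g' hab
    (fun t ht => ((hg t (hsub ht)).continuousWithinAt).mono hsub)
    (fun t ht => (hg t (hsub (Ioo_subset_Icc_self ht))).hasDerivAt
      (Icc_mem_nhds (lt_of_le_of_lt ha.1 ht.1) (lt_of_lt_of_le ht.2 hb.2)))
  refine ⟨ξ, hξ, ?_⟩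
  rw [h, div_mul_cancel₀]
  linarith

/-- `g` has alternating strict signs at the `m` increasing points `p`. -/
def Alt (g : ℝ → ℝ) (m : ℕ) (η : ℝ) (p : ℕ → ℝ) : Prop :=
  (∀ i, i + 1 < m → p i < p (i+1)) ∧ (∀ i < m, p i ∈ I) ∧
  (∀ i < m, 0 < η * (-1)^i * g (p i))

lemma alt_step {g g' : ℝ → ℝ} (hg : ∀ t ∈ I, HasDerivWithinAt g (g' t) I t) {m : ℕ} {η : ℝ}
    {p : ℕ → ℝ} (h : Alt g (m+1) η p) : ∃ q, Alt g' m (-η) q := by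
  obtain ⟨h1, h2, h3⟩ := h
  have key : ∀ i, ∃ q, i < m → (p i < q ∧ q < p (i+1) ∧ 0 < -η * (-1)^i * g' q) := by
    intro i
    by_cases hi : i < m
    · obtain ⟨ξ, hξ, e⟩ := mvt hg (h2 i (by omega)) (h2 (i+1) (by omega)) (h1 i (by omega))
      refine ⟨ξ, fun _ => ⟨hξ.1, hξ.2, ?_⟩⟩
      have a1 := h3 i (by omega)
      have a2 := h3 (i+1) (by omega)
      rw [pow_succ] at a2
      have hd : 0 < p (i+1) - p i := by have := h1 i (by omega); linarith
      have : 0 < (-η * (-1)^i * g' ξ) * (p (i+1) - p i) := by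
        have e2 : (-η * (-1)^i * g' ξ) * (p (i+1) - p i)
          = η * (-1)^i * g (p i) + η * ((-1)^i * -1) * g (p (i+1)) := by
          rw [mul_assoc, ← e]; ring
        rw [e2]; linarith
      exact pos_of_mul_pos_left this hd.le
    · exact ⟨0, fun h => absurd h hi⟩
  choose q hq using key
  refine ⟨q, ?_, ?_, ?_⟩
  · intro i hi
    have := hq i (by omega)
    have := hq (i+1) (by omega)
    linarith [(hq i (by omega)).2.1, (hq (i+1) hi).1]
  · intro i hi
    have a := hq i hi
    exact ⟨by linarith [(h2 i (by omega)).1], by linarith [(h2 (i+1) (by omega)).2]⟩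
  · intro i hi
    exact (hq i hi).2.2

lemma alt_steps {n : ℕ} {G : ℕ → ℝ → ℝ} (hG : DSeq n G) (m : ℕ) (j : ℕ) :
    ∀ (i : ℕ) (η : ℝ) (p : ℕ → ℝ), i + j ≤ n → Alt (G i) (m + j) η p →
      ∃ q, Alt (G (i+j)) m ((-1)^j * η) q := by
  induction j with
  | zero => intro i η p _ h; exact ⟨p, by simpa using h⟩
  | succ j ih =>
    intro i η p hij h
    obtain ⟨q, hq⟩ := alt_step (hG i (by omega)) (m := m + j) h
    obtain ⟨r, hr⟩ := ih (i+1) (-η) q (by omega) hq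
    refine ⟨r, ?_⟩
    have e1 : i + (j+1) = i + 1 + j := by ring
    have e2 : (-1:ℝ)^(j+1) * η = (-1)^j * (-η) := by ring
    rw [e1, e2]; exact hr

/-- moving sign points towards a zero `x` of `g` -/
lemma toward {g g' : ℝ → ℝ} (hg : ∀ t ∈ I, HasDerivWithinAt g (g' t) I t) {x : ℝ} (hx : x ∈ I)
    (gx : g x = 0) {m : ℕ} {p s : ℕ → ℝ} (h1 : ∀ i, i + 1 < m → p i < p (i+1))
    (h2 : ∀ i < m, p i ∈ I) (h3 : ∀ i < m, 0 < s i * g (p i))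
    (h4 : ∀ i, i + 1 < m → (p (i+1) < x ∨ x < p i) → s (i+1) = - s i) :
    ∃ q : ℕ → ℝ, (∀ i, i + 1 < m → q i < q (i+1)) ∧ (∀ i < m, q i ∈ I) ∧
      (∀ i < m, p i < x → q i < x ∧ 0 < - s i * g' (q i)) ∧
      (∀ i < m, x < p i → x < q i ∧ 0 < s i * g' (q i)) := by
  have hne : ∀ i < m, p i ≠ x := by
    intro i hi h
    have := h3 i hi
    rw [h, gx] at this
    simp at this
  have key : ∀ i, ∃ q, i < m →
      ((p i < x → p i < q ∧ q < x ∧ (i + 1 < m → p (i+1) < x → q < p (i+1)) ∧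
          0 < - s i * g' q) ∧
       (x < p i → q < p i ∧ x < q ∧ (∀ j, j + 1 = i → x < p j → p j < q) ∧
          0 < s i * g' q)) := by
    intro i
    by_cases hi : i < m
    swap
    · exact ⟨0, fun h => absurd h hi⟩
    have hp := h2 i hi
    have h3i := h3 i hi
    rcases lt_or_gt_of_ne (hne i hi) with hlt | hgt
    · -- the neighbour on the right
      obtain ⟨y, hy, hyI, hyx, hy2, hys⟩ : ∃ y, p i < y ∧ y ∈ I ∧ y ≤ x ∧
          (i + 1 < m → p (i+1) < x → y = p (i+1)) ∧ 0 ≤ - s i * g y := by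
        by_cases hc : i + 1 < m ∧ p (i+1) < x
        · refine ⟨p (i+1), h1 i hc.1, h2 _ hc.1, hc.2.le, fun _ _ => rfl, ?_⟩
          have := h3 (i+1) hc.1
          rw [h4 i hc.1 (Or.inl hc.2)] at this
          exact this.le
        · refine ⟨x, hlt, hx, le_rfl, fun a b => absurd ⟨a, b⟩ hc, ?_⟩
          rw [gx]; simp
      obtain ⟨ξ, hξ, e⟩ := mvt hg hp hyI hy
      refine ⟨ξ, fun _ => ⟨fun _ => ⟨hξ.1, lt_of_lt_of_le hξ.2 hyx, ?_, ?_⟩,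
        fun h => absurd h (not_lt.2 hlt.le)⟩⟩
      · intro a b
        rw [← hy2 a b]; exact hξ.2
      · have : 0 < (- s i * g' ξ) * (y - p i) := by
          have e2 : (- s i * g' ξ) * (y - p i) = - s i * g y + s i * g (p i) := by
            rw [mul_assoc, ← e]; ring
          rw [e2]; linarith
        exact pos_of_mul_pos_left this (by linarith)
    · obtain ⟨y, hy, hyI, hyx, hy2, hys⟩ : ∃ y, y < p i ∧ y ∈ I ∧ x ≤ y ∧
          (∀ j, j + 1 = i → x < p j → y = p j) ∧ 0 ≤ - s i * g y := by
        by_cases hc : ∃ j, j + 1 = i ∧ x < p j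
        · obtain ⟨j, rfl, hj⟩ := hc
          refine ⟨p j, h1 j hi, h2 j (by omega), hj.le, ?_, ?_⟩
          · intro j' hj' _
            have : j' = j := by omega
            rw [this]
          · have := h3 j (by omega)
            rw [h4 j hi (Or.inr hj)]
            simpa using this.le
        · refine ⟨x, hgt, hx, le_rfl, fun j a b => absurd ⟨j, a, b⟩ hc, ?_⟩
          rw [gx]; simp
      obtain ⟨ξ, hξ, e⟩ := mvt hg hyI hp hy
      refine ⟨ξ, fun _ => ⟨fun h => absurd h (not_lt.2 hgt.le),
        fun _ => ⟨hξ.2, lt_of_le_of_lt hyx hξ.1, ?_, ?_⟩⟩⟩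
      · intro j a b
        rw [← hy2 j a b]; exact hξ.1
      · have : 0 < (s i * g' ξ) * (p i - y) := by
          have e2 : (s i * g' ξ) * (p i - y) = - s i * g y + s i * g (p i) := by
            rw [mul_assoc, ← e]; ring
          rw [e2]; linarith
        exact pos_of_mul_pos_left this (by linarith)
  choose q hq using key
  refine ⟨q, ?_, ?_, ?_, ?_⟩
  · intro i hi
    have a := hq i (by omega)
    have b := hq (i+1) hi
    have hpp := h1 i hi
    rcases lt_or_gt_of_ne (hne (i+1) hi) with hlt | hgt
    · have a1 := a.1 (by linarith)
      exact lt_trans (a1.2.2.1 hi hlt) (b.1 hlt).1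
    · have b1 := b.2 hgt
      rcases lt_or_gt_of_ne (hne i (by omega)) with hlt' | hgt'
      · exact lt_trans (a.1 hlt').2.1 b1.2.1
      · exact lt_trans (a.2 hgt').1 (b1.2.2.1 i rfl hgt')
  · intro i hi
    have hp := h2 i hi
    rcases lt_or_gt_of_ne (hne i hi) with hlt | hgt
    · have := (hq i hi).1 hlt
      exact ⟨by linarith [hp.1], by linarith [hx.2]⟩
    · have := (hq i hi).2 hgt
      exact ⟨by linarith [hx.1], by linarith [hp.2]⟩
  · intro i hi h
    have := (hq i hi).1 h
    exact ⟨this.2.1, this.2.2.2⟩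
  · intro i hi h
    have := (hq i hi).2 h
    exact ⟨this.2.1, this.2.2.2⟩

lemma alt_double {g g' g'' : ℝ → ℝ} (hg : ∀ t ∈ I, HasDerivWithinAt g (g' t) I t)
    (hg' : ∀ t ∈ I, HasDerivWithinAt g' (g'' t) I t) {x : ℝ} (hx : x ∈ I)
    (gx : g x = 0) (gx' : g' x = 0) {m : ℕ} {η : ℝ} {p : ℕ → ℝ} (h : Alt g m η p) :
    ∃ r, Alt g'' m η r := by
  obtain ⟨h1, h2, h3⟩ := h
  have hne : ∀ i < m, p i ≠ x := by
    intro i hi h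
    have := h3 i hi
    rw [h, gx] at this
    simp at this
  obtain ⟨q, q1, q2, q3, q4⟩ := toward hg hx gx (s := fun i => η * (-1)^i) h1 h2 h3
    (by intro i _ _; simp only [pow_succ]; ring)
  have hq : ∀ i < m, (q i < x ↔ p i < x) := by
    intro i hi
    rcases lt_or_gt_of_ne (hne i hi) with hlt | hgt
    · exact ⟨fun _ => hlt, fun _ => (q3 i hi hlt).1⟩
    · have := (q4 i hi hgt).1
      constructor <;> intro <;> linarith
  obtain ⟨r, r1, r2, r3, r4⟩ := toward hg' hx gx'
    (s := fun i => if q i < x then -(η * (-1)^i) else η * (-1)^i) q1 q2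
    (by
      intro i hi
      rcases lt_or_gt_of_ne (hne i hi) with hlt | hgt
      · have := q3 i hi hlt
        simp only [if_pos this.1]; exact this.2
      · have := q4 i hi hgt
        simp only [if_neg (not_lt.2 this.1.le)]; exact this.2)
    (by
      intro i hi hc
      have := q1 i hi
      rcases hc with hc | hc
      · simp only [if_pos hc, if_pos (lt_trans this hc), pow_succ]; ring
      · simp only [if_neg (not_lt.2 hc.le), if_neg (not_lt.2 (lt_trans hc this).le), pow_succ]
        ring)
  refine ⟨r, r1, r2, ?_⟩
  intro i hi
  rcases lt_or_gt_of_ne (hne i hi) with hlt | hgt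
  · have a := q3 i hi hlt
    have b := r3 i hi a.1
    simp only [if_pos a.1, neg_neg] at b
    exact b.2
  · have a := q4 i hi hgt
    have b := r4 i hi a.1
    simp only [if_neg (not_lt.2 a.1.le)] at b
    exact b.2

lemma alt_final {n k : ℕ} (hk : k + 2 ≤ n) {G : ℕ → ℝ → ℝ} (hG : DSeq n G) {x : ℝ} (hx : x ∈ I)
    (h0 : G k x = 0) (h1 : G (k+1) x = 0) {η : ℝ} {p : ℕ → ℝ} (h : Alt (G 0) (n-1) η p) :
    ∃ ξ ∈ I, 0 < (-1)^n * η * G n ξ := by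
  obtain ⟨p1, hp1⟩ := alt_steps hG (n-1-k) k 0 η p (by omega)
    (by rw [show n - 1 - k + k = n - 1 by omega]; exact h)
  rw [zero_add] at hp1
  obtain ⟨p2, hp2⟩ := alt_double (hG k (by omega)) (hG (k+1) (by omega)) hx h0 h1 hp1
  obtain ⟨p3, hp3⟩ := alt_steps hG 1 (n-k-2) (k+1+1) _ p2 (by omega)
    (by rw [show 1 + (n - k - 2) = n - 1 - k by omega]; exact hp2)
  rw [show k + 1 + 1 + (n-k-2) = n by omega] at hp3
  refine ⟨p3 0, hp3.2.1 0 (by omega), ?_⟩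
  have := hp3.2.2 0 (by omega)
  have e : (-1:ℝ)^n = (-1)^(n-k-2) * (-1)^k := by
    rw [← pow_add]
    conv_lhs => rw [show n = (n-k-2+k) + 2 by omega, pow_add]
    norm_num
  rw [e]
  simpa [mul_assoc] using this

lemma compare {n k : ℕ} (hk : k + 2 ≤ n) {F P : ℕ → ℝ → ℝ} {σ x s : ℝ} (hσ : 0 ≤ σ)
    (hF : DSeq n F) (hF0 : ∀ t ∈ I, |F 0 t| ≤ 1) (hFn : ∀ t ∈ I, |F n t| ≤ σ)
    (hx : x ∈ I) (hFx : F (k+1) x = 0) (hP : DSeq n P) (hPx : P (k+1) x = 0) (hs : |s| = 1)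
    {p : ℕ → ℝ} (hp : ∀ i, i + 1 < n - 1 → p i < p (i+1)) (hpI : ∀ i < n - 1, p i ∈ I)
    (hP0 : ∀ i < n - 1, 1 ≤ s * (-1)^i * P 0 (p i))
    (hPn : ∀ t ∈ I, (-1)^n * s * P n t ≤ -σ) : |F k x| ≤ |P k x| := by
  by_contra hcon
  push Not at hcon
  have hFk : 0 < |F k x| := lt_of_le_of_lt (abs_nonneg _) hcon
  have hFk' : F k x ≠ 0 := abs_pos.1 hFk
  set γ := P k x / F k x with hγ
  have hγ1 : |γ| < 1 := by rw [hγ, abs_div, div_lt_one hFk]; exact hcon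
  have hG : DSeq n (fun j t => P j t - γ * F j t) := by
    intro i hi t ht
    exact (hP i hi t ht).sub ((hF i hi t ht).const_mul γ)
  have hpm : ∀ i : ℕ, |(-1:ℝ)^i| = 1 := by intro i; simp
  obtain ⟨ξ, hξ, hpos⟩ := alt_final hk hG hx (by simp [hγ, hFk']) (by simp [hPx, hFx])
    (η := s) (p := p) ⟨hp, hpI, by
      intro i hi
      have h1 := hP0 i hi
      have h2 : |s * (-1)^i * (γ * F 0 (p i))| < 1 := by
        rw [abs_mul, abs_mul, hs, hpm, abs_mul]
        have := hF0 _ (hpI i hi)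
        nlinarith [abs_nonneg γ, abs_nonneg (F 0 (p i))]
      have := (abs_lt.1 h2).2
      show 0 < s * (-1)^i * (P 0 (p i) - γ * F 0 (p i))
      rw [mul_sub]; linarith⟩
  have h1 := hPn ξ hξ
  have h2 : |(-1)^n * s * (γ * F n ξ)| ≤ σ := by
    rw [abs_mul, abs_mul, hs, hpm, abs_mul]
    have := hFn _ hξ
    nlinarith [abs_nonneg γ, abs_nonneg (F n ξ)]
  have := (abs_le.1 h2).1
  have hpos' : 0 < (-1)^n * s * (P n ξ - γ * F n ξ) := hpos
  rw [mul_sub] at hpos'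
  linarith

/-- evaluation of an integer coefficient list -/
def ev : List ℤ → ℝ → ℝ
  | [], _ => 0
  | a :: l, x => (a:ℝ) + x * ev l x

/-- integer evaluation of an integer coefficient list -/
def evZ : List ℤ → ℤ → ℤ
  | [], _ => 0
  | a :: l, x => a + x * evZ l x

lemma ev_cast (l : List ℤ) (x : ℤ) : ev l x = (evZ l x : ℝ) := by
  induction l with
  | nil => simp [ev, evZ]
  | cons a l ih => simp [ev, evZ, ih]

/-- the polynomial of an integer coefficient list -/
noncomputable def toP : List ℤ → ℝ[X]
  | [] => 0
  | a :: l => C (a:ℝ) + X * toP l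

lemma eval_toP (l : List ℤ) (x : ℝ) : (toP l).eval x = ev l x := by
  induction l with
  | nil => simp [ev, toP]
  | cons a l ih => simp [ev, toP, ih]

lemma coeff_toP (l : List ℤ) (j : ℕ) : (toP l).coeff j = (l.getD j 0 : ℤ) := by
  induction l generalizing j with
  | nil => simp [toP]
  | cons a l ih =>
    cases j with
    | zero => simp [toP]
    | succ j =>
      rw [toP, coeff_add, coeff_X_mul, coeff_C_succ, ih]
      simp

/-- the rescaled derivative chain of a polynomial -/
noncomputable def PS (q : ℝ[X]) (x μ N : ℝ) (j : ℕ) (t : ℝ) : ℝ :=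
  (derivative^[j] q).eval ((t - x) * μ) * μ^j / N

lemma dseq_PS (q : ℝ[X]) (x μ N : ℝ) (n : ℕ) : DSeq n (PS q x μ N) := by
  intro i _ t _
  have h1 : HasDerivAt (fun t : ℝ => (t - x) * μ) μ t := by
    simpa using ((hasDerivAt_id t).sub_const x).mul_const μ
  have h2 := ((derivative^[i] q).hasDerivAt ((t - x) * μ)).comp t h1
  have h3 := ((h2.mul_const (μ^i)).div_const N).hasDerivWithinAt (s := I)
  have e : PS q x μ N (i+1) t = eval ((t - x) * μ) (derivative (derivative^[i] q)) * μ * μ^i / N := by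
    simp only [PS, Function.iterate_succ_apply', pow_succ]
    ring
  rw [e]
  exact h3

lemma PS_at (l : List ℤ) (x μ N : ℝ) (j : ℕ) :
    PS (toP l) x μ N j x = j.factorial * (l.getD j 0 : ℤ) * μ^j / N := by
  simp only [PS, sub_self, zero_mul]
  rw [← coeff_zero_eq_eval_zero, coeff_iterate_derivative, coeff_toP]
  simp [Nat.descFactorial_self]

lemma PS_top (l : List ℤ) (n : ℕ) (hl : l.length = n + 1) (x μ N t : ℝ) :
    PS (toP l) x μ N n t = n.factorial * (l.getD n 0 : ℤ) * μ^n / N := by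
  have : derivative^[n] (toP l) = C ((n.factorial : ℝ) * (l.getD n 0 : ℤ)) := by
    ext i
    rw [coeff_iterate_derivative, coeff_toP, coeff_C]
    cases i with
    | zero => simp [Nat.descFactorial_self]
    | succ i =>
      rw [List.getD_eq_default _ _ (by omega)]
      simp
  simp only [PS, this, eval_C]

/-- alternation check -/
def altOK (N : ℤ) (c : List ℤ) : ℤ → List ℤ → Bool
  | _, [] => true
  | s, t :: l => decide (N ≤ s * evZ c t) && altOK N c (-s) l

lemma altOK_sound (N : ℤ) (c : List ℤ) (s : ℤ) (l : List ℤ) (h : altOK N c s l = true) :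
    ∀ i < l.length, N ≤ s * (-1)^i * evZ c (l.getD i 0) := by
  induction l generalizing s with
  | nil => simp
  | cons t l ih =>
    simp only [altOK, Bool.and_eq_true, decide_eq_true_eq] at h
    intro i hi
    cases i with
    | zero => simpa using h.1
    | succ i =>
      have := ih (-s) h.2 i (by simpa using hi)
      simp only [List.getD_cons_succ, pow_succ]
      calc N ≤ _ := this
        _ = _ := by ring

/-- sorted check with bounds -/
def srt (hi : ℤ) : ℤ → List ℤ → Bool
  | _, [] => true
  | a, t :: l => decide (a ≤ t) && decide (t ≤ hi) && srt hi (t+1) l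

lemma srt_sound (hi : ℤ) (a : ℤ) (l : List ℤ) (h : srt hi a l = true) :
    (∀ i < l.length, a ≤ l.getD i 0 ∧ l.getD i 0 ≤ hi) ∧
    (∀ i, i + 1 < l.length → l.getD i 0 < l.getD (i+1) 0) := by
  induction l generalizing a with
  | nil => simp
  | cons t l ih =>
    simp only [srt, Bool.and_eq_true, decide_eq_true_eq] at h
    obtain ⟨i1, i2⟩ := ih (t+1) h.2
    constructor
    · intro i hi
      cases i with
      | zero => simpa using h.1
      | succ i =>
        have := i1 i (by simpa using hi)
        simp only [List.getD_cons_succ]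
        omega
    · intro i hi
      cases i with
      | zero =>
        have := i1 0 (by simpa using hi)
        simp only [List.getD_cons_succ, List.getD_cons_zero]
        omega
      | succ i =>
        simpa using i2 i (by simpa using hi)

/-- certificate check for the comparison polynomial -/
def qchk (n k : ℕ) (lo hi s N : ℤ) (c t : List ℤ) : Bool :=
  decide (c.length = n + 1) && decide (t.length = n - 1) && decide (0 < N) &&
  decide (s * s = 1) && altOK N c s t && srt hi lo t && decide (c.getD (k+1) 0 = 0) &&
  decide ((-1)^n * s * c.getD n 0 * 100^n ≤ -(N * 2^(n-1)))

lemma qcompare {n k : ℕ} (hk : k + 2 ≤ n) {lo hi s N : ℤ} {c t : List ℤ}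
    (h : qchk n k lo hi s N c t = true) {F : ℕ → ℝ → ℝ} {σ lam x : ℝ} (hlam : 1 ≤ lam)
    (hσ : σ = sigmaN n * lam^n) (hF : DSeq n F) (hF0 : ∀ t ∈ I, |F 0 t| ≤ 1)
    (hFn : ∀ t ∈ I, |F n t| ≤ σ) (hx : x ∈ I) (hFx : F (k+1) x = 0)
    (hlo : -1 ≤ x + lo / (lam * 100)) (hhi : x + hi / (lam * 100) ≤ 1) :
    |F k x| ≤ k.factorial * |(c.getD k 0 : ℝ)| / N * (lam * 100)^k := by
  simp only [qchk, Bool.and_eq_true, decide_eq_true_eq] at h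
  obtain ⟨⟨⟨⟨⟨⟨⟨hc, ht⟩, hN⟩, hs⟩, halt⟩, hsrt⟩, hck⟩, hlead⟩ := h
  have hNr : (0:ℝ) < N := by exact_mod_cast hN
  have hμ : 0 < lam * 100 := by linarith
  have hsr : (s:ℝ) * s = 1 := by exact_mod_cast hs
  have hsabs : |(s:ℝ)| = 1 := by
    have : |(s:ℝ)| * |(s:ℝ)| = 1 := by rw [← abs_mul, hsr, abs_one]
    nlinarith [abs_nonneg (s:ℝ)]
  have hA := altOK_sound N c s t halt
  obtain ⟨hS1, hS2⟩ := srt_sound hi lo t hsrt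
  have hσ0 : 0 ≤ σ := le_trans (abs_nonneg _) (hFn x hx)
  have key := compare hk (P := PS (toP c) x (lam*100) N) (s := s) (σ := σ) (x := x)
    (p := fun i => x + (t.getD i 0 : ℤ) / (lam * 100)) hσ0 hF hF0 hFn hx hFx
    (dseq_PS _ _ _ _ _) (by rw [PS_at, hck]; simp) hsabs
    (by
      intro i hi
      have := hS2 i (by omega)
      have : ((t.getD i 0 : ℤ):ℝ) < ((t.getD (i+1) 0 : ℤ) : ℝ) := by exact_mod_cast this
      have := div_lt_div_of_pos_right this hμ
      simpa using this)
    (by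
      intro i hi'
      obtain ⟨a, b⟩ := hS1 i (by omega)
      have a' : (lo:ℝ) ≤ ((t.getD i 0 : ℤ):ℝ) := by exact_mod_cast a
      have b' : ((t.getD i 0 : ℤ):ℝ) ≤ (hi:ℝ) := by exact_mod_cast b
      have a2 := div_le_div_of_nonneg_right a' hμ.le
      have b2 := div_le_div_of_nonneg_right b' hμ.le
      exact ⟨by linarith, by linarith⟩)
    (by
      intro i hi
      have := hA i (by omega)
      have : (N:ℝ) ≤ s * (-1)^i * (evZ c (t.getD i 0) : ℤ) := by exact_mod_cast this
      have e : PS (toP c) x (lam*100) N 0 (x + (t.getD i 0 : ℤ) / (lam * 100))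
          = (evZ c (t.getD i 0) : ℤ) / N := by
        simp only [PS, Function.iterate_zero, id, pow_zero, mul_one]
        rw [eval_toP, ← ev_cast]
        congr 2
        field_simp
        ring
      rw [e, ← mul_div_assoc, le_div_iff₀ hNr]
      linarith)
    (by
      intro u _
      rw [PS_top c n hc, hσ, sigmaN]
      have h1 : ((-1)^n * s * (c.getD n 0 : ℤ) * 100^n : ℝ) ≤ -(N * 2^(n-1)) := by
        exact_mod_cast hlead
      have e : (-1:ℝ)^n * s * (n.factorial * (c.getD n 0 : ℤ) * (lam*100)^n / N)
        = ((-1)^n * s * (c.getD n 0 : ℤ) * 100^n) * (n.factorial * lam^n / N) := by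
        rw [mul_pow]; ring
      rw [e]
      have hp : 0 ≤ (n.factorial * lam^n / N : ℝ) := by positivity
      calc _ ≤ -(N * 2^(n-1) : ℝ) * (n.factorial * lam^n / N) := mul_le_mul_of_nonneg_right h1 hp
        _ = _ := by field_simp)
  rw [PS_at] at key
  refine key.trans (le_of_eq ?_)
  rw [abs_div, abs_mul, abs_mul, abs_of_pos hNr, abs_of_nonneg (pow_nonneg hμ.le k), Nat.abs_cast]
  ring

/-- coefficients of `c + (a + X) * p` -/
def mx (a : ℤ) : ℤ → List ℤ → List ℤ
  | c, [] => [c]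
  | c, b :: p => (c + a * b) :: mx a b p

lemma ev_mx (a c : ℤ) (p : List ℤ) (x : ℝ) : ev (mx a c p) x = c + (a + x) * ev p x := by
  induction p generalizing c with
  | nil => simp [mx, ev]
  | cons b p ih => simp only [mx, ev, ih]; push_cast; ring

/-- Taylor shift -/
def sh (a : ℤ) : List ℤ → List ℤ
  | [] => []
  | c :: l => mx a c (sh a l)

lemma ev_sh (a : ℤ) (l : List ℤ) (x : ℝ) : ev (sh a l) x = ev l (a + x) := by
  induction l with
  | nil => simp [sh, ev]
  | cons c l ih => simp only [sh, ev_mx, ev, ih]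

/-- coefficients of `(X - ν)^p` -/
def pw (ν : ℤ) : ℕ → List ℤ
  | 0 => [1]
  | p + 1 => mx (-ν) 0 (pw ν p)

lemma ev_pw (ν : ℤ) (p : ℕ) (x : ℝ) : ev (pw ν p) x = (x - ν)^p := by
  induction p with
  | zero => simp [pw, ev]
  | succ p ih => simp only [pw, ev_mx, ih, pow_succ]; push_cast; ring

/-- sum of coefficient lists -/
def addL : List ℤ → List ℤ → List ℤ
  | [], l => l
  | a :: l, [] => a :: l
  | a :: l, b :: m => (a + b) :: addL l m

lemma ev_addL (l m : List ℤ) (x : ℝ) : ev (addL l m) x = ev l x + ev m x := by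
  induction l generalizing m with
  | nil => simp [addL, ev]
  | cons a l ih =>
    cases m with
    | nil => simp [addL, ev]
    | cons b m => simp only [addL, ev, ih]; push_cast; ring

/-- scalar multiple of a coefficient list -/
def smulL (d : ℤ) : List ℤ → List ℤ
  | [] => []
  | a :: l => (d * a) :: smulL d l

lemma ev_smulL (d : ℤ) (l : List ℤ) (x : ℝ) : ev (smulL d l) x = d * ev l x := by
  induction l with
  | nil => simp [smulL, ev]
  | cons a l ih => simp only [smulL, ev, ih]; push_cast; ring

/-- substitution `X ↦ w X` -/
def scaleL (w : ℤ) : List ℤ → List ℤ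
  | [] => []
  | a :: l => a :: smulL w (scaleL w l)

lemma ev_scaleL (w : ℤ) (l : List ℤ) (x : ℝ) : ev (scaleL w l) x = ev l (w * x) := by
  induction l with
  | nil => simp [scaleL, ev]
  | cons a l ih => simp only [scaleL, ev, ev_smulL, ih]; ring

/-- substitution `X ↦ X/2` up to a positive factor -/
def half : List ℤ → List ℤ
  | [] => []
  | a :: l => (a * 2 ^ l.length) :: half l

lemma ev_half (l : List ℤ) (x : ℝ) : 2 * ev (half l) x = 2 ^ l.length * ev l (x / 2) := by
  induction l with
  | nil => simp [half, ev]
  | cons a l ih =>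
    simp only [half, ev, List.length_cons, pow_succ]
    push_cast
    linear_combination x * ih

/-- all coefficients nonnegative -/
def allNN : List ℤ → Bool
  | [] => true
  | a :: l => decide (0 ≤ a) && allNN l

lemma allNN_sound (l : List ℤ) (h : allNN l = true) (x : ℝ) (hx : 0 ≤ x) : 0 ≤ ev l x := by
  induction l with
  | nil => simp [ev]
  | cons a l ih =>
    simp only [allNN, Bool.and_eq_true, decide_eq_true_eq] at h
    have h1 : (0:ℝ) ≤ a := by exact_mod_cast h.1
    have := mul_nonneg hx (ih h.2)
    simp only [ev]; linarith

lemma ev_append (l m : List ℤ) (x : ℝ) : ev (l ++ m) x = ev l x + x ^ l.length * ev m x := by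
  induction l with
  | nil => simp [ev]
  | cons a l ih => simp only [List.cons_append, ev, ih, List.length_cons, pow_succ]; ring

lemma ev_reverse (l : List ℤ) (z : ℝ) (hz : z ≠ 0) :
    z ^ l.length * ev l.reverse z⁻¹ = z * ev l z := by
  induction l with
  | nil => simp [ev]
  | cons a l ih =>
    simp only [List.reverse_cons, ev_append, List.length_reverse, List.length_cons, ev, pow_succ]
    have e : z ^ l.length * z⁻¹ ^ l.length = 1 := by
      rw [← mul_pow, mul_inv_cancel₀ hz, one_pow]
    linear_combination z * ih + (z * a) * e

/-- Bernstein-type positivity check on `[0,1]` -/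
def bernOK (c : List ℤ) : Bool := decide (0 ≤ c.headD 0) && allNN (sh 1 c.reverse)

lemma bernOK_sound (c : List ℤ) (h : bernOK c = true) (z : ℝ) (h0 : 0 ≤ z) (h1 : z ≤ 1) :
    0 ≤ ev c z := by
  simp only [bernOK, Bool.and_eq_true, decide_eq_true_eq] at h
  rcases h0.eq_or_lt with rfl | hz
  · cases c with
    | nil => simp [ev]
    | cons a l =>
      have h1 : 0 ≤ a := by simpa using h.1
      simp only [ev, zero_mul, add_zero]
      exact_mod_cast h1
  · have hi : 1 ≤ z⁻¹ := (one_le_inv₀ hz).2 h1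
    have := allNN_sound _ h.2 (z⁻¹ - 1) (by linarith)
    rw [ev_sh] at this
    have e := ev_reverse c z hz.ne'
    have e2 : (((1:ℤ):ℝ) + (z⁻¹ - 1)) = z⁻¹ := by push_cast; ring
    rw [e2] at this
    have : 0 ≤ z * ev c z := by rw [← e]; positivity
    exact nonneg_of_mul_nonneg_right this hz

/-- positivity check on `[0,1]` with subdivision -/
def posU : ℕ → List ℤ → Bool
  | 0, c => bernOK c
  | f + 1, c => bernOK c || (posU f (half c) && posU f (sh 1 (half c)))

lemma posU_sound (f : ℕ) (c : List ℤ) (h : posU f c = true) (z : ℝ) (h0 : 0 ≤ z) (h1 : z ≤ 1) :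
    0 ≤ ev c z := by
  induction f generalizing c z with
  | zero => exact bernOK_sound c h z h0 h1
  | succ f ih =>
    simp only [posU, Bool.or_eq_true, Bool.and_eq_true] at h
    rcases h with h | ⟨ha, hb⟩
    · exact bernOK_sound c h z h0 h1
    · have e := ev_half c (2*z)
      rw [show 2 * z / 2 = z by ring] at e
      have : 0 ≤ ev (half c) (2*z) := by
        rcases le_total z (1/2) with hz | hz
        · exact ih _ ha (2*z) (by linarith) (by linarith)
        · have := ih _ hb (2*z-1) (by linarith) (by linarith)
          rw [ev_sh] at this
          rwa [show (((1:ℤ):ℝ) + (2*z - 1)) = 2*z by push_cast; ring] at this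
      have hp : (0:ℝ) < 2 ^ c.length := by positivity
      have : 0 ≤ 2 ^ c.length * ev c z := by rw [← e]; linarith
      exact nonneg_of_mul_nonneg_right this hp

/-- truncated power spline -/
noncomputable def spl (p : ℕ) (V : ℝ) : List (ℤ × ℤ) → ℝ
  | [] => 0
  | (d, ν) :: l => (d:ℝ) * max (V - ν) 0 ^ p + spl p V l

/-- next knot -/
def nxt (K : ℤ) : List (ℤ × ℤ) → ℤ
  | [] => K
  | (_, ν) :: _ => ν

/-- piecewise bound check -/
def pieces (f : ℕ) (K : ℤ) (p : ℕ) (N : ℤ) : List ℤ → List (ℤ × ℤ) → Bool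
  | _, [] => true
  | acc, (d, ν) :: l =>
    decide (ν ≤ nxt K l) &&
    posU f (scaleL (nxt K l - ν) (sh ν (addL [N] (addL acc (smulL d (pw ν p)))))) &&
    posU f (scaleL (nxt K l - ν) (sh ν (addL [N] (smulL (-1) (addL acc (smulL d (pw ν p))))))) &&
    pieces f K p N (addL acc (smulL d (pw ν p))) l

lemma pieces_zero {f p : ℕ} {K N : ℤ} (hp : p ≠ 0) (acc : List ℤ) (l : List (ℤ × ℤ))
    (h : pieces f K p N acc l = true) (V : ℝ) (hV : V ≤ nxt K l) : spl p V l = 0 := by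
  induction l generalizing acc with
  | nil => simp [spl]
  | cons a l ih =>
    obtain ⟨d, ν⟩ := a
    simp only [pieces, Bool.and_eq_true, decide_eq_true_eq] at h
    have h1 : (ν:ℝ) ≤ nxt K l := by exact_mod_cast h.1.1.1
    simp only [nxt] at hV
    rw [spl, ih _ h.2 (by linarith), max_eq_right (by linarith), zero_pow hp]
    simp

lemma seg_sound {f : ℕ} {ν w : ℤ} {P : List ℤ} (h : posU f (scaleL w (sh ν P)) = true)
    {V : ℝ} (h1 : (ν:ℝ) ≤ V) (h2 : V ≤ ν + w) : 0 ≤ ev P V := by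
  have hw : (0:ℝ) ≤ w := by linarith
  rcases hw.eq_or_lt with hw | hw
  · have := posU_sound _ _ h 0 le_rfl zero_le_one
    rw [ev_scaleL, ev_sh, mul_zero, add_zero] at this
    have : V = ν := by linarith
    rwa [this]
  · have := posU_sound _ _ h ((V - ν)/w) (div_nonneg (by linarith) hw.le)
      (by rw [div_le_one hw]; linarith)
    rw [ev_scaleL, ev_sh, mul_div_cancel₀ _ hw.ne'] at this
    rwa [show (ν:ℝ) + (V - ν) = V by ring] at this

lemma pieces_sound {f p : ℕ} {K N : ℤ} (hp : p ≠ 0) (acc : List ℤ) (l : List (ℤ × ℤ))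
    (hl : l ≠ []) (h : pieces f K p N acc l = true) (V : ℝ) (hV : nxt K l ≤ V) (hK : V ≤ K) :
    |ev acc V + spl p V l| ≤ N := by
  induction l generalizing acc with
  | nil => exact absurd rfl hl
  | cons a l ih =>
    obtain ⟨d, ν⟩ := a
    have hh := h
    simp only [pieces, Bool.and_eq_true, decide_eq_true_eq] at h
    obtain ⟨⟨⟨a1, a2⟩, a3⟩, a4⟩ := h
    simp only [nxt] at hV
    have e : ev acc V + spl p V ((d, ν) :: l)
        = ev (addL acc (smulL d (pw ν p))) V + spl p V l := by
      rw [ev_addL, ev_smulL, ev_pw, spl, max_eq_left (by linarith)]; ring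
    rw [e]
    rcases le_total V (nxt K l) with hv | hv
    · rw [pieces_zero hp _ l a4 V hv, add_zero]
      have b1 := seg_sound a2 hV (by push_cast; linarith)
      have b2 := seg_sound a3 hV (by push_cast; linarith)
      rw [ev_addL] at b1 b2
      rw [ev_smulL] at b2
      simp only [ev] at b1 b2
      push_cast at b1 b2
      rw [abs_le]; constructor <;> linarith
    · by_cases hl' : l = []
      · subst hl'
        simp only [nxt] at hv
        have hVK : V = K := le_antisymm hK hv
        rw [spl, add_zero]
        have b1 := seg_sound a2 hV (by simp only [nxt]; push_cast; linarith)
        have b2 := seg_sound a3 hV (by simp only [nxt]; push_cast; linarith)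
        rw [ev_addL] at b1 b2
        rw [ev_smulL] at b2
        simp only [ev] at b1 b2
        push_cast at b1 b2
        rw [abs_le]; constructor <;> linarith
      · exact ih _ hl' a4 hv

lemma pieces_bound {f p : ℕ} {K N e : ℤ} (hp : p ≠ 0) (l : List (ℤ × ℤ))
    (h : pieces f K p N [e] l = true) (he : |e| ≤ N) (V : ℝ) (hK : V ≤ K) :
    |(e:ℝ) + spl p V l| ≤ N := by
  rcases le_total V (nxt K l) with hv | hv
  · rw [pieces_zero hp _ l h V hv, add_zero]
    exact_mod_cast he
  · by_cases hl : l = []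
    · subst hl
      simp only [spl, add_zero]
      exact_mod_cast he
    · have := pieces_sound hp [e] l hl h V hv hK
      simpa [ev] using this

lemma hasDerivAt_trunc (p : ℕ) (V : ℝ) :
    HasDerivAt (fun V : ℝ => max V 0 ^ (p+2)) ((p+2 : ℕ) * max V 0 ^ (p+1)) V := by
  rcases lt_trichotomy V 0 with h | h | h
  · have : (fun V : ℝ => max V 0 ^ (p+2)) =ᶠ[nhds V] fun _ => 0 := by
      filter_upwards [Iio_mem_nhds h] with y hy
      rw [max_eq_right (le_of_lt hy)]; simp
    rw [max_eq_right h.le]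
    simpa using (hasDerivAt_const V (0:ℝ)).congr_of_eventuallyEq this
  · subst h
    have h1 : HasDerivAt (fun V : ℝ => |V| ^ (p+1) * max V 0) 0 0 := by
      rw [hasDerivAt_iff_isLittleO_nhds_zero]
      simp only [zero_add, abs_zero, max_self, mul_zero, sub_zero, smul_zero]
      refine Asymptotics.isLittleO_of_tendsto' ?_ ?_
      · filter_upwards with x hx; simp [hx]
      · have ht : Filter.Tendsto (fun x : ℝ => |x| ^ (p+1)) (nhds 0) (nhds 0) := by
          have : Continuous (fun x : ℝ => |x| ^ (p+1)) := by fun_prop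
          simpa using this.tendsto 0
        refine squeeze_zero_norm (fun x => ?_) ht
        rcases eq_or_ne x 0 with rfl | hx
        · simp
        · rw [norm_div, norm_mul, Real.norm_eq_abs, Real.norm_eq_abs, Real.norm_eq_abs,
            div_le_iff₀ (abs_pos.2 hx), abs_of_nonneg (by positivity : (0:ℝ) ≤ |x|^(p+1))]
          refine mul_le_mul_of_nonneg_left ?_ (by positivity)
          rw [abs_of_nonneg (le_max_right x 0)]
          exact max_le (le_abs_self x) (abs_nonneg x)
    have e : (fun V : ℝ => max V 0 ^ (p+2)) = fun V : ℝ => |V| ^ (p+1) * max V 0 := by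
      funext y
      rcases le_total y 0 with hy | hy
      · rw [max_eq_right hy]; simp
      · rw [max_eq_left hy, abs_of_nonneg hy]; ring
    rw [e]
    simpa using h1
  · have : (fun V : ℝ => max V 0 ^ (p+2)) =ᶠ[nhds V] fun V => V ^ (p+2) := by
      filter_upwards [Ioi_mem_nhds h] with y hy
      rw [max_eq_left (le_of_lt hy)]
    rw [max_eq_left h.le]
    exact (hasDerivAt_pow (p+2) V).congr_of_eventuallyEq this

lemma hasDerivAt_spl (p : ℕ) (l : List (ℤ × ℤ)) (V : ℝ) :
    HasDerivAt (fun V : ℝ => spl (p+2) V l) ((p+2 : ℕ) * spl (p+1) V l) V := by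
  induction l with
  | nil => simpa [spl] using hasDerivAt_const V (0:ℝ)
  | cons a l ih =>
    obtain ⟨d, ν⟩ := a
    have h1 : HasDerivAt (fun V : ℝ => V - ν) 1 V := by
      simpa using (hasDerivAt_id V).sub_const (ν:ℝ)
    have h2 := ((hasDerivAt_trunc p (V - ν)).comp V h1).const_mul (d:ℝ)
    have h3 := h2.add ih
    have e : ((p+2 : ℕ):ℝ) * spl (p+1) V ((d, ν) :: l)
      = (d:ℝ) * (((p+2 : ℕ):ℝ) * max (V - ν) 0 ^ (p+1) * 1) + ((p+2 : ℕ):ℝ) * spl (p+1) V l := by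
      rw [spl]; ring
    rw [e]
    exact h3

/-- rescaled derivative chain of the spline -/
noncomputable def HS (n : ℕ) (e N K : ℤ) (l : List (ℤ × ℤ)) (μ : ℝ) (j : ℕ) (t : ℝ) : ℝ :=
  ((if j = 0 then (e:ℝ) else 0) +
    (n+1).descFactorial j * spl (n+1-j) (K - (1-t)*μ) l) * μ^j / N

lemma dseq_HS (n : ℕ) (e N K : ℤ) (l : List (ℤ × ℤ)) (μ : ℝ) : DSeq n (HS n e N K l μ) := by
  intro j hj t _
  obtain ⟨p, hp⟩ : ∃ p, n + 1 - j = p + 2 := ⟨n - 1 - j, by omega⟩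
  have h1 : HasDerivAt (fun t : ℝ => K - (1-t)*μ) μ t := by
    have := (((hasDerivAt_id t).const_sub 1).mul_const μ).const_sub (K:ℝ)
    simpa using this
  have h2 := (hasDerivAt_spl p l (K - (1-t)*μ)).comp t h1
  have h3 := ((((h2.const_mul ((n+1).descFactorial j : ℝ)).const_add
    (if j = 0 then (e:ℝ) else 0)).mul_const (μ^j)).div_const (N:ℝ)).hasDerivWithinAt (s := I)
  have e1 : HS n e N K l μ (j+1) t = ((n+1).descFactorial j : ℝ) *
      (((p+2 : ℕ):ℝ) * spl (p+1) (K - (1-t)*μ) l * μ) * μ^j / N := by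
    simp only [HS, Nat.succ_ne_zero, if_false, zero_add, Nat.descFactorial_succ, pow_succ]
    rw [show n + 1 - (j+1) = p + 1 by omega, hp]
    push_cast
    ring
  rw [e1]
  unfold HS
  rw [hp]
  exact h3

/-- integer value of the truncated power sum at the right end -/
def splZ (p : ℕ) (K : ℤ) : List (ℤ × ℤ) → ℤ
  | [] => 0
  | (d, ν) :: l => d * max (K - ν) 0 ^ p + splZ p K l

lemma spl_cast (p : ℕ) (K : ℤ) (l : List (ℤ × ℤ)) : spl p K l = (splZ p K l : ℤ) := by
  induction l with
  | nil => simp [spl, splZ]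
  | cons a l ih => obtain ⟨d, ν⟩ := a; simp only [spl, splZ, ih]; push_cast; rfl

/-- certificate check for the spline -/
def hchk (f n : ℕ) (K N N1 e : ℤ) (l : List (ℤ × ℤ)) : Bool :=
  decide (0 < N) && decide (|e| ≤ N) && decide (0 ≤ N1) &&
  decide ((n+1) * 100^n * N1 ≤ N * 2^(n-1)) &&
  pieces f K (n+1) N [e] l && pieces f K 1 N1 [0] l

lemma spline_mem {f n : ℕ} (hn : 1 ≤ n) {K N N1 e : ℤ} {l : List (ℤ × ℤ)}
    (h : hchk f n K N N1 e l = true) {lam σ : ℝ} (hlam : 1 ≤ lam) (hσ : σ = sigmaN n * lam^n) :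
    memW n σ (HS n e N K l (lam*100) 0) := by
  simp only [hchk, Bool.and_eq_true, decide_eq_true_eq] at h
  obtain ⟨⟨⟨⟨⟨hN, he⟩, hN1⟩, hNN⟩, hp1⟩, hp2⟩ := h
  have hNr : (0:ℝ) < N := by exact_mod_cast hN
  have hV : ∀ t ∈ I, (K:ℝ) - (1-t)*(lam*100) ≤ K := by
    intro t ht
    have : 0 ≤ (1-t)*(lam*100) := mul_nonneg (by linarith [ht.2]) (by linarith)
    linarith
  refine memW_of_dseq (dseq_HS n e N K l (lam*100)) ?_ ?_
  · intro t ht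
    have := pieces_bound (by omega) l hp1 he _ (hV t ht)
    simp only [HS, if_true, Nat.descFactorial_zero, Nat.cast_one, one_mul, pow_zero, mul_one,
      Nat.sub_zero]
    rw [abs_div, abs_of_pos hNr, div_le_one hNr]
    exact this
  · intro t ht
    have h1 := pieces_bound (by omega) l hp2 (by simpa using hN1) _ (hV t ht)
    rw [Int.cast_zero, zero_add] at h1
    have hNNr : ((n:ℝ)+1) * 100^n * N1 ≤ N * 2^(n-1) := by exact_mod_cast hNN
    simp only [HS, if_neg (show n ≠ 0 by omega), zero_add]
    rw [show n + 1 - n = 1 by omega, abs_div, abs_mul, abs_mul, abs_of_pos hNr,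
      abs_of_nonneg (by positivity : (0:ℝ) ≤ (lam*100)^n), Nat.abs_cast, div_le_iff₀ hNr, hσ, sigmaN]
    have hd : (n+1).descFactorial n = (n+1) * n.factorial := by
      rw [← Nat.factorial_succ]
      have := Nat.descFactorial_self (n+1)
      rw [Nat.descFactorial_succ] at this
      simpa using this
    rw [hd]
    push_cast
    calc ((n:ℝ)+1) * n.factorial * |spl 1 (K - (1-t)*(lam*100)) l| * (lam*100)^n
        ≤ ((n:ℝ)+1) * n.factorial * N1 * (lam*100)^n := by gcongr
      _ = (((n:ℝ)+1) * 100^n * N1) * (n.factorial * lam^n) := by rw [mul_pow]; ring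
      _ ≤ (N * 2^(n-1)) * (n.factorial * lam^n) := by gcongr
      _ = _ := by ring

lemma HS_end (n : ℕ) (e N K : ℤ) (l : List (ℤ × ℤ)) (μ : ℝ) (k : ℕ) (hk : k ≠ 0) :
    HS n e N K l μ k 1 = (n+1).descFactorial k * (splZ (n+1-k) K l : ℤ) * μ^k / N := by
  simp only [HS, if_neg hk, zero_add, sub_self, zero_mul, sub_zero, spl_cast]

/-- chains of derivatives of members of the class -/
def Ch (n : ℕ) (σ : ℝ) (F : ℕ → ℝ → ℝ) : Prop :=
  DSeq n F ∧ (∀ t ∈ I, |F 0 t| ≤ 1) ∧ (∀ t ∈ I, |F n t| ≤ σ)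

lemma ch_of_memW {n : ℕ} {σ : ℝ} {f : ℝ → ℝ} (h : memW n σ f) :
    Ch n σ (fun i => iteratedDerivWithin i f I) :=
  ⟨dseq_of_ntimes h.1, by simpa using h.2.1, h.2.2⟩

lemma ch_reflect {n : ℕ} {σ : ℝ} {F : ℕ → ℝ → ℝ} (h : Ch n σ F) :
    Ch n σ (fun i t => (-1)^i * F i (-t)) := by
  have hneg : ∀ t ∈ I, -t ∈ I := fun t ht => ⟨by linarith [ht.2], by linarith [ht.1]⟩
  refine ⟨?_, ?_, ?_⟩
  · intro i hi t ht
    have h1 : HasDerivWithinAt (fun t : ℝ => -t) (-1) I t := (hasDerivAt_neg t).hasDerivWithinAt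
    have h2 := ((h.1 i hi (-t) (hneg t ht)).comp t h1 (fun s hs => hneg s hs)).const_mul ((-1:ℝ)^i)
    have e : (-1:ℝ)^(i+1) * F (i+1) (-t) = (-1:ℝ)^i * (F (i+1) (-t) * -1) := by ring
    show HasDerivWithinAt _ ((-1:ℝ)^(i+1) * F (i+1) (-t)) I t
    rw [e]
    exact h2
  · intro t ht
    simpa using h.2.1 _ (hneg t ht)
  · intro t ht
    simpa [abs_mul] using h.2.2 _ (hneg t ht)

lemma small_pt (n : ℕ) (σ : ℝ) (j : ℕ) : j ≤ n → ∀ a ∈ I, ∀ b ∈ I, a < b →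
    ∃ c : ℝ, ∀ F, Ch n σ F → ∃ ξ ∈ Icc a b, |F j ξ| ≤ c := by
  induction j with
  | zero =>
    intro _ a ha b _ hab
    exact ⟨1, fun F hF => ⟨a, left_mem_Icc.2 hab.le, hF.2.1 a ha⟩⟩
  | succ j ih =>
    intro hj a ha b hb hab
    have hm1 : (2*a+b)/3 ∈ I := ⟨by linarith [ha.1], by linarith [hb.2]⟩
    have hm2 : (a+2*b)/3 ∈ I := ⟨by linarith [ha.1], by linarith [hb.2]⟩
    obtain ⟨c1, h1⟩ := ih (by omega) a ha _ hm1 (by linarith)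
    obtain ⟨c2, h2⟩ := ih (by omega) _ hm2 b hb (by linarith)
    refine ⟨(c1 + c2) / ((b-a)/3), fun F hF => ?_⟩
    obtain ⟨u, hu, hu'⟩ := h1 F hF
    obtain ⟨v, hv, hv'⟩ := h2 F hF
    have hd : (b-a)/3 ≤ v - u := by linarith [hu.2, hv.1]
    obtain ⟨ξ, hξ, e⟩ := mvt (hF.1 j (by omega)) (a := u) (b := v)
      ⟨by linarith [hu.1, ha.1], by linarith [hu.2, hm1.2]⟩
      ⟨by linarith [hv.1, hm2.1], by linarith [hv.2, hb.2]⟩ (by linarith)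
    refine ⟨ξ, ⟨by linarith [hξ.1, hu.1], by linarith [hξ.2, hv.2]⟩, ?_⟩
    rw [le_div_iff₀ (by linarith)]
    have e2 : |F j v - F j u| = |F (j+1) ξ| * (v - u) := by
      rw [e, abs_mul, abs_of_pos (by linarith : 0 < v - u)]
    have e3 : |F j v - F j u| ≤ |F j v| + |F j u| := abs_sub _ _
    have := mul_le_mul_of_nonneg_left hd (abs_nonneg (F (j+1) ξ))
    linarith

lemma unif_bound (n : ℕ) (σ : ℝ) (i : ℕ) : i ≤ n →
    ∃ c : ℝ, ∀ F, Ch n σ F → ∀ t ∈ I, |F (n-i) t| ≤ c := by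
  induction i with
  | zero => intro _; exact ⟨σ, fun F hF t ht => hF.2.2 t ht⟩
  | succ i ih =>
    intro hi
    obtain ⟨c1, h1⟩ := ih (by omega)
    obtain ⟨c2, h2⟩ := small_pt n σ (n-(i+1)) (by omega) (-1) (by simp) 1 (by simp)
      (by norm_num)
    refine ⟨c2 + 2 * c1, fun F hF t ht => ?_⟩
    obtain ⟨u, hu, hu'⟩ := h2 F hF
    have hc1 : 0 ≤ c1 := le_trans (abs_nonneg _) (h1 F hF t ht)
    have hder := hF.1 (n-(i+1)) (by omega)
    rw [show n - (i+1) + 1 = n - i by omega] at hder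
    have key : |F (n-(i+1)) t - F (n-(i+1)) u| ≤ 2 * c1 := by
      have hle : |t - u| ≤ 2 := by
        rw [abs_le]; exact ⟨by linarith [ht.1, hu.2], by linarith [ht.2, hu.1]⟩
      rcases lt_trichotomy t u with h | h | h
      · obtain ⟨ξ, hξ, e⟩ := mvt hder ht hu h
        have := h1 F hF ξ ⟨by linarith [ht.1, hξ.1], by linarith [hu.2, hξ.2]⟩
        rw [abs_sub_comm, e, abs_mul, abs_sub_comm u t]
        nlinarith [abs_nonneg (F (n-i) ξ), abs_nonneg (t-u)]
      · rw [h]; simpa using hc1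
      · obtain ⟨ξ, hξ, e⟩ := mvt hder hu ht h
        have := h1 F hF ξ ⟨by linarith [hu.1, hξ.1], by linarith [ht.2, hξ.2]⟩
        rw [e, abs_mul]
        nlinarith [abs_nonneg (F (n-i) ξ), abs_nonneg (t-u)]
    have := abs_sub_abs_le_abs_sub (F (n-(i+1)) t) (F (n-(i+1)) u)
    linarith

lemma le_mval {n k : ℕ} (hk : k ≤ n) {σ : ℝ} {F : ℕ → ℝ → ℝ} (hF : Ch n σ F) :
    |F k 1| ≤ mval n k 1 σ := by
  obtain ⟨c, hc⟩ := unif_bound n σ (n-k) (by omega)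
  rw [show n - (n-k) = k by omega] at hc
  refine le_csSup ⟨c, ?_⟩ ⟨F 0, memW_of_dseq hF.1 hF.2.1 hF.2.2, ?_⟩
  · rintro y ⟨f, hf, rfl⟩
    exact hc _ (ch_of_memW hf) 1 (by simp)
  · rw [dseq_iter hF.1 k hk 1 (by simp)]

lemma core_half {n k : ℕ} (hk : k < n) {σ : ℝ}
    (hB : ∀ F, Ch n σ F → ∀ x, 0 ≤ x → x < 1 → F (k+1) x = 0 → |F k x| ≤ mval n k 1 σ)
    {F : ℕ → ℝ → ℝ} (hF : Ch n σ F) {x : ℝ} (hx0 : 0 ≤ x) (hx1 : x ≤ 1)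
    (hmax : ∀ t ∈ I, |F k t| ≤ |F k x|) : |F k x| ≤ mval n k 1 σ := by
  rcases hx1.eq_or_lt with rfl | hx1
  · exact le_mval hk.le hF
  · have hI : I ∈ nhds x := Icc_mem_nhds (by linarith) hx1
    have hd : HasDerivAt (F k) (F (k+1) x) x :=
      (hF.1 k hk x ⟨by linarith, hx1.le⟩).hasDerivAt hI
    have hloc : IsLocalMax (fun t => F k t ^ 2) x := by
      filter_upwards [hI] with t ht
      exact sq_le_sq.2 (hmax t ht)
    have h0 := hloc.hasDerivAt_eq_zero (hd.pow 2)
    have h0' : F k x * F (k+1) x = 0 := by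
      have : 2 * (F k x * F (k+1) x) = 0 := by
        rw [← h0]; push_cast; ring
      linarith
    rcases mul_eq_zero.1 h0' with h | h
    · rw [h, abs_zero]
      exact le_trans (abs_nonneg _) (le_mval hk.le hF)
    · exact hB F hF x hx0 hx1 h

lemma core {n k : ℕ} (hk : k < n) {σ : ℝ}
    (hB : ∀ F, Ch n σ F → ∀ x, 0 ≤ x → x < 1 → F (k+1) x = 0 → |F k x| ≤ mval n k 1 σ)
    {F : ℕ → ℝ → ℝ} (hF : Ch n σ F) : ∀ t ∈ I, |F k t| ≤ mval n k 1 σ := by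
  have hcont : ContinuousOn (fun t => |F k t|) I :=
    ContinuousOn.abs (fun t ht => (hF.1 k hk t ht).continuousWithinAt)
  obtain ⟨x, hx, hmax⟩ := isCompact_Icc.exists_isMaxOn (⟨0, by simp⟩ : I.Nonempty) hcont
  have hmax' : ∀ t ∈ I, |F k t| ≤ |F k x| := fun t ht => hmax ht
  suffices |F k x| ≤ mval n k 1 σ from fun t ht => (hmax' t ht).trans this
  rcases le_total 0 x with h | h
  · exact core_half hk hB hF h hx.2 hmax'
  · have := core_half hk hB (ch_reflect hF) (x := -x) (by linarith) (by linarith [hx.1])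
      (by
        intro t ht
        simpa [abs_mul] using hmax' (-t) ⟨by linarith [ht.2], by linarith [ht.1]⟩)
    simpa [abs_mul] using this

lemma final_of_core {n k : ℕ} (hk : k < n) {σ : ℝ}
    (hB : ∀ F, Ch n σ F → ∀ x, 0 ≤ x → x < 1 → F (k+1) x = 0 → |F k x| ≤ mval n k 1 σ) :
    (∀ x ∈ Icc (-1:ℝ) 1, mval n k x σ ≤ mval n k 1 σ) ∧
    sSup {y | ∃ x ∈ Icc (-1:ℝ) 1, y = mval n k x σ} = mval n k 1 σ := by
  have h1 : ∀ x ∈ Icc (-1:ℝ) 1, mval n k x σ ≤ mval n k 1 σ := by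
    intro x hx
    refine Real.sSup_le ?_ (Real.sSup_nonneg ?_)
    · rintro y ⟨f, hf, rfl⟩
      exact core hk hB (ch_of_memW hf) x hx
    · rintro y ⟨f, hf, rfl⟩
      exact abs_nonneg _
  refine ⟨h1, IsGreatest.csSup_eq ⟨⟨1, by simp, rfl⟩, ?_⟩⟩
  rintro y ⟨x, hx, rfl⟩
  exact h1 x hx

/-- final comparison check -/
def fchk (n k : ℕ) (K N Nq : ℤ) (c : List ℤ) (l : List (ℤ × ℤ)) : Bool :=
  decide (k.factorial * |c.getD k 0| * N ≤ Nq * ((n+1).descFactorial k * |splZ (n+1-k) K l|))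

lemma master {f n k : ℕ} (hk1 : 1 ≤ k) (hk : k + 2 ≤ n) {K N N1 e : ℤ} {l : List (ℤ × ℤ)}
    (hh : hchk f n K N N1 e l = true)
    (hc : ∀ lam x : ℝ, 1 ≤ lam → 0 ≤ x → x < 1 → ∃ (lo hi s Nq : ℤ) (c t : List ℤ),
      (qchk n k lo hi s Nq c t && fchk n k K N Nq c l) = true ∧
      -1 ≤ x + lo / (lam * 100) ∧ x + hi / (lam * 100) ≤ 1)
    {σ : ℝ} (hσ : sigmaN n < σ) :
    (∀ x ∈ Icc (-1:ℝ) 1, mval n k x σ ≤ mval n k 1 σ) ∧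
    sSup {y | ∃ x ∈ Icc (-1:ℝ) 1, y = mval n k x σ} = mval n k 1 σ := by
  have hs0 : 0 < sigmaN n := by unfold sigmaN; positivity
  obtain ⟨lam, hlam, hσ'⟩ : ∃ lam : ℝ, 1 ≤ lam ∧ σ = sigmaN n * lam^n := by
    have h1 : 1 ≤ σ / sigmaN n := by rw [le_div_iff₀ hs0]; linarith
    refine ⟨(σ / sigmaN n) ^ ((n:ℝ)⁻¹), Real.one_le_rpow h1 (by positivity), ?_⟩
    rw [Real.rpow_inv_natCast_pow (by linarith) (by omega)]
    field_simp
  refine final_of_core (by omega) ?_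
  intro F hF x hx0 hx1 hFx
  obtain ⟨lo, hi, s, Nq, c, t, hqf, h1, h2⟩ := hc lam x hlam hx0 hx1
  rw [Bool.and_eq_true] at hqf
  obtain ⟨hq, hf⟩ := hqf
  have hA := qcompare hk hq hlam hσ' hF.1 hF.2.1 hF.2.2 ⟨by linarith, hx1.le⟩ hFx h1 h2
  refine hA.trans ?_
  have hmem := spline_mem (by omega) hh hlam hσ'
  have hB := le_mval (k := k) (by omega) (ch_of_memW hmem)
  rw [dseq_iter (dseq_HS n e N K l (lam*100)) k (by omega) 1 (by simp), HS_end _ _ _ _ _ _ _ (by omega)]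
    at hB
  refine le_trans ?_ hB
  have hN : (0:ℝ) < N := by
    simp only [hchk, Bool.and_eq_true, decide_eq_true_eq] at hh
    exact_mod_cast hh.1.1.1.1.1
  have hNq : (0:ℝ) < Nq := by
    simp only [qchk, Bool.and_eq_true, decide_eq_true_eq] at hq
    exact_mod_cast hq.1.1.1.1.1.2
  have hμ : 0 ≤ lam * 100 := by linarith
  have hfr : (k.factorial * |((c.getD k 0 : ℤ):ℝ)| * N : ℝ) ≤
      Nq * ((n+1).descFactorial k * |((splZ (n+1-k) K l : ℤ):ℝ)|) := by
    simp only [fchk, decide_eq_true_eq] at hf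
    exact_mod_cast hf
  rw [abs_div, abs_mul, abs_mul, abs_of_pos hN, abs_of_nonneg (pow_nonneg hμ k), Nat.abs_cast,
    mul_div_right_comm _ _ (N:ℝ)]
  refine mul_le_mul_of_nonneg_right ?_ (pow_nonneg hμ k)
  rw [div_le_div_iff₀ hNq hN]
  linarith

lemma range_one {lam x : ℝ} (h1 : 1 ≤ lam) (h0 : 0 ≤ x) (hx : x < 1) :
    -1 ≤ x + ((-100 : ℤ):ℝ) / (lam * 100) ∧ x + ((0 : ℤ):ℝ) / (lam * 100) ≤ 1 := by
  have hl : 0 < lam * 100 := by linarith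
  constructor
  · have : (-1:ℝ) ≤ ((-100 : ℤ):ℝ) / (lam * 100) := by
      rw [le_div_iff₀ hl]; push_cast; linarith
    linarith
  · simp; linarith

lemma master1 {f n k : ℕ} (hk1 : 1 ≤ k) (hk : k + 2 ≤ n) {K N N1 e : ℤ} {l : List (ℤ × ℤ)}
    (hh : hchk f n K N N1 e l = true) (s Nq : ℤ) (c t : List ℤ)
    (hc : (qchk n k (-100) 0 s Nq c t && fchk n k K N Nq c l) = true)
    {σ : ℝ} (hσ : sigmaN n < σ) :
    (∀ x ∈ Icc (-1:ℝ) 1, mval n k x σ ≤ mval n k 1 σ) ∧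
    sSup {y | ∃ x ∈ Icc (-1:ℝ) 1, y = mval n k x σ} = mval n k 1 σ :=
  master hk1 hk hh (fun _ _ h1 h0 hx => ⟨-100, 0, s, Nq, c, t, hc, range_one h1 h0 hx⟩) hσ

lemma master2 {f n k : ℕ} (hk1 : 1 ≤ k) (hk : k + 2 ≤ n) {K N N1 e : ℤ} {l : List (ℤ × ℤ)}
    (hh : hchk f n K N N1 e l = true) (s Nq : ℤ) (c t : List ℤ)
    (hc : (qchk n k (-100) 50 s Nq c t && fchk n k K N Nq c l) = true)
    (s' Nq' : ℤ) (c' t' : List ℤ)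
    (hc' : (qchk n k (-150) 0 s' Nq' c' t' && fchk n k K N Nq' c' l) = true)
    {σ : ℝ} (hσ : sigmaN n < σ) :
    (∀ x ∈ Icc (-1:ℝ) 1, mval n k x σ ≤ mval n k 1 σ) ∧
    sSup {y | ∃ x ∈ Icc (-1:ℝ) 1, y = mval n k x σ} = mval n k 1 σ := by
  refine master hk1 hk hh (fun lam x h1 h0 hx => ?_) hσ
  have hl : 0 < lam * 100 := by linarith
  by_cases hcase : x + ((50 : ℤ):ℝ) / (lam * 100) ≤ 1
  · exact ⟨-100, 50, s, Nq, c, t, hc, (range_one h1 h0 hx).1, hcase⟩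
  · refine ⟨-150, 0, s', Nq', c', t', hc', ?_, (range_one h1 h0 hx).2⟩
    have e : ((-150 : ℤ):ℝ) / (lam * 100) = ((50 : ℤ):ℝ) / (lam * 100) - 200 / (lam * 100) := by
      push_cast; ring
    have : 200 / (lam * 100) ≤ 2 := by rw [div_le_iff₀ hl]; linarith
    have e2 : ((-150 : ℤ):ℝ) / (lam * 100) = -3 * (((50 : ℤ):ℝ) / (lam * 100)) := by
      push_cast; ring
    have h3 : ((50 : ℤ):ℝ) / (lam * 100) ≤ 1/2 := by
      rw [div_le_iff₀ hl]; push_cast; linarith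
    linarith

lemma hcert5 : hchk 8 5 359 10000000000000000000 2666666666 (-9799999999999999822)
    [(389677, 0), (-59716813, 124), (98397990, 142), (-1780638934, 234), (1741451310, 237)] = true := by
  decide +kernel

lemma hcert6 : hchk 8 6 243 100000000000000000000 457142857 97999999999999998224
    [(-4841483, 0), (8167723, 10), (-14744696, 64), (59052858, 115), (-47608979, 134)] = true := by
  decide +kernel

lemma hcert7 : hchk 8 7 202 10000000000000000000000 800000000 9194652412541246211377
    [(-10208120, 0), (220824123, 22), (-239536112, 26), (91891228, 75), (-62734628, 100)] = true := by
  decide +kernel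

lemma hcert8 : hchk 8 8 217 10000000000000000000000000 14222222222 (-9799999999999999822364316)
    [(3360679, 0), (-251042161, 50), (551864074, 64), (-6489885616, 111), (6181171035, 115)] = true := by
  decide +kernel

lemma hcert9 : hchk 8 9 168 100000000000000000000000000 2560000000 97999999999999998223643161
    [(-30562018, 0), (87999999, 9), (-168310479, 29), (495636350, 59), (-384680693, 72)] = true := by
  decide +kernel

lemma hcert10 : hchk 8 10 167 10000000000000000000000000000 4654545454 9074374584937622899880518562
    [(-4080962, 0), (213552564, 28), (-464352469, 37), (679195491, 59), (-424314624, 79)] = true := by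
  decide +kernel

lemma hcert11 : hchk 8 11 150 1000000000000000000000000000000 8533333333 979999999999999982236431606000
    [(-18858919, 0), (816502591, 20), (-1244090768, 25), (3269562473, 52), (-2822798645, 58)] = true := by
  decide +kernel

lemma case_5_1 {σ : ℝ} (hσ : sigmaN 5 < σ) :
    (∀ x ∈ Icc (-1:ℝ) 1, mval 5 1 x σ ≤ mval 5 1 1 σ) ∧
    sSup {y | ∃ x ∈ Icc (-1:ℝ) 1, y = mval 5 1 x σ} = mval 5 1 1 σ :=
  master1 (by norm_num) (by norm_num) hcert5
    (-1) 10000000000000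
    [10020000000000, 1038268588011, 0, -603530770, -6799039, -16016]
    [-100, -79, -32, 0]
    (by decide +kernel) hσ

lemma case_5_2 {σ : ℝ} (hσ : sigmaN 5 < σ) :
    (∀ x ∈ Icc (-1:ℝ) 1, mval 5 2 x σ ≤ mval 5 2 1 σ) ∧
    sSup {y | ∃ x ∈ Icc (-1:ℝ) 1, y = mval 5 2 x σ} = mval 5 2 1 σ :=
  master1 (by norm_num) (by norm_num) hcert5
    (-1) 10000000000000
    [10020000000000, 1680861456892, 37328981189, 0, -3854037, -16016]
    [-100, -74, -25, 0]
    (by decide +kernel) hσ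

lemma case_5_3 {σ : ℝ} (hσ : sigmaN 5 < σ) :
    (∀ x ∈ Icc (-1:ℝ) 1, mval 5 3 x σ ≤ mval 5 3 1 σ) ∧
    sSup {y | ∃ x ∈ Icc (-1:ℝ) 1, y = mval 5 3 x σ} = mval 5 3 1 σ :=
  master1 (by norm_num) (by norm_num) hcert5
    (-1) 10000000000
    [10020000000, 2287394324, 78963499, 741096, 0, -16]
    [-100, -65, -20, 0]
    (by decide +kernel) hσ

lemma case_6_1 {σ : ℝ} (hσ : sigmaN 6 < σ) :
    (∀ x ∈ Icc (-1:ℝ) 1, mval 6 1 x σ ≤ mval 6 1 1 σ) ∧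
    sSup {y | ∃ x ∈ Icc (-1:ℝ) 1, y = mval 6 1 x σ} = mval 6 1 1 σ :=
  master1 (by norm_num) (by norm_num) hcert6
    1 100000000000000
    [100200000000000, 15646650487932, 0, -22150345740, -452655682, -2788309, -3203]
    [-100, -88, -58, -22, 0]
    (by decide +kernel) hσ

lemma case_6_2 {σ : ℝ} (hσ : sigmaN 6 < σ) :
    (∀ x ∈ Icc (-1:ℝ) 1, mval 6 2 x σ ≤ mval 6 2 1 σ) ∧
    sSup {y | ∃ x ∈ Icc (-1:ℝ) 1, y = mval 6 2 x σ} = mval 6 2 1 σ :=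
  master1 (by norm_num) (by norm_num) hcert6
    1 100000000000000
    [100200000000000, 24481769952732, 799060749337, 0, -209953473, -1865612, -3203]
    [-100, -87, -54, -18, 0]
    (by decide +kernel) hσ

lemma case_6_3 {σ : ℝ} (hσ : sigmaN 6 < σ) :
    (∀ x ∈ Icc (-1:ℝ) 1, mval 6 3 x σ ≤ mval 6 3 1 σ) ∧
    sSup {y | ∃ x ∈ Icc (-1:ℝ) 1, y = mval 6 3 x σ} = mval 6 3 1 σ :=
  master1 (by norm_num) (by norm_num) hcert6
    1 100000000000000
    [100200000000000, 30542770037599, 1417080829915, 18327701013, 0, -1041437, -3203]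
    [-100, -85, -50, -15, 0]
    (by decide +kernel) hσ

lemma case_6_4 {σ : ℝ} (hσ : sigmaN 6 < σ) :
    (∀ x ∈ Icc (-1:ℝ) 1, mval 6 4 x σ ≤ mval 6 4 1 σ) ∧
    sSup {y | ∃ x ∈ Icc (-1:ℝ) 1, y = mval 6 4 x σ} = mval 6 4 1 σ :=
  master1 (by norm_num) (by norm_num) hcert6
    1 100000000000000
    [100200000000000, 36406441815434, 2086539520432, 39615818295, 255942673, 0, -3203]
    [-100, -82, -46, -13, 0]
    (by decide +kernel) hσ

lemma case_7_1 {σ : ℝ} (hσ : sigmaN 7 < σ) :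
    (∀ x ∈ Icc (-1:ℝ) 1, mval 7 1 x σ ≤ mval 7 1 1 σ) ∧
    sSup {y | ∃ x ∈ Icc (-1:ℝ) 1, y = mval 7 1 x σ} = mval 7 1 1 σ :=
  master1 (by norm_num) (by norm_num) hcert7
    (-1) 100000000000000000
    [100200000000000000, 22316516142528416, 0, -67536647087840, -2219010931488, -26383258437, -113843287, -64064]
    [-100, -92, -71, -43, -15, 0]
    (by decide +kernel) hσ

lemma case_7_2 {σ : ℝ} (hσ : sigmaN 7 < σ) :
    (∀ x ∈ Icc (-1:ℝ) 1, mval 7 2 x σ ≤ mval 7 2 1 σ) ∧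
    sSup {y | ∃ x ∈ Icc (-1:ℝ) 1, y = mval 7 2 x σ} = mval 7 2 1 σ :=
  master1 (by norm_num) (by norm_num) hcert7
    (-1) 100000000000000000
    [100200000000000000, 34627519910574562, 1610468365219199, 0, -978787952077, -15974667698, -81116613, -64064]
    [-100, -92, -70, -40, -13, 0]
    (by decide +kernel) hσ

lemma case_7_3 {σ : ℝ} (hσ : sigmaN 7 < σ) :
    (∀ x ∈ Icc (-1:ℝ) 1, mval 7 3 x σ ≤ mval 7 3 1 σ) ∧
    sSup {y | ∃ x ∈ Icc (-1:ℝ) 1, y = mval 7 3 x σ} = mval 7 3 1 σ :=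
  master1 (by norm_num) (by norm_num) hcert7
    (-1) 100000000000000000
    [100200000000000000, 42429200512431862, 2754006398635593, 51111004257707, 0, -7509380912, -53886749, -64064]
    [-100, -91, -68, -38, -11, 0]
    (by decide +kernel) hσ

lemma case_7_4 {σ : ℝ} (hσ : sigmaN 7 < σ) :
    (∀ x ∈ Icc (-1:ℝ) 1, mval 7 4 x σ ≤ mval 7 4 1 σ) ∧
    sSup {y | ∃ x ∈ Icc (-1:ℝ) 1, y = mval 7 4 x σ} = mval 7 4 1 σ :=
  master1 (by norm_num) (by norm_num) hcert7
    (-1) 100000000000000000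
    [100200000000000000, 48103871718066935, 3659402471783816, 93730720725293, 845778768121, 0, -29237594, -64064]
    [-100, -91, -66, -35, -10, 0]
    (by decide +kernel) hσ

lemma case_8_1 {σ : ℝ} (hσ : sigmaN 8 < σ) :
    (∀ x ∈ Icc (-1:ℝ) 1, mval 8 1 x σ ≤ mval 8 1 1 σ) ∧
    sSup {y | ∃ x ∈ Icc (-1:ℝ) 1, y = mval 8 1 x σ} = mval 8 1 1 σ :=
  master1 (by norm_num) (by norm_num) hcert8
    1 10000000000000000000
    [10020000000000000000, 3034266072253764324, 0, -17514676457812046, -842087519728893, -16095857766668, -139704156784, -470243612, -128128]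
    [-100, -95, -79, -57, -33, -11, 0]
    (by decide +kernel) hσ

lemma case_8_2 {σ : ℝ} (hσ : sigmaN 8 < σ) :
    (∀ x ∈ Icc (-1:ℝ) 1, mval 8 2 x σ ≤ mval 8 2 1 σ) ∧
    sSup {y | ∃ x ∈ Icc (-1:ℝ) 1, y = mval 8 2 x σ} = mval 8 2 1 σ :=
  master1 (by norm_num) (by norm_num) hcert8
    1 10000000000000000000
    [10020000000000000000, 4695935720747632164, 297737579965585842, 0, -366972661027857, -9536530488391, -94843103379, -349485624, -128128]
    [-100, -94, -78, -55, -31, -9, 0]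
    (by decide +kernel) hσ

lemma case_8_3 {σ : ℝ} (hσ : sigmaN 8 < σ) :
    (∀ x ∈ Icc (-1:ℝ) 1, mval 8 3 x σ ≤ mval 8 3 1 σ) ∧
    sSup {y | ∃ x ∈ Icc (-1:ℝ) 1, y = mval 8 3 x σ} = mval 8 3 1 σ :=
  master1 (by norm_num) (by norm_num) hcert8
    1 1000000000000000000
    [1002000000000000000, 572669052370301715, 50445232238943153, 1296481469918189, 0, -431265248830, -5827661732, -24924333, -12813]
    [-100, -94, -77, -54, -29, -8, 0]
    (by decide +kernel) hσ

lemma case_8_4 {σ : ℝ} (hσ : sigmaN 8 < σ) :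
    (∀ x ∈ Icc (-1:ℝ) 1, mval 8 4 x σ ≤ mval 8 4 1 σ) ∧
    sSup {y | ∃ x ∈ Icc (-1:ℝ) 1, y = mval 8 4 x σ} = mval 8 4 1 σ :=
  master1 (by norm_num) (by norm_num) hcert8
    1 10000000000000000000
    [10020000000000000000, 6443711779396432298, 658760941236737954, 23092413221370190, 295918217220135, 0, -27536914789, -163755481, -128128]
    [-100, -94, -76, -52, -27, -7, 0]
    (by decide +kernel) hσ

lemma case_8_5 {σ : ℝ} (hσ : sigmaN 8 < σ) :
    (∀ x ∈ Icc (-1:ℝ) 1, mval 8 5 x σ ≤ mval 8 5 1 σ) ∧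
    sSup {y | ∃ x ∈ Icc (-1:ℝ) 1, y = mval 8 5 x σ} = mval 8 5 1 σ :=
  master1 (by norm_num) (by norm_num) hcert8
    1 1000000000000000000
    [1002000000000000000, 696832005329458614, 78157967324064225, 3153679520175996, 55047074966207, 379563793837, 0, -8608415, -12813]
    [-100, -93, -75, -51, -26, -7, 0]
    (by decide +kernel) hσ

lemma case_9_1 {σ : ℝ} (hσ : sigmaN 9 < σ) :
    (∀ x ∈ Icc (-1:ℝ) 1, mval 9 1 x σ ≤ mval 9 1 1 σ) ∧
    sSup {y | ∃ x ∈ Icc (-1:ℝ) 1, y = mval 9 1 x σ} = mval 9 1 1 σ :=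
  master2 (by norm_num) (by norm_num) hcert9
    (-1) 1000000000000000000000
    [36938900661563071756, 103804609958935942417, 0, -182888871657080547, -866447332897803, 79760182494764, 678075591262, -8614134408, -108504582, -256256]
    [-100, -93, -74, -47, -16, 14, 39, 50]
    (by decide +kernel)
    (-1) 1000000000000000000000
    [1002000000000000000000, 279045558655369251863, 0, -1403453729772553901, -66297306510465722, -1341108475045464, -14200574831436, -81232494847, -233585734, -256256]
    [-150, -143, -125, -98, -67, -37, -12, 0]
    (by decide +kernel) hσ

lemma case_9_2 {σ : ℝ} (hσ : sigmaN 9 < σ) :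
    (∀ x ∈ Icc (-1:ℝ) 1, mval 9 2 x σ ≤ mval 9 2 1 σ) ∧
    sSup {y | ∃ x ∈ Icc (-1:ℝ) 1, y = mval 9 2 x σ} = mval 9 2 1 σ :=
  master2 (by norm_num) (by norm_num) hcert9
    (-1) 1000000000000000000000
    [-992701286271013242308, 15075434473704189231, 5781892535014384611, 0, -5208747273182937, -35755967549641, 1215802611608, 14805738602, 11550962, -256256]
    [-100, -86, -62, -32, -1, 25, 44, 50]
    (by decide +kernel)
    (-1) 1000000000000000000000
    [1002000000000000000000, 436279226050367164147, 25874901801568896815, 0, -30373958870131172, -848778394301077, -10481644721710, -66624475534, -210266716, -256256]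
    [-150, -143, -124, -96, -64, -34, -10, 0]
    (by decide +kernel) hσ

lemma case_9_3 {σ : ℝ} (hσ : sigmaN 9 < σ) :
    (∀ x ∈ Icc (-1:ℝ) 1, mval 9 3 x σ ≤ mval 9 3 1 σ) ∧
    sSup {y | ∃ x ∈ Icc (-1:ℝ) 1, y = mval 9 3 x σ} = mval 9 3 1 σ :=
  master2 (by norm_num) (by norm_num) hcert9
    1 1000000000000000000000
    [-228094151384814059353, -102620578286166084043, 1060939563796999319, 190057003959274497, 0, -90676140901865, -524278746368, 11778291110, 122201809, 256256]
    [-100, -93, -75, -48, -18, 12, 37, 50]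
    (by decide +kernel)
    (-1) 1000000000000000000000
    [1002000000000000000000, 540657263652028681519, 45229044041239996052, 1128532437169416361, 0, -416621468651079, -7120523931072, -53108136057, -188269086, -256256]
    [-150, -142, -122, -93, -61, -31, -9, 0]
    (by decide +kernel) hσ

lemma case_9_4 {σ : ℝ} (hσ : sigmaN 9 < σ) :
    (∀ x ∈ Icc (-1:ℝ) 1, mval 9 4 x σ ≤ mval 9 4 1 σ) ∧
    sSup {y | ∃ x ∈ Icc (-1:ℝ) 1, y = mval 9 4 x σ} = mval 9 4 1 σ :=
  master2 (by norm_num) (by norm_num) hcert9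
    1 1000000000000000000000
    [878126277354250636029, -50319673558767618128, -4891833720468463071, 65889234737222863, 4520289173196376, 0, -1183921550990, -8459516737, 25209644, 256256]
    [-100, -90, -67, -37, -5, 23, 43, 50]
    (by decide +kernel)
    (-1) 1000000000000000000000
    [1002000000000000000000, 619158483306925635309, 61327782271535545041, 2129832144033655129, 28241239718061139, 0, -3784454824306, -39364961391, -165440974, -256256]
    [-150, -142, -120, -90, -58, -29, -8, 0]
    (by decide +kernel) hσ

lemma case_9_5 {σ : ℝ} (hσ : sigmaN 9 < σ) :
    (∀ x ∈ Icc (-1:ℝ) 1, mval 9 5 x σ ≤ mval 9 5 1 σ) ∧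
    sSup {y | ∃ x ∈ Icc (-1:ℝ) 1, y = mval 9 5 x σ} = mval 9 5 1 σ :=
  master2 (by norm_num) (by norm_num) hcert9
    (-1) 1000000000000000000000
    [654806678056043678872, 83699789485601496737, -3783933523385997452, -184223297747372817, 2544435848902362, 113316228772177, 0, -20685467601, -158575485, -256256]
    [-100, -94, -77, -51, -21, 8, 32, 48]
    (by decide +kernel)
    (-1) 1000000000000000000000
    [1002000000000000000000, 687685010583956461183, 76643794923092873788, 3141947842221403511, 58150067978648521, 458114470408447, 0, -23357636384, -138241249, -256256]
    [-150, -140, -116, -86, -55, -27, -7, 0]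
    (by decide +kernel) hσ

lemma case_9_6 {σ : ℝ} (hσ : sigmaN 9 < σ) :
    (∀ x ∈ Icc (-1:ℝ) 1, mval 9 6 x σ ≤ mval 9 6 1 σ) ∧
    sSup {y | ∃ x ∈ Icc (-1:ℝ) 1, y = mval 9 6 x σ} = mval 9 6 1 σ :=
  master2 (by norm_num) (by norm_num) hcert9
    (-1) 1000000000000000000000
    [-502108046841159768365, 88551021447250463136, 2798602110277337416, -138966466343935250, -2986271818556415, 43453926630181, 1006318588756, 0, -68800542, -256256]
    [-100, -92, -72, -43, -10, 19, 41, 50]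
    (by decide +kernel)
    (-1) 1000000000000000000000
    [1002000000000000000000, 761705189418240786769, 94324674924116704664, 4383281019021012642, 96809422201359996, 1077928512704175, 5329670241272, 0, -97275591, -256256]
    [-150, -136, -111, -81, -51, -24, -6, 0]
    (by decide +kernel) hσ

lemma case_10_1 {σ : ℝ} (hσ : sigmaN 10 < σ) :
    (∀ x ∈ Icc (-1:ℝ) 1, mval 10 1 x σ ≤ mval 10 1 1 σ) ∧
    sSup {y | ∃ x ∈ Icc (-1:ℝ) 1, y = mval 10 1 x σ} = mval 10 1 1 σ :=
  master2 (by norm_num) (by norm_num) hcert10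
    (-1) 1000000000000000000000
    [38702369979929527511, 126892960664486365161, 0, -335075432598401615, -2024129958682996, 224605695093054, 2483508663102, -39948590427, -693505093, -2070954, 5125]
    [-96, -83, -63, -39, -13, 12, 32, 45, 50]
    (by decide +kernel)
    1 100000000000000000000000
    [100200000000000000000000, 34672938803717137957879, 0, -272952034463447607324, -16419381335430166427, -432827537684320097, -6199081690967017, -51075776505146, -238273107389, -569521368, -512512]
    [-150, -145, -131, -109, -83, -56, -30, -10, 0]
    (by decide +kernel) hσ

lemma case_10_2 {σ : ℝ} (hσ : sigmaN 10 < σ) :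
    (∀ x ∈ Icc (-1:ℝ) 1, mval 10 2 x σ ≤ mval 10 2 1 σ) ∧
    sSup {y | ∃ x ∈ Icc (-1:ℝ) 1, y = mval 10 2 x σ} = mval 10 2 1 σ :=
  master2 (by norm_num) (by norm_num) hcert10
    1 10000000000000000000000
    [-9964052568154261406073, 122666200510166852863, 66788593920611981305, 0, -70237807730034593, -390645088493317, 22121055417465, 213152366281, -1466648505, -21467481, -51251]
    [-100, -95, -79, -56, -29, -1, 24, 43, 50]
    (by decide +kernel)
    1 100000000000000000000000
    [100200000000000000000000, 54011935916281073031075, 3972258810328922349370, 0, -7368441518597516626, -266328825776482508, -4406970651735314, -39839120798445, -200241194548, -515796807, -512512]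
    [-150, -145, -130, -108, -81, -53, -28, -8, 0]
    (by decide +kernel) hσ

lemma case_10_3 {σ : ℝ} (hσ : sigmaN 10 < σ) :
    (∀ x ∈ Icc (-1:ℝ) 1, mval 10 3 x σ ≤ mval 10 3 1 σ) ∧
    sSup {y | ∃ x ∈ Icc (-1:ℝ) 1, y = mval 10 3 x σ} = mval 10 3 1 σ :=
  master2 (by norm_num) (by norm_num) hcert10
    1 10000000000000000000000
    [-2479239541359944854491, -1203742294494375825751, 15994825620828856140, 3120309826138856970, 0, -2120281888149624, -15722094148174, 405750483464, 5513278660, 12060856, -51251]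
    [-100, -87, -67, -42, -15, 10, 31, 45, 50]
    (by decide +kernel)
    1 100000000000000000000000
    [100200000000000000000000, 66436750132755787113815, 6847553529537629223476, 211888036187399408222, 0, -125952644020787585, -2854607518063251, -29892979939781, -165975441242, -466670624, -512512]
    [-150, -145, -129, -106, -79, -51, -26, -7, 0]
    (by decide +kernel) hσ

lemma case_10_4 {σ : ℝ} (hσ : sigmaN 10 < σ) :
    (∀ x ∈ Icc (-1:ℝ) 1, mval 10 4 x σ ≤ mval 10 4 1 σ) ∧
    sSup {y | ∃ x ∈ Icc (-1:ℝ) 1, y = mval 10 4 x σ} = mval 10 4 1 σ :=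
  master2 (by norm_num) (by norm_num) hcert10
    (-1) 10000000000000000000000
    [9404803606973829277602, -403488805105662635874, -64839392407951922680, 651911662943388314, 72900017923130492, 0, -26239998243851, -153403340239, 2560655628, 25881482, 51251]
    [-100, -95, -80, -58, -31, -3, 22, 42, 50]
    (by decide +kernel)
    1 100000000000000000000000
    [100200000000000000000000, 75503464554863152924621, 9121715782199102066003, 388915383631931329550, 6408766810268573520, 0, -1426467359178205, -20551423077381, -133224047275, -419001585, -512512]
    [-150, -144, -128, -104, -77, -48, -24, -6, 0]
    (by decide +kernel) hσ

lemma case_10_5 {σ : ℝ} (hσ : sigmaN 10 < σ) :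
    (∀ x ∈ Icc (-1:ℝ) 1, mval 10 5 x σ ≤ mval 10 5 1 σ) ∧
    sSup {y | ∃ x ∈ Icc (-1:ℝ) 1, y = mval 10 5 x σ} = mval 10 5 1 σ :=
  master2 (by norm_num) (by norm_num) hcert10
    (-1) 10000000000000000000000
    [6517086433708398221416, 904407829651015691408, -43708411082009052179, -2320265433472951520, 34029703552138133, 1680416467598024, 0, -375484323381, -2946274241, 1618893, 51251]
    [-100, -92, -73, -48, -20, 7, 30, 45, 50]
    (by decide +kernel)
    1 100000000000000000000000
    [100200000000000000000000, 82568465573571662891443, 11068639041637541122901, 549322805301856962683, 12457117199175492048, 122663699283684145, 0, -11023581663361, -99224741084, -368762259, -512512]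
    [-150, -144, -127, -102, -74, -46, -22, -6, 0]
    (by decide +kernel) hσ

lemma case_10_6 {σ : ℝ} (hσ : sigmaN 10 < σ) :
    (∀ x ∈ Icc (-1:ℝ) 1, mval 10 6 x σ ≤ mval 10 6 1 σ) ∧
    sSup {y | ∃ x ∈ Icc (-1:ℝ) 1, y = mval 10 6 x σ} = mval 10 6 1 σ :=
  master2 (by norm_num) (by norm_num) hcert10
    1 10000000000000000000000
    [-6687065346132697773376, 903010176908152444859, 50835689599034947634, -1966449791766658810, -69273622384378149, 881689357626807, 32869533446271, 0, -4931210283, -34944147, -51251]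
    [-100, -95, -81, -60, -34, -7, 18, 38, 50]
    (by decide +kernel)
    1 100000000000000000000000
    [100200000000000000000000, 89522102698759069758800, 13027598110092501717052, 716385290259480501124, 18961104115184050265, 258302546381948645, 1615994810991387, 0, -59154525060, -308577811, -512512]
    [-150, -143, -125, -100, -71, -44, -21, -5, 0]
    (by decide +kernel) hσ

lemma case_11_1 {σ : ℝ} (hσ : sigmaN 11 < σ) :
    (∀ x ∈ Icc (-1:ℝ) 1, mval 11 1 x σ ≤ mval 11 1 1 σ) ∧
    sSup {y | ∃ x ∈ Icc (-1:ℝ) 1, y = mval 11 1 x σ} = mval 11 1 1 σ :=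
  master2 (by norm_num) (by norm_num) hcert11
    1 10000000000000000000000000
    [368843919834721217766612, 1292494413292017705443219, 0, -3537862085315179358949, -20437348640282325645, 2499348730303192159, 26282455293237246, -514618786772052, -8159633932270, -6088209876, 316522962, 1025024]
    [-100, -95, -82, -62, -38, -13, 12, 32, 45, 50]
    (by decide +kernel)
    (-1) 10000000000000000000000000
    [10020000000000000000000000, 4237263840423762568331441, 0, -50157869127683598208233, -3749956943163921827498, -124948963309914436139, -2321590915998128698, -25846232989021309, -174344565514104, -684605034125, -1386877916, -1025024]
    [-150, -146, -135, -117, -95, -71, -46, -25, -8, 0]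
    (by decide +kernel) hσ

lemma case_11_2 {σ : ℝ} (hσ : sigmaN 11 < σ) :
    (∀ x ∈ Icc (-1:ℝ) 1, mval 11 2 x σ ≤ mval 11 2 1 σ) ∧
    sSup {y | ∃ x ∈ Icc (-1:ℝ) 1, y = mval 11 2 x σ} = mval 11 2 1 σ :=
  master2 (by norm_num) (by norm_num) hcert11
    (-1) 10000000000000000000000000
    [-9968413436069702886972101, 150735172925124637284415, 99305271054348602181805, 0, -157840587459813120188, -1099724158346555577, 79831930720062830, 1018325099669054, -10054820402077, -230733888186, -1146265585, -1025024]
    [-100, -96, -85, -68, -47, -24, -1, 20, 37, 47]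
    (by decide +kernel)
    (-1) 10000000000000000000000000
    [10020000000000000000000000, 6578718231123035964635506, 589880994591844415613573, 0, -1661302157773854201263, -75571164771134726540, -1613258348318933484, -19557044591518745, -140550543301447, -583866696516, -1258965755, -1025024]
    [-150, -146, -134, -116, -94, -69, -44, -23, -7, 0]
    (by decide +kernel) hσ

lemma case_11_3 {σ : ℝ} (hσ : sigmaN 11 < σ) :
    (∀ x ∈ Icc (-1:ℝ) 1, mval 11 3 x σ ≤ mval 11 3 1 σ) ∧
    sSup {y | ∃ x ∈ Icc (-1:ℝ) 1, y = mval 11 3 x σ} = mval 11 3 1 σ :=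
  master2 (by norm_num) (by norm_num) hcert11
    (-1) 10000000000000000000000000
    [-2099771877627060167265185, -1261246776272950247471054, 14587324320033614198889, 3502906513168267933657, 0, -2594586770449399538, -16743086023175878, 613058293027057, 6922261113025, -16212367827, -403591830, -1025024]
    [-100, -96, -83, -63, -40, -14, 10, 31, 45, 50]
    (by decide +kernel)
    (-1) 10000000000000000000000000
    [10020000000000000000000000, 8057219163053349440506910, 1008452819309451407038175, 38097879139462926070744, 0, -34946044384803417339, -1015098442765529814, -14134474639934506, -110913055106756, -494255034847, -1143803548, -1025024]
    [-150, -146, -134, -115, -92, -67, -43, -21, -6, 0]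
    (by decide +kernel) hσ

lemma case_11_4 {σ : ℝ} (hσ : sigmaN 11 < σ) :
    (∀ x ∈ Icc (-1:ℝ) 1, mval 11 4 x σ ≤ mval 11 4 1 σ) ∧
    sSup {y | ∃ x ∈ Icc (-1:ℝ) 1, y = mval 11 4 x σ} = mval 11 4 1 σ :=
  master2 (by norm_num) (by norm_num) hcert11
    (-1) 1000000000000000000000000
    [936420532891471086955097, -50700690571781537067780, -9395826932143188606873, 119173383420220987229, 15600590832061207148, 0, -8617422715521257, -66098351112624, 1405101279743, 20368429844, 59474167, -102502]
    [-97, -86, -70, -49, -26, -3, 19, 35, 46, 50]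
    (by decide +kernel)
    (-1) 10000000000000000000000000
    [10020000000000000000000000, 9105032732466788671369487, 1328947206622337383529851, 68798669950944708967374, 1389221564704355437780, 0, -488892561170762712, -9276279494220531, -83953573013721, -411685268876, -1036513266, -1025024]
    [-150, -146, -133, -114, -91, -65, -41, -20, -5, 0]
    (by decide +kernel) hσ

lemma case_11_5 {σ : ℝ} (hσ : sigmaN 11 < σ) :
    (∀ x ∈ Icc (-1:ℝ) 1, mval 11 5 x σ ≤ mval 11 5 1 σ) ∧
    sSup {y | ∃ x ∈ Icc (-1:ℝ) 1, y = mval 11 5 x σ} = mval 11 5 1 σ :=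
  master2 (by norm_num) (by norm_num) hcert11
    1 10000000000000000000000000
    [4875895056718376895578328, 1131659462586063562112730, -38468882786128403673782, -3269060975484247815905, 34547245079199972112, 2647429587215251967, 0, -758084430685338, -4618819616283, 53552551398, 544360538, 1025024]
    [-100, -96, -84, -65, -42, -16, 8, 29, 44, 50]
    (by decide +kernel)
    (-1) 10000000000000000000000000
    [10020000000000000000000000, 9884582623992871516098695, 1588796077578744505143185, 94994401794017134129220, 2617986380534771217592, 31767598441783740392, 0, -4681042627036563, -58067449223218, -331380806931, -931004831, -1025024]
    [-150, -145, -133, -113, -89, -64, -39, -19, -5, 0]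
    (by decide +kernel) hσ

lemma case_11_6 {σ : ℝ} (hσ : sigmaN 11 < σ) :
    (∀ x ∈ Icc (-1:ℝ) 1, mval 11 6 x σ ≤ mval 11 6 1 σ) ∧
    sSup {y | ∃ x ∈ Icc (-1:ℝ) 1, y = mval 11 6 x σ} = mval 11 6 1 σ :=
  master2 (by norm_num) (by norm_num) hcert11
    1 10000000000000000000000000
    [-6082494838877371225563136, 1064919337658185744347531, 57150319726932526407435, -2845038773181771353786, -99911089420221145702, 1581986161902987901, 61686722902563197, 0, -12186813896072, -101696380034, -87477010, 1025024]
    [-100, -94, -78, -56, -32, -7, 16, 34, 46, 50]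
    (by decide +kernel)
    (-1) 10000000000000000000000000
    [10020000000000000000000000, 10585137359075740093336788, 1825691265583067472568698, 119532796539969356276848, 3798679501295847703363, 62979112679422645992, 489696954904051657, 0, -31303065702137, -247245048734, -819138312, -1025024]
    [-150, -145, -132, -112, -87, -62, -38, -18, -5, 0]
    (by decide +kernel) hσ

end KarlinAux

/-- Karlin's conjecture in the spline range `σ > σ_n` for the listed
pairs `(n,k)`. -/
theorem karlin_conjecture_spline_range_small_n (n k : ℕ) (σ : ℝ)
    (hnk : ((n = 5 ∨ n = 6) ∧ 1 ≤ k ∧ k ≤ n - 2) ∨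
           ((n = 7 ∨ n = 8 ∨ n = 9) ∧ 1 ≤ k ∧ k ≤ n - 3) ∨
           ((n = 10 ∨ n = 11) ∧ 1 ≤ k ∧ k ≤ 6))
    (hσ : sigmaN n < σ) :
    (∀ x ∈ Icc (-1:ℝ) 1, mval n k x σ ≤ mval n k 1 σ) ∧
    sSup {y | ∃ x ∈ Icc (-1:ℝ) 1, y = mval n k x σ} = mval n k 1 σ := by
  rcases hnk with ⟨hn, hk1, hk2⟩ | ⟨hn, hk1, hk2⟩ | ⟨hn, hk1, hk2⟩
  · rcases hn with rfl | rfl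
    · have hk : k = 1 ∨ k = 2 ∨ k = 3 := by omega
      rcases hk with rfl | rfl | rfl
      · exact KarlinAux.case_5_1 hσ
      · exact KarlinAux.case_5_2 hσ
      · exact KarlinAux.case_5_3 hσ
    · have hk : k = 1 ∨ k = 2 ∨ k = 3 ∨ k = 4 := by omega
      rcases hk with rfl | rfl | rfl | rfl
      · exact KarlinAux.case_6_1 hσ
      · exact KarlinAux.case_6_2 hσ
      · exact KarlinAux.case_6_3 hσ
      · exact KarlinAux.case_6_4 hσ
  · rcases hn with rfl | rfl | rfl
    · have hk : k = 1 ∨ k = 2 ∨ k = 3 ∨ k = 4 := by omega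
      rcases hk with rfl | rfl | rfl | rfl
      · exact KarlinAux.case_7_1 hσ
      · exact KarlinAux.case_7_2 hσ
      · exact KarlinAux.case_7_3 hσ
      · exact KarlinAux.case_7_4 hσ
    · have hk : k = 1 ∨ k = 2 ∨ k = 3 ∨ k = 4 ∨ k = 5 := by omega
      rcases hk with rfl | rfl | rfl | rfl | rfl
      · exact KarlinAux.case_8_1 hσ
      · exact KarlinAux.case_8_2 hσ
      · exact KarlinAux.case_8_3 hσ
      · exact KarlinAux.case_8_4 hσ
      · exact KarlinAux.case_8_5 hσ
    · have hk : k = 1 ∨ k = 2 ∨ k = 3 ∨ k = 4 ∨ k = 5 ∨ k = 6 := by omega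
      rcases hk with rfl | rfl | rfl | rfl | rfl | rfl
      · exact KarlinAux.case_9_1 hσ
      · exact KarlinAux.case_9_2 hσ
      · exact KarlinAux.case_9_3 hσ
      · exact KarlinAux.case_9_4 hσ
      · exact KarlinAux.case_9_5 hσ
      · exact KarlinAux.case_9_6 hσ
  · rcases hn with rfl | rfl
    · have hk : k = 1 ∨ k = 2 ∨ k = 3 ∨ k = 4 ∨ k = 5 ∨ k = 6 := by omega
      rcases hk with rfl | rfl | rfl | rfl | rfl | rfl
      · exact KarlinAux.case_10_1 hσ
      · exact KarlinAux.case_10_2 hσ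
      · exact KarlinAux.case_10_3 hσ
      · exact KarlinAux.case_10_4 hσ
      · exact KarlinAux.case_10_5 hσ
      · exact KarlinAux.case_10_6 hσ
    · have hk : k = 1 ∨ k = 2 ∨ k = 3 ∨ k = 4 ∨ k = 5 ∨ k = 6 := by omega
      rcases hk with rfl | rfl | rfl | rfl | rfl | rfl
      · exact KarlinAux.case_11_1 hσ
      · exact KarlinAux.case_11_2 hσ
      · exact KarlinAux.case_11_3 hσ
      · exact KarlinAux.case_11_4 hσ
      · exact KarlinAux.case_11_5 hσ
      · exact KarlinAux.case_11_6 hσ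
end
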